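/- arXiv:2202.00304 — 2 statements merged into one kernel-verified Lean document; each statement's English description precedes it below -/
import Mathlib

section
/- Let N be a nonzero cyclic graded S-module of finite length on P^n (n ≥ 4), with second syzygy bundle P_2 = P_2(N). Then H^3_*(P_2 ⊗ P_2) ≅ coker(L_2 ⊗ N → L_1 ⊗ N) ≠ 0, and consequently H^3_*(Λ²P_2) ≠ 0. -/
/-!
Background setup (the paper works on projective space `ℙⁿ` over a field `K`):
we encode a coherent sheaf on `ℙⁿ_K` by a module `M` over the homogeneous coordinate
ring `S = K[X₀,…,Xₙ]` (namely `M = Γ_*` of the sheaf), and the intermediate cohomology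
module `H^i_*(F) = ⊕_ν H^i(ℙⁿ, F(ν))` (for `i ≥ 1`) by the local cohomology module
`H^{i+1}_𝔪(M)` at the irrelevant maximal ideal `𝔪 = (X₀,…,Xₙ)`, to which it is
canonically isomorphic.
-/

open CategoryTheory TensorProduct

noncomputable section

/-- The homogeneous coordinate ring `S = K[X₀,…,Xₙ]` of `ℙⁿ`. -/
abbrev PolyS (K : Type) [Field K] (n : ℕ) : Type := MvPolynomial (Fin (n+1)) K

variable (K : Type) [Field K] (n : ℕ)

/-- The irrelevant maximal ideal `𝔪 = (X₀,…,Xₙ)` of `S`. -/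
def irrel : Ideal (PolyS K n) := Ideal.span (Set.range MvPolynomial.X)

/-- `H^i_*` of the sheaf on `ℙⁿ` associated to the `S`-module `M`, encoded (for `i ≥ 1`)
as the local cohomology module `H^{i+1}_𝔪(M)`. -/
def Hstar (i : ℕ) (M : Type) [AddCommGroup M] [Module (PolyS K n) M] :
    ModuleCat (PolyS K n) :=
  (localCohomology (irrel K n) (i+1)).obj (ModuleCat.of (PolyS K n) M)

/-- `M` is (the module of sections `Γ_*` of) an algebraic vector bundle on `ℙⁿ`:
finitely generated, depth `≥ 2` at `𝔪` (i.e. `H⁰_𝔪(M) = H¹_𝔪(M) = 0`, so `M = Γ_*(M̃)`),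
and locally free at every prime other than the irrelevant ideal. -/
structure IsBundleModule (M : Type) [AddCommGroup M] [Module (PolyS K n) M] : Prop where
  finite : Module.Finite (PolyS K n) M
  h0 : Subsingleton ((localCohomology (irrel K n) 0).obj (ModuleCat.of (PolyS K n) M))
  h1 : Subsingleton ((localCohomology (irrel K n) 1).obj (ModuleCat.of (PolyS K n) M))
  locFree : ∀ p : PrimeSpectrum (PolyS K n), p.asIdeal ≠ irrel K n →
    Module.Free (Localization.AtPrime p.asIdeal) (LocalizedModule p.asIdeal.primeCompl M)

/-- `M` represents a vector bundle of rank two on `ℙⁿ`. -/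
structure IsRankTwoBundleModule (M : Type) [AddCommGroup M] [Module (PolyS K n) M]
    extends IsBundleModule K n M : Prop where
  rank2 : ∀ p : PrimeSpectrum (PolyS K n), p.asIdeal ≠ irrel K n →
    Module.rank (Localization.AtPrime p.asIdeal) (LocalizedModule p.asIdeal.primeCompl M) = 2

/-- A finite length module which is moreover supported at the irrelevant ideal: the
(ungraded avatar of the) notion of a *graded* `S`-module of finite length. -/
def IsGradedFiniteLength (N : Type) [AddCommGroup N] [Module (PolyS K n) N] : Prop :=
  IsFiniteLength (PolyS K n) N ∧
    ∃ c : ℕ, (irrel K n) ^ c ≤ Module.annihilator (PolyS K n) N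

/-- A minimal graded free resolution `⋯ → L₁ → L₀ → N → 0` of an `S`-module `N`
(minimality: all differentials have entries in the maximal ideal `𝔪`).
Here `d i : L (i+1) → L i` and `P_k(N)`, the `k`-th syzygy module, is `range (d k)`,
i.e. the image of `f_{k+1} : L_{k+1} → L_k`. -/
structure MinimalResolution (N : Type) [AddCommGroup N] [Module (PolyS K n) N] where
  L : ℕ → Type
  [addCommGroup : ∀ i, AddCommGroup (L i)]
  [module : ∀ i, Module (PolyS K n) (L i)]
  free : ∀ i, Module.Free (PolyS K n) (L i)
  finite : ∀ i, Module.Finite (PolyS K n) (L i)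
  d : ∀ i : ℕ, L (i+1) →ₗ[PolyS K n] L i
  aug : L 0 →ₗ[PolyS K n] N
  aug_surjective : Function.Surjective aug
  exact0 : LinearMap.range (d 0) = LinearMap.ker aug
  exact : ∀ i : ℕ, LinearMap.range (d (i+1)) = LinearMap.ker (d i)
  minimal : ∀ i : ℕ, LinearMap.range (d i) ≤ (irrel K n) • (⊤ : Submodule (PolyS K n) (L i))
  minimal0 : LinearMap.ker aug ≤ (irrel K n) • (⊤ : Submodule (PolyS K n) (L 0))

attribute [instance] MinimalResolution.addCommGroup MinimalResolution.module

/-- The second symmetric power `S²M` of a module. -/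
def Sym2M (R : Type) [CommRing R] (M : Type) [AddCommGroup M] [Module R M] : Type :=
  (TensorProduct R M M) ⧸
    Submodule.span R {z : TensorProduct R M M | ∃ x y : M, z = x ⊗ₜ[R] y - y ⊗ₜ[R] x}

instance (R : Type) [CommRing R] (M : Type) [AddCommGroup M] [Module R M] :
    AddCommGroup (Sym2M R M) := by unfold Sym2M; infer_instance

instance (R : Type) [CommRing R] (M : Type) [AddCommGroup M] [Module R M] :
    Module R (Sym2M R M) := by unfold Sym2M; infer_instance

/-!
Write `H^i` for local cohomology at `𝔪`, so that `H^i_*` of a sheaf is `H^{i+1}`, and let `Z₁` and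
`P₂` be the first and second syzygy modules of `N ≅ S ⧸ I`. Multiplication by an element of `I` is
null-homotopic on the resolution of `N`. Hence tensoring the resolution with `P₂` keeps it exact up
to modules killed by a power of `𝔪`, which `H^i` does not see for `i ≥ 2`. Dimension shifting gives
`H³(F ⊗ P₂) ≅ F ⊗ N` for free `F`. Since `I` kills `N`, the map `H³(L₁ ⊗ P₂) → H³(P₂)` vanishes, and
`H⁴(P₂ ⊗ P₂)` is the cokernel of `L₂ ⊗ N → L₁ ⊗ N`. It is nonzero because the resolution is minimal
and `𝔪` is nilpotent on `N`.

The kernel of `P₂ ⊗ P₂ → ⋀² P₂` is spanned by squares. Up to `𝔪`-torsion it is the kernel of the map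
to `L₂ ⊗ Z₁` from the span of the squares in `L₂ ⊗ L₂`, and the image of that map is the kernel of
`L₂ ⊗ Z₁ → ⋀² L₁`. Comparing `L₂ ⊗ Z₁ → L₂ ⊗ L₁ → L₂ ⊗ I` with the Koszul differential `⋀² L₁ → Z₁`
shows that `H³` of this image vanishes. So `H⁴` of the kernel of `P₂ ⊗ P₂ → ⋀² P₂` vanishes too, and
`H⁴(P₂ ⊗ P₂)` embeds into `H⁴(⋀² P₂)`. Squares take the place of the splitting of `P₂ ⊗ P₂` into
symmetric and alternating tensors, which is not available in characteristic two.
-/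

universe u

/-! ### Local cohomology as a direct limit of `Ext` modules -/

section LocalCoh

open Abelian Opposite localCohomology

variable {R : Type u} [CommRing R] (J : Ideal R)

/-- The module `R/J^k`, presented as in Mathlib's definition of local cohomology. -/
abbrev ringModPow (k : ℕ) : ModuleCat.{u} R := (ringModIdeals (idealPowersDiagram J)).obj (op k)

/-- The transition map of the direct system `k ↦ Ext^i(R/J^k, M)`. -/
def extTransition (i : ℕ) (M : ModuleCat.{u} R) (k l : ℕ) (h : k ≤ l) :
    Ext (ringModPow J k) M i →ₗ[R] Ext (ringModPow J l) M i :=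
  (Ext.mk₀ ((ringModIdeals (idealPowersDiagram J)).map (homOfLE h).op)).precompOfLinear
    R M (zero_add i)

lemma extTransition_apply {i : ℕ} {M : ModuleCat.{u} R} {k l : ℕ} (h : k ≤ l)
    (e : Ext (ringModPow J k) M i) :
    extTransition J i M k l h e =
      (Ext.mk₀ ((ringModIdeals (idealPowersDiagram J)).map (homOfLE h).op)).comp e (zero_add i) :=
  rfl

instance directedSystem_extTransition (i : ℕ) (M : ModuleCat.{u} R) :
    DirectedSystem (fun k => Ext (ringModPow J k) M i)
      (fun k l h => extTransition J i M k l h) where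
  map_self k x := by
    rw [extTransition_apply, show (homOfLE le_rfl).op = 𝟙 (op k) from rfl,
      CategoryTheory.Functor.map_id, Ext.mk₀_id_comp]
  map_map k l p h h' x := by
    simp only [extTransition_apply]
    rw [← homOfLE_comp h h', op_comp, Functor.map_comp, ← Ext.mk₀_comp_mk₀,
      Ext.comp_assoc_of_second_deg_zero]

/-- The local cohomology `H^i_J(M)` as a direct limit of Yoneda `Ext` modules `Ext^i(R/J^k, M)`,
for which Mathlib has long exact sequences. -/
abbrev LocalCoh (i : ℕ) (M : Type u) [AddCommGroup M] [Module R M] : Type u :=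
  Module.DirectLimit
    (fun k => Ext (ringModPow J k) (ModuleCat.of R M) i) (extTransition J i (ModuleCat.of R M))

namespace LocalCoh

variable {L M N : Type u} [AddCommGroup L] [Module R L] [AddCommGroup M] [Module R M]
  [AddCommGroup N] [Module R N]

variable {J} in
/-- The class in `H^i_J(M)` of an element of `Ext^i(R/J^k, M)`. -/
abbrev of {i : ℕ} {k : ℕ} :
    Ext (ringModPow J k) (ModuleCat.of R M) i →ₗ[R] LocalCoh J i M :=
  Module.DirectLimit.of R ℕ
    (fun k => Ext (ringModPow J k) (ModuleCat.of R M) i)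
    (extTransition J i (ModuleCat.of R M)) k

variable {J} in
lemma of_extTransition {i k l : ℕ} (h : k ≤ l)
    (e : Ext (ringModPow J k) (ModuleCat.of R M) i) :
    of (extTransition J i _ k l h e) = of e :=
  Module.DirectLimit.of_f

variable {J} in
lemma exists_of {i : ℕ} (z : LocalCoh J i M) :
    ∃ (k : ℕ) (e : Ext (ringModPow J k) (ModuleCat.of R M) i), of e = z :=
  Module.DirectLimit.exists_of z

/-- The map on local cohomology induced by composition with a class in `Ext^a(M, N)`. -/
def postcomp {a i j : ℕ} (c : Ext (ModuleCat.of R M) (ModuleCat.of R N) a) (h : i + a = j) :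
    LocalCoh J i M →ₗ[R] LocalCoh J j N :=
  Module.DirectLimit.map (fun k => c.postcompOfLinear R _ h) fun k l hkl => by
    ext e
    exact Ext.comp_assoc _ _ _ (zero_add i) h (by lia)

lemma postcomp_of {a i j k : ℕ} (c : Ext (ModuleCat.of R M) (ModuleCat.of R N) a) (h : i + a = j)
    (e : Ext (ringModPow J k) (ModuleCat.of R M) i) :
    postcomp J c h (of e) = of (e.comp c h) := by
  simp [postcomp]

lemma exact_postcomp {a b i j l : ℕ} (c : Ext (ModuleCat.of R L) (ModuleCat.of R M) a)
    (c' : Ext (ModuleCat.of R M) (ModuleCat.of R N) b) (h : i + a = j) (h' : j + b = l)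
    (hcc' : c.comp c' rfl = 0)
    (hex : ∀ {X : ModuleCat.{u} R} (e : Ext X (ModuleCat.of R M) j), e.comp c' h' = 0 →
      ∃ x : Ext X (ModuleCat.of R L) i, x.comp c h = e) :
    Function.Exact (postcomp J c h) (postcomp J c' h') := by
  intro z
  obtain ⟨k, e, rfl⟩ := exists_of z
  constructor
  · intro hz
    rw [postcomp_of] at hz
    obtain ⟨m, hm, hz⟩ := Module.DirectLimit.of.zero_exact hz
    obtain ⟨x, hx⟩ := hex (extTransition J j _ k m hm e) <| by
      rw [extTransition_apply, Ext.comp_assoc _ _ _ (zero_add j) h' (by lia)]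
      exact hz
    exact ⟨of x, by rw [postcomp_of, hx, of_extTransition]⟩
  · rintro ⟨y, hy⟩
    rw [← hy]
    obtain ⟨m, x, rfl⟩ := exists_of y
    rw [postcomp_of, postcomp_of, Ext.comp_assoc _ _ _ h rfl (by lia), hcc', Ext.comp_zero,
      map_zero]

/-- Functoriality of local cohomology in the module. -/
def map (i : ℕ) (f : M →ₗ[R] N) : LocalCoh J i M →ₗ[R] LocalCoh J i N :=
  postcomp J (Ext.mk₀ (ModuleCat.ofHom f)) (add_zero i)

lemma map_of {i k : ℕ} (f : M →ₗ[R] N)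
    (e : Ext (ringModPow J k) (ModuleCat.of R M) i) :
    map J i f (of e) = of (e.comp (Ext.mk₀ (ModuleCat.ofHom f)) (add_zero i)) :=
  postcomp_of ..

@[simp]
lemma map_id (i : ℕ) : map J i (LinearMap.id : M →ₗ[R] M) = LinearMap.id := by
  refine LinearMap.ext fun z => ?_
  obtain ⟨k, e, rfl⟩ := exists_of z
  simp [map_of]

lemma map_comp (i : ℕ) (g : M →ₗ[R] N) (f : L →ₗ[R] M) :
    map J i (g ∘ₗ f) = map J i g ∘ₗ map J i f := by
  refine LinearMap.ext fun z => ?_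
  obtain ⟨k, e, rfl⟩ := exists_of z
  simp only [LinearMap.comp_apply, map_of, ModuleCat.ofHom_comp]
  rw [← Ext.mk₀_comp_mk₀, Ext.comp_assoc_of_second_deg_zero]

lemma map_add (i : ℕ) (f g : M →ₗ[R] N) : map J i (f + g) = map J i f + map J i g := by
  refine LinearMap.ext fun z => ?_
  obtain ⟨k, e, rfl⟩ := exists_of z
  rw [LinearMap.add_apply, map_of, map_of, map_of, ← _root_.map_add, ModuleCat.ofHom_add,
    Ext.mk₀_add, Ext.comp_add]

lemma map_smul (i : ℕ) (r : R) (f : M →ₗ[R] N) : map J i (r • f) = r • map J i f := by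
  refine LinearMap.ext fun z => ?_
  obtain ⟨k, e, rfl⟩ := exists_of z
  rw [LinearMap.smul_apply, map_of, map_of, ← _root_.map_smul,
    show ModuleCat.ofHom (r • f) = r • ModuleCat.ofHom f from rfl, Ext.mk₀_smul, Ext.comp_smul]

@[simp]
lemma map_zero (i : ℕ) : map J i (0 : M →ₗ[R] N) = 0 := by
  simpa using map_smul J i (0 : R) (0 : M →ₗ[R] N)

/-- A linear equivalence induces an equivalence on local cohomology. -/
def mapEquiv (i : ℕ) (e : M ≃ₗ[R] N) : LocalCoh J i M ≃ₗ[R] LocalCoh J i N :=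
  LinearEquiv.ofLinearMap (map J i e.toLinearMap) (map J i e.symm.toLinearMap)
    (by rw [← map_comp, e.comp_symm, map_id]) (by rw [← map_comp, e.symm_comp, map_id])

end LocalCoh

end LocalCoh

/-! ### The long exact sequence -/

section ShortExactSeq

open Abelian

variable {R : Type u} [CommRing R]
  {A B C A' B' C' : Type u} [AddCommGroup A] [Module R A] [AddCommGroup B] [Module R B]
  [AddCommGroup C] [Module R C] [AddCommGroup A'] [Module R A'] [AddCommGroup B'] [Module R B']
  [AddCommGroup C'] [Module R C']

/-- The sequence `0 → A → B → C → 0` with maps `f` and `g` is exact. -/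
structure ShortExactSeq (f : A →ₗ[R] B) (g : B →ₗ[R] C) : Prop where
  injective : Function.Injective f
  exact : Function.Exact f g
  surjective : Function.Surjective g

variable {f : A →ₗ[R] B} {g : B →ₗ[R] C} {f' : A' →ₗ[R] B'} {g' : B' →ₗ[R] C'}

namespace ShortExactSeq

/-- The short complex in the category of modules underlying a short exact sequence. -/
abbrev shortComplex (h : ShortExactSeq f g) : ShortComplex (ModuleCat.{u} R) :=
  .mk (ModuleCat.ofHom f) (ModuleCat.ofHom g) <| by
    rw [← ModuleCat.ofHom_comp, h.exact.linearMap_comp_eq_zero, ModuleCat.ofHom_zero]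

lemma shortExact (h : ShortExactSeq f g) : h.shortComplex.ShortExact where
  exact := (ShortComplex.ShortExact.moduleCat_exact_iff_function_exact _).2 h.exact
  mono_f := (ModuleCat.mono_iff_injective _).2 h.injective
  epi_g := (ModuleCat.epi_iff_surjective _).2 h.surjective

end ShortExactSeq

namespace LocalCoh

variable (J : Ideal R)

/-- The connecting map `H^i(C) → H^{i+1}(A)`. -/
def δ (h : ShortExactSeq f g) (i : ℕ) : LocalCoh J i C →ₗ[R] LocalCoh J (i + 1) A :=
  postcomp J h.shortExact.extClass rfl

lemma exact_map_map (h : ShortExactSeq f g) (i : ℕ) :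
    Function.Exact (map J i f) (map J i g) :=
  exact_postcomp J _ _ _ _ (by rw [Ext.mk₀_comp_mk₀, h.shortComplex.zero, Ext.mk₀_zero])
    fun e he => Ext.covariant_sequence_exact₂ _ h.shortExact e he

lemma exact_map_δ (h : ShortExactSeq f g) (i : ℕ) :
    Function.Exact (map J i g) (δ J h i) :=
  exact_postcomp J _ _ _ _ h.shortExact.comp_extClass
    fun e he => Ext.covariant_sequence_exact₃ _ h.shortExact e rfl he

lemma exact_δ_map (h : ShortExactSeq f g) (i : ℕ) :
    Function.Exact (δ J h i) (map J (i + 1) f) :=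
  exact_postcomp J _ _ _ _ h.shortExact.extClass_comp
    fun e he => Ext.covariant_sequence_exact₁ _ h.shortExact e he rfl

lemma δ_comp_map (h : ShortExactSeq f g) (h' : ShortExactSeq f' g')
    {a : A →ₗ[R] A'} {b : B →ₗ[R] B'} {c : C →ₗ[R] C'}
    (hab : f' ∘ₗ a = b ∘ₗ f) (hbc : g' ∘ₗ b = c ∘ₗ g) (i : ℕ) :
    δ J h' i ∘ₗ map J i c = map J (i + 1) a ∘ₗ δ J h i := by
  refine LinearMap.ext fun z => ?_
  obtain ⟨k, e, rfl⟩ := exists_of z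
  let φ : h.shortComplex ⟶ h'.shortComplex :=
    { τ₁ := ModuleCat.ofHom a, τ₂ := ModuleCat.ofHom b, τ₃ := ModuleCat.ofHom c
      comm₁₂ := ModuleCat.hom_ext hab
      comm₂₃ := ModuleCat.hom_ext hbc }
  simp only [LinearMap.comp_apply, δ, map_of, postcomp_of]
  rw [Ext.comp_assoc_of_second_deg_zero, Ext.comp_assoc_of_third_deg_zero]
  congr 2
  exact (ShortComplex.ShortExact.extClass_naturality h.shortExact h'.shortExact φ).symm

end LocalCoh

end ShortExactSeq

/-! ### Comparison with Mathlib's local cohomology functors -/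

section HomCocycles

open Abelian Opposite

variable {R : Type u} [CommRing R]

section

variable {X : ModuleCat.{u} R} (P : ProjectiveResolution X) (Y : ModuleCat.{u} R)

/-- The complex `Hom(P, Y)`, as a chain complex in the opposite category: Mathlib's `Ext` functors
are the left derived functors of `Hom(-, Y)` with values in that category. -/
abbrev homComplex : ChainComplex (ModuleCat.{u} R)ᵒᵖ ℕ :=
  (((linearYoneda R (ModuleCat.{u} R)).obj Y).rightOp.mapHomologicalComplex _).obj P.complex

/-- The module of `n`-cocycles of `Hom(P, Y)`. -/
abbrev homCocycles (n : ℕ) : ModuleCat.{u} R := unop ((homComplex P Y).opcycles n)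

/-- The inclusion of the `n`-cocycles of `Hom(P, Y)` into the `n`-cochains. -/
def homCocyclesι (n : ℕ) : homCocycles P Y n ⟶ ModuleCat.of R (P.complex.X n ⟶ Y) :=
  ((homComplex P Y).pOpcycles n).unop

lemma homCocyclesι_injective (n : ℕ) : Function.Injective (homCocyclesι P Y n) :=
  (ModuleCat.mono_iff_injective _).1 (unop_mono_of_epi ((homComplex P Y).pOpcycles n))

lemma d_comp_homCocyclesι (n : ℕ) (z : homCocycles P Y n) :
    P.complex.d (n + 1) n ≫ (show P.complex.X n ⟶ Y from homCocyclesι P Y n z) = 0 :=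
  congrArg (fun f => f.unop.hom z) ((homComplex P Y).d_pOpcycles (n + 1) n)

lemma exists_homCocyclesι_eq {n : ℕ} (f : P.complex.X n ⟶ Y)
    (hf : P.complex.d (n + 1) n ≫ f = 0) : ∃ z, homCocyclesι P Y n z = f := by
  let φ : ModuleCat.of R R ⟶ ModuleCat.of R (P.complex.X n ⟶ Y) :=
    ModuleCat.ofHom (LinearMap.toSpanSingleton R _ f)
  let ψ : (homComplex P Y).X n ⟶ op (ModuleCat.of R R) := φ.op
  have hψ : (homComplex P Y).d (n + 1) n ≫ ψ = 0 := by
    refine Quiver.Hom.unop_inj (ModuleCat.hom_ext (LinearMap.ext_ring ?_))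
    change P.complex.d (n + 1) n ≫ ((1 : R) • f) = 0
    rw [one_smul, hf]
  refine ⟨((homComplex P Y).descOpcycles ψ (n + 1) (by simp) hψ).unop.hom 1, ?_⟩
  refine (congrArg (fun g => g.unop.hom 1)
    ((homComplex P Y).p_descOpcycles ψ (n + 1) (by simp) hψ)).trans ?_
  exact one_smul R f

/-- Mathlib's derived-functor `Ext` as the homology of `Hom(P, Y)`. -/
def derivedExtIso (n : ℕ) :
    op (((Ext R (ModuleCat.{u} R) n).obj (op X)).obj Y) ≅ (homComplex P Y).homology n :=
  P.isoLeftDerivedObj _ n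

/-- The class of a cocycle of `Hom(P, Y)` in Mathlib's derived-functor `Ext`. -/
def derivedExtMk (n : ℕ) :
    homCocycles P Y n ⟶ ((Ext R (ModuleCat.{u} R) n).obj (op X)).obj Y :=
  ((derivedExtIso P Y n).hom ≫ (homComplex P Y).homologyι n).unop

lemma derivedExtMk_surjective (n : ℕ) : Function.Surjective (derivedExtMk P Y n) :=
  (ModuleCat.epi_iff_surjective _).1
    (unop_epi_of_mono ((derivedExtIso P Y n).hom ≫ (homComplex P Y).homologyι n))

lemma derivedExtMk_eq_zero_iff {n : ℕ} (z : homCocycles P Y (n + 1)) :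
    derivedExtMk P Y (n + 1) z = 0 ↔
      ∃ g : P.complex.X n ⟶ Y, P.complex.d (n + 1) n ≫ g = homCocyclesι P Y (n + 1) z := by
  have hexact : (ShortComplex.mk
      ((derivedExtIso P Y (n + 1)).hom ≫ (homComplex P Y).homologyι (n + 1))
      ((homComplex P Y).fromOpcycles (n + 1) n) (by simp)).Exact := by
    refine ShortComplex.exact_of_iso ?_ (ShortComplex.exact_of_f_is_kernel
      (.mk _ _ ((homComplex P Y).homologyι_comp_fromOpcycles (n + 1) n))
      ((homComplex P Y).homologyIsKernel (n + 1) n (by simp)))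
    exact ShortComplex.isoMk (derivedExtIso P Y (n + 1)).symm (Iso.refl _) (Iso.refl _)
      (by simp) (by simp)
  have hι (g : P.complex.X n ⟶ Y) :
      homCocyclesι P Y (n + 1) (((homComplex P Y).fromOpcycles (n + 1) n).unop.hom g) =
        P.complex.d (n + 1) n ≫ g :=
    congrArg (fun f => f.unop.hom g) ((homComplex P Y).p_fromOpcycles (n + 1) n)
  have hker := (LinearMap.exact_iff.1
    ((ShortComplex.ShortExact.moduleCat_exact_iff_function_exact _).1 hexact.unop))
  refine (SetLike.ext_iff.1 hker z).trans (exists_congr fun g => ?_)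
  rw [← hι g]
  exact (homCocyclesι_injective P Y (n + 1)).eq_iff.symm

/-- The class of a cocycle of `Hom(P, Y)` in the Yoneda `Ext`. -/
def yonedaExtMk (n : ℕ) : homCocycles P Y n →ₗ[R] Abelian.Ext X Y n where
  toFun z := P.extMk (homCocyclesι P Y n z) (n + 1) rfl (d_comp_homCocyclesι P Y n z)
  map_add' x y := by
    rw [P.add_extMk]
    congr 1
    exact map_add (homCocyclesι P Y n).hom x y
  map_smul' r x := by
    rw [RingHom.id_apply, Ext.smul_eq_comp_mk₀, P.extMk_comp_mk₀]
    congr 1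
    exact (map_smul (homCocyclesι P Y n).hom r x).trans (by simp)

lemma yonedaExtMk_surjective (n : ℕ) : Function.Surjective (yonedaExtMk P Y n) := by
  intro a
  obtain ⟨f, hf, rfl⟩ := P.extMk_surjective a (n + 1) rfl
  obtain ⟨z, rfl⟩ := exists_homCocyclesι_eq P Y f hf
  exact ⟨z, rfl⟩

lemma ker_derivedExtMk (n : ℕ) :
    LinearMap.ker (derivedExtMk P Y (n + 1)).hom = LinearMap.ker (yonedaExtMk P Y (n + 1)) := by
  ext z
  exact (derivedExtMk_eq_zero_iff P Y z).trans
    (P.extMk_eq_zero_iff _ (n + 2) rfl (d_comp_homCocyclesι P Y (n + 1) z) n rfl).symm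

/-- The isomorphism between the two versions of `Ext` in Mathlib, in positive degrees. -/
def derivedExtEquiv (n : ℕ) :
    ((Ext R (ModuleCat.{u} R) (n + 1)).obj (op X)).obj Y ≃ₗ[R] Abelian.Ext X Y (n + 1) :=
  (LinearMap.quotKerEquivOfSurjective _ (derivedExtMk_surjective P Y (n + 1))).symm ≪≫ₗ
    Submodule.quotEquivOfEq _ _ (ker_derivedExtMk P Y n) ≪≫ₗ
      LinearMap.quotKerEquivOfSurjective _ (yonedaExtMk_surjective P Y (n + 1))

lemma derivedExtEquiv_derivedExtMk {n : ℕ} (z : homCocycles P Y (n + 1)) :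
    derivedExtEquiv P Y n (derivedExtMk P Y (n + 1) z) = yonedaExtMk P Y (n + 1) z := by
  have hz : (LinearMap.quotKerEquivOfSurjective _ (derivedExtMk_surjective P Y (n + 1))).symm
      (derivedExtMk P Y (n + 1) z) = Submodule.Quotient.mk z :=
    (LinearEquiv.symm_apply_eq _).2 rfl
  exact congrArg (LinearMap.quotKerEquivOfSurjective _ (yonedaExtMk_surjective P Y (n + 1)))
    (congrArg (Submodule.quotEquivOfEq _ _ (ker_derivedExtMk P Y n)) hz)

end

section

variable {X X' : ModuleCat.{u} R} {P : ProjectiveResolution X} {P' : ProjectiveResolution X'}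
  (Y : ModuleCat.{u} R) {g : X' ⟶ X} (φ : ProjectiveResolution.Hom P' P g)

/-- The map on cocycles induced by a morphism of projective resolutions. -/
def homCocyclesMap (n : ℕ) : homCocycles P Y n ⟶ homCocycles P' Y n :=
  (HomologicalComplex.opcyclesMap (((linearYoneda R _).obj Y).rightOp.mapHomologicalComplex _ |>.map
    φ.hom) n).unop

lemma homCocyclesι_homCocyclesMap {n : ℕ} (z : homCocycles P Y n) :
    homCocyclesι P' Y n (homCocyclesMap Y φ n z) =
      φ.hom.f n ≫ (show P.complex.X n ⟶ Y from homCocyclesι P Y n z) :=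
  congrArg (fun f => f.unop.hom z) (HomologicalComplex.p_opcyclesMap
    (((linearYoneda R _).obj Y).rightOp.mapHomologicalComplex _ |>.map φ.hom) n)

lemma derivedExtMk_homCocyclesMap {n : ℕ} (z : homCocycles P Y n) :
    derivedExtMk P' Y n (homCocyclesMap Y φ n z) =
      ((Ext R (ModuleCat.{u} R) n).map g.op).app Y (derivedExtMk P Y n z) := by
  let F := ((linearYoneda R (ModuleCat.{u} R)).obj Y).rightOp
  let extMap := (((Ext R (ModuleCat.{u} R) n).map g.op).app Y).op
  have hiso : extMap ≫ (derivedExtIso P Y n).hom = (derivedExtIso P' Y n).hom ≫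
      HomologicalComplex.homologyMap ((F.mapHomologicalComplex _).map φ.hom) n :=
    ProjectiveResolution.isoLeftDerivedObj_hom_naturality g P' P φ.hom
      φ.hom_f_zero_comp_π_f_zero F n
  have hcomm : extMap ≫ (derivedExtIso P Y n).hom ≫ (homComplex P Y).homologyι n =
      ((derivedExtIso P' Y n).hom ≫ (homComplex P' Y).homologyι n) ≫
        HomologicalComplex.opcyclesMap ((F.mapHomologicalComplex _).map φ.hom) n := by
    rw [reassoc_of% hiso, Category.assoc, HomologicalComplex.homologyι_naturality]
  exact congrArg (fun f => f.unop.hom z) hcomm.symm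

include φ in
lemma derivedExtEquiv_map_app {n : ℕ} (e : ((Ext R (ModuleCat.{u} R) (n + 1)).obj (op X)).obj Y) :
    derivedExtEquiv P' Y n (((Ext R (ModuleCat.{u} R) (n + 1)).map g.op).app Y e) =
      (Ext.mk₀ g).comp (derivedExtEquiv P Y n e) (zero_add _) := by
  obtain ⟨z, rfl⟩ := derivedExtMk_surjective P Y (n + 1) e
  rw [← derivedExtMk_homCocyclesMap Y φ, derivedExtEquiv_derivedExtMk,
    derivedExtEquiv_derivedExtMk]
  refine Eq.trans ?_
    (ProjectiveResolution.mk₀_comp_extMk _ (n + 2) rfl (d_comp_homCocyclesι P Y _ z) φ).symm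
  change P'.extMk _ (n + 2) rfl (d_comp_homCocyclesι P' Y _ _) = _
  congr 1
  exact homCocyclesι_homCocyclesMap Y φ z

end

end HomCocycles

namespace LocalCoh

open Abelian Opposite Limits localCohomology

variable {R : Type u} [CommRing R] (J : Ideal R) (M : Type u) [AddCommGroup M] [Module R M] (i : ℕ)

/-- The comparison of the `k`-th terms of the two direct systems defining local cohomology. -/
def stageEquiv (k : ℕ) :
    ((Ext R (ModuleCat.{u} R) (i + 1)).obj (op (ringModPow J k))).obj (ModuleCat.of R M) ≃ₗ[R]
      Abelian.Ext (ringModPow J k) (ModuleCat.of R M) (i + 1) :=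
  derivedExtEquiv (projectiveResolution _) _ i

lemma stageEquiv_transition {k l : ℕ} (h : k ≤ l)
    (e : ((Ext R (ModuleCat.{u} R) (i + 1)).obj (op (ringModPow J k))).obj (ModuleCat.of R M)) :
    stageEquiv J M i l (((Ext R (ModuleCat.{u} R) (i + 1)).map
        ((ringModIdeals (idealPowersDiagram J)).map (homOfLE h).op).op).app _ e) =
      extTransition J (i + 1) _ k l h (stageEquiv J M i k e) :=
  derivedExtEquiv_map_app (ModuleCat.of R M)
    { hom := ProjectiveResolution.lift _ (projectiveResolution _) (projectiveResolution _)
      hom_f_zero_comp_π_f_zero := ProjectiveResolution.lift_commutes_zero _ _ _ } e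

/-- The colimit cocone defining Mathlib's local cohomology, evaluated at `M`. -/
abbrev localCohomologyCocone :
    Cocone (diagram (idealPowersDiagram J) (i + 1) ⋙ (evaluation _ _).obj (ModuleCat.of R M)) :=
  ((evaluation _ _).obj (ModuleCat.of R M)).mapCocone
    (colimit.cocone (diagram (idealPowersDiagram J) (i + 1)))

/-- The map from the `k`-th term of the direct system defining Mathlib's local cohomology. -/
def ofDerivedExt (k : ℕ) :
    ((Ext R (ModuleCat.{u} R) (i + 1)).obj (op (ringModPow J k))).obj (ModuleCat.of R M) →ₗ[R]
      (localCohomology J (i + 1)).obj (ModuleCat.of R M) :=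
  ((localCohomologyCocone J M i).ι.app (op (op k))).hom

lemma ofDerivedExt_transition {k l : ℕ} (h : k ≤ l)
    (e : ((Ext R (ModuleCat.{u} R) (i + 1)).obj (op (ringModPow J k))).obj (ModuleCat.of R M)) :
    ofDerivedExt J M i l (((Ext R (ModuleCat.{u} R) (i + 1)).map
        ((ringModIdeals (idealPowersDiagram J)).map (homOfLE h).op).op).app _ e) =
      ofDerivedExt J M i k e :=
  congrArg (fun f => ModuleCat.Hom.hom f e) ((localCohomologyCocone J M i).w (homOfLE h).op.op)

/-- The comparison map from `LocalCoh` to Mathlib's local cohomology. -/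
def toLocalCohomology :
    LocalCoh J (i + 1) M →ₗ[R] (localCohomology J (i + 1)).obj (ModuleCat.of R M) :=
  Module.DirectLimit.lift R ℕ _ _
    (fun k => ofDerivedExt J M i k ∘ₗ (stageEquiv J M i k).symm.toLinearMap) fun k l h x => by
    obtain ⟨y, rfl⟩ := (stageEquiv J M i k).surjective x
    rw [← stageEquiv_transition]
    simp only [LinearMap.comp_apply, LinearEquiv.coe_coe, LinearEquiv.symm_apply_apply]
    exact ofDerivedExt_transition J M i h y

lemma toLocalCohomology_of_stageEquiv {k : ℕ}
    (y : ((Ext R (ModuleCat.{u} R) (i + 1)).obj (op (ringModPow J k))).obj (ModuleCat.of R M)) :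
    toLocalCohomology J M i (of (stageEquiv J M i k y)) = ofDerivedExt J M i k y :=
  (Module.DirectLimit.lift_of _ _ _).trans
    (congrArg _ ((stageEquiv J M i k).symm_apply_apply y))

lemma toLocalCohomology_bijective : Function.Bijective (toLocalCohomology J M i) := by
  have hcolim : IsColimit (localCohomologyCocone J M i) :=
    isColimitOfPreserves _ (colimit.isColimit _)
  have : PreservesFilteredColimitsOfSize.{0, 0} (forget (ModuleCat.{u} R)) :=
    preservesSmallestFilteredColimits_of_preservesFilteredColimits.{u, u} _
  refine ⟨(injective_iff_map_eq_zero _).2 fun a ha => ?_, fun z => ?_⟩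
  · obtain ⟨k, x, rfl⟩ := exists_of a
    obtain ⟨y, rfl⟩ := (stageEquiv J M i k).surjective x
    rw [toLocalCohomology_of_stageEquiv] at ha
    obtain ⟨l, f, g, hfg⟩ := Concrete.isColimit_exists_of_rep_eq _ hcolim y 0
      (ha.trans (_root_.map_zero (ofDerivedExt J M i k)).symm)
    have hkl : k ≤ l.unop.unop := leOfHom f.unop.unop
    rw [← of_extTransition hkl, ← stageEquiv_transition]
    have hy : ((Ext R (ModuleCat.{u} R) (i + 1)).map
        ((ringModIdeals (idealPowersDiagram J)).map (homOfLE hkl).op).op).app _ y = 0 :=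
      hfg.trans (_root_.map_zero (ModuleCat.Hom.hom ((diagram (idealPowersDiagram J) (i + 1) ⋙
        (evaluation _ _).obj (ModuleCat.of R M)).map g)))
    rw [hy, _root_.map_zero, _root_.map_zero]
  · obtain ⟨k, y, hy⟩ := Concrete.isColimit_exists_rep _ hcolim z
    exact ⟨of (stageEquiv J M i k.unop.unop y), (toLocalCohomology_of_stageEquiv J M i y).trans hy⟩

/-- In positive degrees, `LocalCoh` agrees with Mathlib's local cohomology. -/
def equivLocalCohomology :
    LocalCoh J (i + 1) M ≃ₗ[R] (localCohomology J (i + 1)).obj (ModuleCat.of R M) :=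
  LinearEquiv.ofBijective _ (toLocalCohomology_bijective J M i)

end LocalCoh

/-! ### Vanishing, torsion and the degree-zero part -/

section Torsion

open Abelian

variable {R : Type u} [CommRing R] (J : Ideal R)

/-- The module `M` is `J`-power torsion: every element is killed by a power of `J`. -/
def IsPowTorsion (M : Type*) [AddCommGroup M] [Module R M] : Prop :=
  ∀ m : M, ∃ k : ℕ, ∀ r ∈ J ^ k, r • m = 0

namespace IsPowTorsion

variable {J} {M N : Type*} [AddCommGroup M] [Module R M] [AddCommGroup N] [Module R N]

lemma of_surjective (h : IsPowTorsion J M) (f : M →ₗ[R] N) (hf : Function.Surjective f) :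
    IsPowTorsion J N := by
  intro y
  obtain ⟨x, rfl⟩ := hf y
  obtain ⟨k, hk⟩ := h x
  exact ⟨k, fun r hr => by rw [← map_smul, hk r hr, map_zero]⟩

lemma exists_pow_smul_eq_zero (h : IsPowTorsion J M) {p : Submodule R M} (hp : p.FG) :
    ∃ k : ℕ, ∀ r ∈ J ^ k, ∀ m ∈ p, r • m = 0 := by
  obtain ⟨s, rfl⟩ := hp
  choose k hk using h
  refine ⟨s.sup k, fun r hr m hm => ?_⟩
  have hs : Submodule.span R s ≤ LinearMap.ker (LinearMap.lsmul R M r) :=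
    Submodule.span_le.2 fun x hx => hk x r (Ideal.pow_le_pow_right (Finset.le_sup hx) hr)
  exact hs hm

lemma of_pow_smul [IsNoetherianRing R] {c e : ℕ} (h : ∀ m : M, ∀ g ∈ J ^ c, g ^ e • m = 0) :
    IsPowTorsion J M := by
  intro m
  have hrad : J ^ c ≤ (Submodule.span R {m}).annihilator.radical := fun g hg =>
    ⟨e, (Submodule.mem_annihilator_span_singleton _ _).2 (h m g hg)⟩
  obtain ⟨k, hk⟩ := Ideal.exists_pow_le_of_le_radical_of_fg hrad (IsNoetherian.noetherian _)
  rw [← pow_mul] at hk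
  exact ⟨c * k, fun r hr => (Submodule.mem_annihilator_span_singleton _ _).1 (hk hr)⟩

end IsPowTorsion

lemma isPowTorsion_primaryComponent (M : Type*) [AddCommGroup M] [Module R M] :
    IsPowTorsion J (Ideal.primaryComponent M J) := by
  rintro ⟨m, hm⟩
  obtain ⟨k, hk⟩ := (Ideal.primaryComponent_mem M J m).1 hm
  exact ⟨k, fun r hr => Subtype.ext ((Submodule.mem_torsionBySet_iff _ _).1 hk ⟨r, hr⟩)⟩

namespace LocalCoh

variable {A B M : Type u} [AddCommGroup A] [Module R A] [AddCommGroup B] [Module R B]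
  [AddCommGroup M] [Module R M]

instance subsingleton_of_subsingleton (i : ℕ) [Subsingleton M] : Subsingleton (LocalCoh J i M) where
  allEq x y := by
    rw [← LinearMap.id_apply (R := R) x, ← LinearMap.id_apply (R := R) y, ← map_id,
      Subsingleton.elim (LinearMap.id : M →ₗ[R] M) 0, map_zero, LinearMap.zero_apply,
      LinearMap.zero_apply]

lemma map_sum {ι : Type*} (i : ℕ) (s : Finset ι) (f : ι → A →ₗ[R] B) :
    map J i (∑ k ∈ s, f k) = ∑ k ∈ s, map J i (f k) :=
  _root_.map_sum (AddMonoidHom.mk' (map J i (M := A) (N := B)) (map_add J i)) f s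

variable {J}

lemma subsingleton_pi {ι : Type} [Finite ι] {i : ℕ} (h : Subsingleton (LocalCoh J i A)) :
    Subsingleton (LocalCoh J i (ι → A)) := by
  classical
  have := Fintype.ofFinite ι
  have hid : (LinearMap.id : (ι → A) →ₗ[R] (ι → A)) =
      ∑ k, LinearMap.single R (fun _ => A) k ∘ₗ LinearMap.proj k := by
    ext a b c
    simp
  refine subsingleton_of_forall_eq 0 fun z => ?_
  rw [← LinearMap.id_apply (R := R) z, ← map_id, hid, map_sum, LinearMap.sum_apply]
  refine Finset.sum_eq_zero fun k _ => ?_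
  rw [map_comp, LinearMap.comp_apply, Subsingleton.elim (map J i (LinearMap.proj k) z) 0,
    _root_.map_zero]

lemma subsingleton_of_free {i : ℕ} (h : Subsingleton (LocalCoh J i R)) (F : Type u)
    [AddCommGroup F] [Module R F] [Module.Free R F] [Module.Finite R F] :
    Subsingleton (LocalCoh J i F) := by
  cases subsingleton_or_nontrivial R
  · have := Module.subsingleton R F
    infer_instance
  · have := subsingleton_pi (ι := Fin (Module.finrank R F)) h
    exact (mapEquiv J i (Module.finBasis R F).equivFun).subsingleton

lemma linearEquiv₀_mk₀ {X Y : ModuleCat.{u} R} (f : X ⟶ Y) :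
    Ext.linearEquiv₀ (R := R) (Ext.mk₀ f) = f :=
  (Ext.linearEquiv₀ (R := R)).apply_symm_apply f

/-- Evaluation at `1` identifies a homomorphism `R/J^k → M` with an element of `M` killed by `J^k`;
in the limit over `k` it embeds `H^0_J(M)` in `M`. -/
def evalOne (M : Type u) [AddCommGroup M] [Module R M] : LocalCoh J 0 M →ₗ[R] M :=
  Module.DirectLimit.lift R ℕ _ _
    (fun k =>
      { toFun e := Ext.linearEquiv₀ (R := R) e (Submodule.Quotient.mk 1 : R ⧸ J ^ k)
        map_add' _ _ := by rw [_root_.map_add]; rfl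
        map_smul' _ _ := by rw [_root_.map_smul]; rfl })
    fun k l h e => by
      obtain ⟨f, rfl⟩ := (Ext.linearEquiv₀ (R := R)).symm.surjective e
      simp only [Ideal.Quotient.mk_eq_mk, map_one, Ext.linearEquiv₀_symm_apply, extTransition_apply,
        homOfLE_leOfHom, Ext.mk₀_comp_mk₀, LinearMap.coe_mk, AddHom.coe_mk, linearEquiv₀_mk₀,
        ModuleCat.hom_comp, LinearMap.coe_comp]
      rfl

lemma exists_of_mk₀ (z : LocalCoh J 0 M) :
    ∃ (k : ℕ) (f : ringModPow J k ⟶ ModuleCat.of R M), of (Ext.mk₀ f) = z := by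
  obtain ⟨k, e, rfl⟩ := exists_of z
  obtain ⟨f, rfl⟩ := (Ext.linearEquiv₀ (R := R)).symm.surjective e
  exact ⟨k, f, by simp⟩

lemma evalOne_of_mk₀ {k : ℕ} (f : ringModPow J k ⟶ ModuleCat.of R M) :
    evalOne M (of (Ext.mk₀ f)) = f (Submodule.Quotient.mk 1 : R ⧸ J ^ k) := by
  simp [evalOne, linearEquiv₀_mk₀]

lemma evalOne_map (f : A →ₗ[R] B) (z : LocalCoh J 0 A) :
    evalOne B (map J 0 f z) = f (evalOne A z) := by
  obtain ⟨k, g, rfl⟩ := exists_of_mk₀ z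
  rw [map_of, evalOne_of_mk₀, Ext.mk₀_comp_mk₀, evalOne_of_mk₀]
  rfl

lemma evalOne_injective : Function.Injective (evalOne (J := J) M) := by
  refine (injective_iff_map_eq_zero _).2 fun z hz => ?_
  obtain ⟨k, g, rfl⟩ := exists_of_mk₀ z
  rw [evalOne_of_mk₀] at hz
  have hg : g = 0 := by
    refine ModuleCat.hom_ext (Submodule.linearMap_qext (J ^ k) (LinearMap.ext_ring ?_))
    exact hz
  rw [hg, Ext.mk₀_zero, _root_.map_zero]

lemma mem_range_evalOne {m : M} {k : ℕ} (hm : ∀ r ∈ J ^ k, r • m = 0) :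
    m ∈ LinearMap.range (evalOne (J := J) M) := by
  let f : ringModPow J k ⟶ ModuleCat.of R M :=
    ModuleCat.ofHom ((J ^ k).liftQ (LinearMap.toSpanSingleton R M m) hm)
  refine ⟨of (Ext.mk₀ f), ?_⟩
  rw [evalOne_of_mk₀]
  exact one_smul R m

/-- For a torsion module `H^0_J(M)` is `M` itself. -/
def equivOfIsPowTorsion (h : IsPowTorsion J M) : LocalCoh J 0 M ≃ₗ[R] M :=
  LinearEquiv.ofBijective (evalOne M) ⟨evalOne_injective, fun m => by
    obtain ⟨k, hk⟩ := h m
    exact mem_range_evalOne hk⟩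

lemma equivOfIsPowTorsion_symm_map (hA : IsPowTorsion J A) (hB : IsPowTorsion J B)
    (f : A →ₗ[R] B) (a : A) :
    (equivOfIsPowTorsion hB).symm (f a) = map J 0 f ((equivOfIsPowTorsion hA).symm a) := by
  rw [LinearEquiv.symm_apply_eq]
  obtain ⟨z, rfl⟩ := (equivOfIsPowTorsion hA).surjective a
  rw [LinearEquiv.symm_apply_apply]
  exact (evalOne_map f z).symm

lemma map_zero_surjective (hA : IsPowTorsion J A) {f : A →ₗ[R] B} (hf : Function.Surjective f) :
    Function.Surjective (map J 0 f) := by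
  intro z
  obtain ⟨a, ha⟩ := hf (evalOne B z)
  obtain ⟨y, rfl⟩ := (equivOfIsPowTorsion hA).surjective a
  exact ⟨y, evalOne_injective ((evalOne_map f y).trans ha)⟩

lemma map_zero_injective {f : A →ₗ[R] B} (hf : Function.Injective f) :
    Function.Injective (map J 0 f) := by
  intro x y h
  refine evalOne_injective (hf ?_)
  rw [← evalOne_map, h, evalOne_map]

end LocalCoh

end Torsion

section LongExactSequence

variable {R : Type u} [CommRing R] {A B C A' B' C' : Type u}
  [AddCommGroup A] [Module R A] [AddCommGroup B] [Module R B] [AddCommGroup C] [Module R C]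
  [AddCommGroup A'] [Module R A'] [AddCommGroup B'] [Module R B'] [AddCommGroup C'] [Module R C']

namespace ShortExactSeq

lemma ker_subtype {f : A →ₗ[R] B} (hf : Function.Surjective f) :
    ShortExactSeq (LinearMap.ker f).subtype f :=
  ⟨Subtype.val_injective, f.exact_subtype_ker_map, hf⟩

lemma ker_rangeRestrict (f : A →ₗ[R] B) :
    ShortExactSeq (LinearMap.ker f).subtype f.rangeRestrict :=
  ⟨Subtype.val_injective, fun y => by simp [Subtype.ext_iff], f.surjective_rangeRestrict⟩

lemma range_mkQ {f : A →ₗ[R] B} (hf : Function.Injective f) :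
    ShortExactSeq f (LinearMap.range f).mkQ :=
  ⟨hf, f.exact_map_mkQ_range, Submodule.mkQ_surjective _⟩

lemma subtype_mkQ (p : Submodule R A) : ShortExactSeq p.subtype p.mkQ :=
  ⟨Subtype.val_injective, LinearMap.exact_subtype_mkQ p, p.mkQ_surjective⟩

lemma lTensor {f : A →ₗ[R] B} {g : B →ₗ[R] C} (h : ShortExactSeq f g) (F : Type u)
    [AddCommGroup F] [Module R F] [Module.Flat R F] :
    ShortExactSeq (f.lTensor F) (g.lTensor F) :=
  ⟨Module.Flat.lTensor_preserves_injective_linearMap _ h.injective,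
    lTensor_exact F h.exact h.surjective, LinearMap.lTensor_surjective F h.surjective⟩

lemma exists_desc {f : A →ₗ[R] B} {g : B →ₗ[R] C} (h : ShortExactSeq f g) {X : Type*}
    [AddCommGroup X] [Module R X] (φ : B →ₗ[R] X) (hφ : φ ∘ₗ f = 0) :
    ∃ ψ : C →ₗ[R] X, ψ ∘ₗ g = φ := by
  have hker : LinearMap.ker g ≤ LinearMap.ker φ := fun x hx => by
    obtain ⟨y, rfl⟩ := (h.exact x).1 hx
    exact LinearMap.congr_fun hφ y
  refine ⟨(LinearMap.ker g).liftQ φ hker ∘ₗ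
    (g.quotKerEquivOfSurjective h.surjective).symm.toLinearMap, LinearMap.ext fun x => ?_⟩
  have hx : (g.quotKerEquivOfSurjective h.surjective).symm (g x) = (LinearMap.ker g).mkQ x :=
    (LinearEquiv.symm_apply_eq _).2 rfl
  simp [hx]

end ShortExactSeq

lemma surjective_of_exact_of_subsingleton {f : A →ₗ[R] B} {g : B →ₗ[R] C}
    (h : Function.Exact f g) (hC : Subsingleton C) : Function.Surjective f :=
  fun b => (h b).1 (hC.elim _ _)

lemma injective_of_exact_of_subsingleton {f : A →ₗ[R] B} {g : B →ₗ[R] C}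
    (h : Function.Exact f g) (hA : Subsingleton A) : Function.Injective g := by
  refine (injective_iff_map_eq_zero g).2 fun b hb => ?_
  obtain ⟨a, rfl⟩ := (h b).1 hb
  rw [hA.elim a 0, map_zero]

namespace LocalCoh

variable {J : Ideal R} {f : A →ₗ[R] B} {g : B →ₗ[R] C} (h : ShortExactSeq f g) {i : ℕ}

include h

lemma map_left_injective (hC : Subsingleton (LocalCoh J i C)) :
    Function.Injective (map J (i + 1) f) :=
  injective_of_exact_of_subsingleton (exact_δ_map J h i) hC

lemma map_left_surjective (hC : Subsingleton (LocalCoh J i C)) :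
    Function.Surjective (map J i f) :=
  surjective_of_exact_of_subsingleton (exact_map_map J h i) hC

lemma map_right_injective (hA : Subsingleton (LocalCoh J i A)) :
    Function.Injective (map J i g) :=
  injective_of_exact_of_subsingleton (exact_map_map J h i) hA

lemma map_right_surjective (hA : Subsingleton (LocalCoh J (i + 1) A)) :
    Function.Surjective (map J i g) :=
  surjective_of_exact_of_subsingleton (exact_map_δ J h i) hA

lemma δ_injective (hB : Subsingleton (LocalCoh J i B)) : Function.Injective (δ J h i) :=
  injective_of_exact_of_subsingleton (exact_map_δ J h i) hB

lemma δ_surjective (hB : Subsingleton (LocalCoh J (i + 1) B)) : Function.Surjective (δ J h i) :=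
  surjective_of_exact_of_subsingleton (exact_δ_map J h i) hB

lemma subsingleton_left (_ : Subsingleton (LocalCoh J i C))
    (hB : Subsingleton (LocalCoh J (i + 1) B)) : Subsingleton (LocalCoh J (i + 1) A) :=
  (δ_surjective h hB).subsingleton

lemma map_left_surjective_of_ladder {f' : A' →ₗ[R] B'} {g' : B' →ₗ[R] C'}
    (h' : ShortExactSeq f' g') {a : A →ₗ[R] A'} {b : B →ₗ[R] B'} {c : C →ₗ[R] C'}
    (hab : f' ∘ₗ a = b ∘ₗ f) (hbc : g' ∘ₗ b = c ∘ₗ g)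
    (hc : Function.Surjective (map J i c)) (hB' : Subsingleton (LocalCoh J (i + 1) B')) :
    Function.Surjective (map J (i + 1) a) := by
  intro z
  obtain ⟨y, rfl⟩ := δ_surjective h' hB' z
  obtain ⟨x, rfl⟩ := hc y
  exact ⟨δ J h i x, (LinearMap.congr_fun (δ_comp_map J h h' hab hbc i) x).symm⟩

lemma δ_lTensor_map {F F' : Type u} [AddCommGroup F] [Module R F] [Module.Flat R F]
    [AddCommGroup F'] [Module R F'] [Module.Flat R F'] (φ : F →ₗ[R] F')
    (x : LocalCoh J i (F ⊗[R] C)) :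
    δ J (h.lTensor F') i (map J i (φ.rTensor C) x) =
      map J (i + 1) (φ.rTensor A) (δ J (h.lTensor F) i x) :=
  LinearMap.congr_fun (δ_comp_map J _ _
    ((LinearMap.lTensor_comp_rTensor ..).trans (LinearMap.rTensor_comp_lTensor ..).symm)
    ((LinearMap.lTensor_comp_rTensor ..).trans (LinearMap.rTensor_comp_lTensor ..).symm) i) x

end LocalCoh

end LongExactSequence

section Noetherian

variable {R : Type u} [CommRing R] (J : Ideal R)

lemma LocalCoh.subsingleton_of_injective (E : Type u) [AddCommGroup E] [Module R E]
    [Module.Injective R E] (i : ℕ) : Subsingleton (LocalCoh J (i + 1) E) := by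
  have : Injective (ModuleCat.of R E) := Module.injective_object_of_injective_module R E
  refine subsingleton_of_forall_eq 0 fun z => ?_
  obtain ⟨k, e, rfl⟩ := exists_of z
  rw [Abelian.Ext.eq_zero_of_injective e, _root_.map_zero]

variable [IsNoetherianRing R]

/- By Artin–Rees, `I ∩ J^l ⊆ J^k I` for `l` large. -/
lemma exists_forall_mem_pow_eq_zero {M : Type*} [AddCommGroup M] [Module R M]
    (hM : IsPowTorsion J M) {I : Ideal R} (g : I →ₗ[R] M) :
    ∃ l : ℕ, ∀ x : I, (x : R) ∈ J ^ l → g x = 0 := by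
  obtain ⟨k, hk⟩ := hM.exists_pow_smul_eq_zero (Module.Finite.fg_top.map g)
  obtain ⟨m, hm⟩ := Ideal.exists_pow_inf_eq_pow_smul J I
  refine ⟨m + k, fun x hx => ?_⟩
  have hx' : (x : R) ∈ J ^ k • I := by
    have : (x : R) ∈ J ^ (m + k) • (⊤ : Submodule R R) ⊓ I := ⟨by simpa using hx, x.2⟩
    rw [hm _ (Nat.le_add_right m k), Nat.add_sub_cancel_left] at this
    exact Submodule.smul_mono le_rfl inf_le_right this
  have hle : J ^ k • (⊤ : Submodule R I) ≤ LinearMap.ker g :=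
    Submodule.smul_le.2 fun r hr y _ => by
      rw [LinearMap.mem_ker, map_smul]
      exact hk r hr _ (Submodule.mem_map_of_mem trivial)
  refine hle ?_
  rwa [Submodule.mem_smul_top_iff]

instance injective_primaryComponent (M : Type u) [AddCommGroup M] [Module R M]
    [Module.Injective R M] : Module.Injective R (Ideal.primaryComponent M J) := by
  refine Module.Baer.injective fun I g => ?_
  obtain ⟨l, hl⟩ := exists_forall_mem_pow_eq_zero J (isPowTorsion_primaryComponent J M) g
  let q : Submodule R I := Submodule.comap (Submodule.subtype I) (J ^ l)
  have hinj : Function.Injective (q.mapQ (J ^ l) (Submodule.subtype I) le_rfl) := by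
    rw [← LinearMap.ker_eq_bot, Submodule.ker_mapQ]
    simp [q]
  obtain ⟨h, hh⟩ := Module.Injective.out _ hinj
    (q.liftQ ((Ideal.primaryComponent M J).subtype ∘ₗ g) fun x hx => by
      rw [LinearMap.mem_ker, LinearMap.comp_apply, hl x hx, map_zero])
  refine ⟨(h ∘ₗ (J ^ l).mkQ).codRestrict _ fun x => ?_, fun x hx => ?_⟩
  · refine (Ideal.primaryComponent_mem M J _).2 ⟨l, (Submodule.mem_torsionBySet_iff _ _).2 ?_⟩
    rintro ⟨r, hr⟩
    rw [← map_smul]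
    exact (congrArg h ((Submodule.Quotient.mk_eq_zero _).2
      (Ideal.mul_mem_right x _ hr))).trans (map_zero h)
  · exact Subtype.ext (hh (Submodule.Quotient.mk ⟨x, hx⟩))

namespace IsPowTorsion

variable {J}

lemma exists_injective (T : Type u) [AddCommGroup T] [Module R T] (hT : IsPowTorsion J T) :
    ∃ (E : Type u) (_ : AddCommGroup E) (_ : Module R E) (_ : Module.Injective R E)
      (f : T →ₗ[R] E), IsPowTorsion J E ∧ Function.Injective f := by
  let E : ModuleCat.{u} R := Injective.under (ModuleCat.of R T)
  have : Injective (ModuleCat.of R E) := inferInstanceAs (Injective (Injective.under _))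
  have : Module.Injective R E := Module.injective_module_of_injective_object R E
  let ι : T →ₗ[R] E := (Injective.ι (ModuleCat.of R T)).hom
  have hι : Function.Injective ι := (ModuleCat.mono_iff_injective (Injective.ι _)).1 inferInstance
  refine ⟨Ideal.primaryComponent E J, inferInstance, inferInstance, inferInstance,
    ι.codRestrict _ fun x => ?_, isPowTorsion_primaryComponent J E,
    fun x y h => hι (congrArg Subtype.val h)⟩
  obtain ⟨k, hk⟩ := hT x
  refine (Ideal.primaryComponent_mem E J _).2 ⟨k, (Submodule.mem_torsionBySet_iff _ _).2 ?_⟩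
  rintro ⟨r, hr⟩
  rw [← map_smul]
  exact (congrArg ι (hk r hr)).trans (map_zero ι)

end IsPowTorsion

namespace LocalCoh

variable {J}

lemma subsingleton_of_isPowTorsion (i : ℕ) :
    ∀ {T : Type u} [AddCommGroup T] [Module R T], IsPowTorsion J T →
      Subsingleton (LocalCoh J (i + 1) T) := by
  induction i with
  | zero =>
    intro T _ _ hT
    obtain ⟨E, _, _, _, f, hE, hf⟩ := hT.exists_injective
    have hs := ShortExactSeq.range_mkQ hf
    refine subsingleton_of_forall_eq 0 fun z => ?_
    obtain ⟨y, rfl⟩ := δ_surjective hs (subsingleton_of_injective J E 0) z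
    obtain ⟨x, rfl⟩ := map_zero_surjective hE (Submodule.mkQ_surjective _) y
    exact (exact_map_δ J hs 0).apply_apply_eq_zero x
  | succ i ih =>
    intro T _ _ hT
    obtain ⟨E, _, _, _, f, hE, hf⟩ := hT.exists_injective
    exact subsingleton_left (ShortExactSeq.range_mkQ hf)
      (ih (hE.of_surjective _ (Submodule.mkQ_surjective _))) (subsingleton_of_injective J E _)

variable {A B : Type u} [AddCommGroup A] [Module R A] [AddCommGroup B] [Module R B]

lemma map_bijective_of_isPowTorsion {f : A →ₗ[R] B} (hker : IsPowTorsion J (LinearMap.ker f))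
    (hcoker : IsPowTorsion J (B ⧸ LinearMap.range f)) (i : ℕ) :
    Function.Bijective (map J (i + 2) f) := by
  have hK := ShortExactSeq.ker_rangeRestrict f
  have hQ := ShortExactSeq.subtype_mkQ (LinearMap.range f)
  have hrange : Function.Bijective (map J (i + 2) f.rangeRestrict) :=
    ⟨map_right_injective hK (subsingleton_of_isPowTorsion _ hker),
      map_right_surjective hK (subsingleton_of_isPowTorsion _ hker)⟩
  have hincl : Function.Bijective (map J (i + 2) (LinearMap.range f).subtype) :=
    ⟨map_left_injective hQ (subsingleton_of_isPowTorsion _ hcoker),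
      map_left_surjective hQ (subsingleton_of_isPowTorsion _ hcoker)⟩
  rw [show f = (LinearMap.range f).subtype ∘ₗ f.rangeRestrict from rfl, map_comp,
    LinearMap.coe_comp]
  exact hincl.comp hrange

lemma map_bijective_of_pow_smul {f : A →ₗ[R] B} {c e : ℕ}
    (hker : ∀ a, f a = 0 → ∀ g ∈ J ^ c, g ^ e • a = 0)
    (hcoker : ∀ b, ∀ g ∈ J ^ c, g ^ e • b ∈ LinearMap.range f) (i : ℕ) :
    Function.Bijective (map J (i + 2) f) := by
  refine map_bijective_of_isPowTorsion (.of_pow_smul (c := c) (e := e) ?_)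
    (.of_pow_smul (c := c) (e := e) ?_) i
  · rintro ⟨a, ha⟩ g hg
    exact Subtype.ext (hker a ha g hg)
  · intro b g hg
    obtain ⟨b, rfl⟩ := Submodule.Quotient.mk_surjective _ b
    rw [← Submodule.Quotient.mk_smul, Submodule.Quotient.mk_eq_zero]
    exact hcoker b g hg

end LocalCoh

end Noetherian

-- Unification would otherwise unfold these maps down to the direct limits.
attribute [local irreducible] LocalCoh.map LocalCoh.δ

section RegularSequence

open RingTheory.Sequence MvPolynomial

lemma LocalCoh.subsingleton_of_isRegular {R : Type u} [CommRing R] [IsNoetherianRing R]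
    {J : Ideal R} {M : Type u} [AddCommGroup M] [Module R M] [Module.Finite R M]
    (hJ : J • (⊤ : Submodule R M) < ⊤) {rs : List R} (hmem : ∀ r ∈ rs, r ∈ J)
    (hrs : IsRegular M rs) {i : ℕ} (hi : i < rs.length) : Subsingleton (LocalCoh J i M) := by
  refine subsingleton_of_forall_eq 0 fun z => ?_
  obtain ⟨k, e, rfl⟩ := exists_of z
  have hsupp : Module.support R (R ⧸ J ^ k) ⊆ PrimeSpectrum.zeroLocus J := by
    rw [Module.support_eq_zeroLocus, Ideal.annihilator_quotient]
    intro p hp x hx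
    exact p.isPrime.mem_of_pow_mem k (hp (Ideal.pow_mem_pow hx k))
  have := ModuleCat.subsingleton_ext_of_exists_isRegular J (ModuleCat.of R (R ⧸ J ^ k)) hsupp
    (ModuleCat.of R M) hJ rs hmem hrs i hi
  have he : e = 0 := Subsingleton.elim (α := Abelian.Ext (ModuleCat.of R (R ⧸ J ^ k)) _ i) _ _
  rw [he, _root_.map_zero]

variable (A : Type u) [CommRing A] (m : ℕ)

lemma ofList_take_ofFn_X (i : ℕ) :
    Ideal.ofList ((List.ofFn (X : Fin m → MvPolynomial (Fin m) A)).take i) =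
      Ideal.span (X '' {j : Fin m | (j : ℕ) < i}) := by
  refine congrArg Ideal.span (Set.ext fun p => ?_)
  simp only [List.mem_take_iff_getElem, List.length_ofFn, List.getElem_ofFn, Set.mem_image,
    Set.mem_ofPred_eq, Fin.exists_iff, lt_min_iff]
  exact ⟨fun ⟨j, hj, h⟩ => ⟨j, hj.2, hj.1, h⟩, fun ⟨j, hj, hjm, h⟩ => ⟨j, ⟨hjm, hj⟩, h⟩⟩

lemma isWeaklyRegular_ofFn_X :
    IsWeaklyRegular (MvPolynomial (Fin m) A) (List.ofFn (X : Fin m → MvPolynomial (Fin m) A)) := by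
  refine ⟨fun i hi => ?_⟩
  rw [List.getElem_ofFn, isSMulRegular_iff_right_eq_zero_of_smul]
  intro a ha
  obtain ⟨p, rfl⟩ := Submodule.Quotient.mk_surjective _ a
  rw [← Submodule.Quotient.mk_smul, Submodule.Quotient.mk_eq_zero, smul_eq_mul, Ideal.mul_top,
    ofList_take_ofFn_X, mem_ideal_span_X_image] at ha
  rw [Submodule.Quotient.mk_eq_zero, smul_eq_mul, Ideal.mul_top,
    ofList_take_ofFn_X, mem_ideal_span_X_image]
  intro d hd
  have hi' : i < m := by simpa using hi
  obtain ⟨j, hj, hdj⟩ := ha (Finsupp.single ⟨i, hi'⟩ 1 + d)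
    (by rw [mem_support_iff, smul_eq_mul, coeff_X_mul]; exact mem_support_iff.1 hd)
  have hne : (⟨i, hi'⟩ : Fin m) ≠ j := by
    rintro rfl
    exact lt_irrefl i hj
  exact ⟨j, hj, by simpa [Finsupp.single_apply, hne] using hdj⟩

lemma idealOfVars_ne_top [Nontrivial A] : idealOfVars (Fin m) A ≠ ⊤ := by
  rw [Ideal.ne_top_iff_one, idealOfVars, ← Set.image_univ, mem_ideal_span_X_image]
  simp

lemma LocalCoh.subsingleton_mvPolynomial [IsNoetherianRing A] [Nontrivial A] {i : ℕ} (hi : i < m) :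
    Subsingleton (LocalCoh (idealOfVars (Fin m) A) i (MvPolynomial (Fin m) A)) := by
  have hne := idealOfVars_ne_top A m
  have hmem : ∀ r ∈ List.ofFn (X : Fin m → MvPolynomial (Fin m) A), r ∈ idealOfVars (Fin m) A := by
    intro r hr
    obtain ⟨j, rfl⟩ := List.mem_ofFn.1 hr
    exact Ideal.subset_span ⟨j, rfl⟩
  refine subsingleton_of_isRegular (by simpa [lt_top_iff_ne_top] using hne) hmem
    ⟨isWeaklyRegular_ofFn_X A m, fun h => hne (top_le_iff.1 ?_)⟩ (by simpa using hi)
  rw [h, smul_eq_mul, Ideal.mul_top]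
  exact Ideal.span_le.2 hmem

end RegularSequence

/-! ### The exterior square as a quotient of the tensor square -/

section ExteriorSquare

variable {R : Type u} [CommRing R] {M M' X : Type u} [AddCommGroup M] [Module R M]
  [AddCommGroup M'] [Module R M'] [AddCommGroup X] [Module R X]

variable (R M) in
/-- The submodule of `M ⊗ M` spanned by the squares `x ⊗ x`, that is, the kernel of
`M ⊗ M → ⋀² M`. -/
def squareTensors : Submodule R (M ⊗[R] M) :=
  Submodule.span R (Set.range fun x : M => x ⊗ₜ[R] x)

lemma squareTensors_le_ker {B : M ⊗[R] M →ₗ[R] X} (hB : ∀ x, B (x ⊗ₜ x) = 0) :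
    squareTensors R M ≤ LinearMap.ker B :=
  Submodule.span_le.2 <| by
    rintro _ ⟨x, rfl⟩
    exact hB x

lemma comm_eq_self_of_mem_squareTensors {u : M ⊗[R] M} (hu : u ∈ squareTensors R M) :
    TensorProduct.comm R M M u = u := by
  have := squareTensors_le_ker
    (B := (TensorProduct.comm R M M).toLinearMap - LinearMap.id) (by simp) hu
  simpa [sub_eq_zero] using this

lemma map_mem_squareTensors (φ : M →ₗ[R] M') {u : M ⊗[R] M} (hu : u ∈ squareTensors R M) :
    TensorProduct.map φ φ u ∈ squareTensors R M' :=
  (Submodule.span_le (p := (squareTensors R M').comap (TensorProduct.map φ φ))).2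
    (by rintro _ ⟨x, rfl⟩; exact Submodule.subset_span ⟨φ x, rfl⟩) hu

variable (R M) in
/-- The canonical map `M ⊗ M → ⋀² M`, `x ⊗ y ↦ x ∧ y`. -/
def wedge : M ⊗[R] M →ₗ[R] ⋀[R]^2 M :=
  TensorProduct.lift <| (MultilinearMap.ofSubsingletonₗ R R M (⋀[R]^2 M) (0 : Fin 1)).symm ∘ₗ
    (exteriorPower.ιMulti R 2 (M := M)).toMultilinearMap.curryLeft

lemma wedge_tmul (x y : M) : wedge R M (x ⊗ₜ y) = exteriorPower.ιMulti R 2 ![x, y] := by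
  refine congrArg (exteriorPower.ιMulti R 2) (funext fun i => ?_)
  fin_cases i <;> rfl

lemma wedge_tmul_self (x : M) : wedge R M (x ⊗ₜ x) = 0 := by
  rw [wedge_tmul]
  exact (exteriorPower.ιMulti R 2).map_eq_zero_of_eq _ (i := 0) (j := 1) rfl zero_ne_one

lemma wedge_tmul_swap (x y : M) : wedge R M (x ⊗ₜ y) = -wedge R M (y ⊗ₜ x) := by
  rw [eq_neg_iff_add_eq_zero]
  simpa [TensorProduct.add_tmul, TensorProduct.tmul_add, wedge_tmul_self] using
    wedge_tmul_self (R := R) (y + x)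

/-- The map `x ∧ y ↦ B (x ⊗ y)` on the exterior square. -/
def wedgeLift (B : M ⊗[R] M →ₗ[R] X) (hB : ∀ x, B (x ⊗ₜ x) = 0) : ⋀[R]^2 M →ₗ[R] X :=
  exteriorPower.alternatingMapLinearEquiv
    { toFun v := B (v 0 ⊗ₜ v 1)
      map_update_add' m i x y := by
        fin_cases i <;> simp [TensorProduct.add_tmul, TensorProduct.tmul_add]
      map_update_smul' m i c x := by
        fin_cases i <;> simp [← TensorProduct.smul_tmul']
      map_eq_zero_of_eq' v i j h hij := by
        have : v 0 = v 1 := by fin_cases i <;> fin_cases j <;> simp_all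
        rw [this, hB] }

@[simp]
lemma wedgeLift_wedge (B : M ⊗[R] M →ₗ[R] X) (hB : ∀ x, B (x ⊗ₜ x) = 0) (u : M ⊗[R] M) :
    wedgeLift B hB (wedge R M u) = B u := by
  refine LinearMap.congr_fun (f := wedgeLift B hB ∘ₗ wedge R M) (TensorProduct.ext' fun x y => ?_) u
  rw [LinearMap.comp_apply, wedge_tmul]
  exact exteriorPower.alternatingMapLinearEquiv_apply_ιMulti ..

lemma wedge_surjective : Function.Surjective (wedge R M) := by
  rw [← LinearMap.range_eq_top, eq_top_iff, ← exteriorPower.ιMulti_span R 2 M, Submodule.span_le]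
  rintro _ ⟨v, rfl⟩
  exact ⟨v 0 ⊗ₜ v 1, (wedge_tmul _ _).trans (congrArg _ (List.ofFn_injective rfl))⟩

lemma ker_wedge : LinearMap.ker (wedge R M) = squareTensors R M := by
  refine le_antisymm (fun u hu => ?_) (squareTensors_le_ker wedge_tmul_self)
  have := wedgeLift_wedge (squareTensors R M).mkQ
    (fun x => (Submodule.Quotient.mk_eq_zero _).2 (Submodule.subset_span ⟨x, rfl⟩)) u
  rwa [LinearMap.mem_ker.1 hu, map_zero, eq_comm, Submodule.mkQ_apply,
    Submodule.Quotient.mk_eq_zero] at this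

variable (R M) in
lemma shortExactSeq_wedge : ShortExactSeq (squareTensors R M).subtype (wedge R M) :=
  ker_wedge (R := R) (M := M) ▸ .ker_subtype wedge_surjective

end ExteriorSquare

/-! ### The syzygies of a cyclic torsion module -/

/-- The start `L₂ → L₁ → R → N → 0` of a free resolution of a cyclic module `N` annihilated by a
power of `J`, over a ring `R` of `J`-depth at least `5`. -/
structure CyclicPresentation {R : Type u} [CommRing R] (J : Ideal R) (L₁ L₂ N : Type u)
    [AddCommGroup L₁] [Module R L₁] [AddCommGroup L₂] [Module R L₂]
    [AddCommGroup N] [Module R N] where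
  d₁ : L₁ →ₗ[R] R
  d₂ : L₂ →ₗ[R] L₁
  π : R →ₗ[R] N
  exact₁ : Function.Exact d₂ d₁
  exact₀ : Function.Exact d₁ π
  surjective : Function.Surjective π
  exponent : ℕ
  pow_le_range : J ^ exponent ≤ LinearMap.range d₁
  depth : ∀ i < 5, Subsingleton (LocalCoh J i R)

namespace CyclicPresentation

variable {R : Type u} [CommRing R] {J : Ideal R} {L₁ L₂ N : Type u}
  [AddCommGroup L₁] [Module R L₁] [AddCommGroup L₂] [Module R L₂] [AddCommGroup N] [Module R N]
  (D : CyclicPresentation J L₁ L₂ N)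

include D

/-- The zeroth syzygy module of `N`, an ideal of `R`. -/
abbrev syz₀ : Submodule R R := LinearMap.range D.d₁

/-- The first syzygy module of `N`. -/
abbrev syz₁ : Submodule R L₁ := LinearMap.ker D.d₁

/-- The second syzygy module of `N`, whose sheafification is the bundle `P₂`. -/
abbrev syz₂ : Submodule R L₂ := LinearMap.ker D.d₂

@[simp]
lemma d₁_d₂ (x : L₂) : D.d₁ (D.d₂ x) = 0 := D.exact₁.apply_apply_eq_zero x

/-- The differential `L₂ → L₁` as a surjection onto the first syzygy module. -/
def toSyz₁ : L₂ →ₗ[R] D.syz₁ := D.d₂.codRestrict D.syz₁ D.d₁_d₂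

@[simp]
lemma coe_toSyz₁ (x : L₂) : (D.toSyz₁ x : L₁) = D.d₂ x := rfl

lemma toSyz₁_surjective : Function.Surjective D.toSyz₁ := fun ⟨x, hx⟩ =>
  have ⟨y, hy⟩ := (D.exact₁ x).1 hx
  ⟨y, Subtype.ext hy⟩

lemma shortExactSeq₂ : ShortExactSeq D.syz₂.subtype D.toSyz₁ :=
  ⟨Subtype.val_injective, fun y => by simp [Subtype.ext_iff], D.toSyz₁_surjective⟩

lemma shortExactSeq₁ : ShortExactSeq D.syz₁.subtype D.d₁.rangeRestrict :=
  .ker_rangeRestrict D.d₁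

lemma shortExactSeq₀ : ShortExactSeq D.syz₀.subtype D.π :=
  ⟨Subtype.val_injective, fun y => by simpa using D.exact₀ y, D.surjective⟩

lemma smul_eq_zero_of_mem_syz₀ {r : R} (hr : r ∈ D.syz₀) (x : N) : r • x = 0 := by
  obtain ⟨a, rfl⟩ := D.surjective x
  rw [← map_smul, D.exact₀]
  exact Ideal.mul_mem_right a D.syz₀ hr

lemma smul_tensor_eq_zero_of_mem_syz₀ {F : Type u} [AddCommGroup F] [Module R F] {r : R}
    (hr : r ∈ D.syz₀) (w : F ⊗[R] N) : r • w = 0 := by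
  induction w with
  | zero => rw [smul_zero]
  | tmul x y => rw [← tmul_smul, D.smul_eq_zero_of_mem_syz₀ hr, tmul_zero]
  | add x y hx hy => rw [smul_add, hx, hy, add_zero]

lemma isPowTorsion_tensor (F : Type u) [AddCommGroup F] [Module R F] :
    IsPowTorsion J (F ⊗[R] N) :=
  fun w => ⟨D.exponent, fun _ hg => D.smul_tensor_eq_zero_of_mem_syz₀ (D.pow_le_range hg) w⟩

section Homotopy

variable [Module.Projective R L₁]

/- The map `s` is the component `L₁ → L₂` of a null-homotopy of multiplication by `d₁ y`. -/
lemma exists_homotopy (y : L₁) :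
    ∃ (s : L₁ →ₗ[R] L₂) (θ : L₂ →ₗ[R] D.syz₂),
      (∀ a, D.d₂ (s a) = D.d₁ y • a - D.d₁ a • y) ∧ ∀ x, (θ x : L₂) = D.d₁ y • x - s (D.d₂ x) := by
  let t : L₁ →ₗ[R] D.syz₁ :=
    (D.d₁ y • LinearMap.id - (LinearMap.toSpanSingleton R L₁ y) ∘ₗ D.d₁).codRestrict D.syz₁
      fun a => by simp [mul_comm]
  obtain ⟨s, hs⟩ := Module.projective_lifting_property D.toSyz₁ t D.toSyz₁_surjective
  have hd₂s (a : L₁) : D.d₂ (s a) = D.d₁ y • a - D.d₁ a • y :=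
    congrArg Subtype.val (LinearMap.congr_fun hs a)
  exact ⟨s, (D.d₁ y • LinearMap.id - s ∘ₗ D.d₂).codRestrict D.syz₂ fun x => by simp [hd₂s], hd₂s,
    fun x => rfl⟩

lemma exists_extend_smul {g : R} (hg : g ∈ D.syz₀) :
    ∃ θ : L₂ →ₗ[R] D.syz₂, θ ∘ₗ D.syz₂.subtype = g • LinearMap.id := by
  obtain ⟨y, rfl⟩ := hg
  obtain ⟨s, θ, -, hθ⟩ := D.exists_homotopy y
  exact ⟨θ, LinearMap.ext fun ⟨x, hx⟩ => Subtype.ext (by simp [hθ, LinearMap.mem_ker.1 hx])⟩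

lemma smul_eq_zero_of_rTensor_eq_zero [Module.Flat R L₂] {X Y : Type u} [AddCommGroup X]
    [Module R X] [AddCommGroup Y] [Module R Y] {φ : X →ₗ[R] Y} (hφ : Function.Injective φ)
    {w : X ⊗[R] D.syz₂} (hw : φ.rTensor D.syz₂ w = 0) {g : R} (hg : g ∈ D.syz₀) : g • w = 0 := by
  obtain ⟨θ, hθ⟩ := D.exists_extend_smul hg
  have hw₂ : D.syz₂.subtype.lTensor X w = 0 := by
    apply Module.Flat.rTensor_preserves_injective_linearMap (M := L₂) φ hφ
    rw [map_zero, ← LinearMap.comp_apply, LinearMap.rTensor_comp_lTensor,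
      ← LinearMap.lTensor_comp_rTensor, LinearMap.comp_apply, hw, map_zero]
  calc g • w = (θ ∘ₗ D.syz₂.subtype).lTensor X w := by
        rw [hθ, LinearMap.lTensor_smul, LinearMap.lTensor_id]; rfl
    _ = 0 := by rw [LinearMap.lTensor_comp, LinearMap.comp_apply, hw₂, map_zero]

end Homotopy

/-! ### Local cohomology of the syzygies -/

section DimensionShift

variable (F : Type u) [AddCommGroup F] [Module R F] [Module.Free R F] [Module.Finite R F]

lemma subsingleton_localCoh_free {i : ℕ} (hi : i < 5) : Subsingleton (LocalCoh J i F) :=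
  LocalCoh.subsingleton_of_free (D.depth i hi) F

lemma bijective_δ_lTensor {A B C : Type u} [AddCommGroup A] [Module R A] [AddCommGroup B]
    [Module R B] [Module.Free R B] [Module.Finite R B] [AddCommGroup C] [Module R C]
    {f : A →ₗ[R] B} {g : B →ₗ[R] C} (h : ShortExactSeq f g) {i : ℕ} (hi : i < 4) :
    Function.Bijective (LocalCoh.δ J (h.lTensor F) i) :=
  ⟨LocalCoh.δ_injective _ (D.subsingleton_localCoh_free _ (by lia)),
    LocalCoh.δ_surjective _ (D.subsingleton_localCoh_free _ (by lia))⟩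

section TensorEquiv

variable [Module.Free R L₁] [Module.Finite R L₁] [Module.Free R L₂] [Module.Finite R L₂]

/-- The isomorphism `F ⊗ N ≃ H³(F ⊗ P₂)` given by dimension shifting along the resolution. -/
def tensorEquivLocalCoh : F ⊗[R] N ≃ₗ[R] LocalCoh J 3 (F ⊗[R] D.syz₂) :=
  (LocalCoh.equivOfIsPowTorsion (D.isPowTorsion_tensor F)).symm ≪≫ₗ
    .ofBijective _ (D.bijective_δ_lTensor F D.shortExactSeq₀ (i := 0) (by lia)) ≪≫ₗ
    .ofBijective _ (D.bijective_δ_lTensor F D.shortExactSeq₁ (i := 1) (by lia)) ≪≫ₗ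
    .ofBijective _ (D.bijective_δ_lTensor F D.shortExactSeq₂ (i := 2) (by lia))

lemma tensorEquivLocalCoh_naturality {F F' : Type u} [AddCommGroup F] [Module R F]
    [Module.Free R F] [Module.Finite R F] [AddCommGroup F'] [Module R F'] [Module.Free R F']
    [Module.Finite R F'] (φ : F →ₗ[R] F') (x : F ⊗[R] N) :
    D.tensorEquivLocalCoh F' (φ.rTensor N x) =
      LocalCoh.map J 3 (φ.rTensor D.syz₂) (D.tensorEquivLocalCoh F x) := by
  simp only [tensorEquivLocalCoh, LinearEquiv.trans_apply, LinearEquiv.ofBijective_apply,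
    LocalCoh.equivOfIsPowTorsion_symm_map (D.isPowTorsion_tensor F) (D.isPowTorsion_tensor F'),
    LocalCoh.δ_lTensor_map D.shortExactSeq₀, LocalCoh.δ_lTensor_map D.shortExactSeq₁,
    LocalCoh.δ_lTensor_map D.shortExactSeq₂]

end TensorEquiv

variable [IsNoetherianRing R]

lemma subsingleton_localCoh_tensor_syz₀ {i : ℕ} (hi : i < 5) (hi₁ : i ≠ 1) :
    Subsingleton (LocalCoh J i (F ⊗[R] D.syz₀)) := by
  have hR := D.subsingleton_localCoh_free (F ⊗[R] R) hi
  match i with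
  | 0 => exact (LocalCoh.map_zero_injective (D.shortExactSeq₀.lTensor F).injective).subsingleton
  | i + 2 =>
    exact LocalCoh.subsingleton_left (D.shortExactSeq₀.lTensor F)
      (LocalCoh.subsingleton_of_isPowTorsion i (D.isPowTorsion_tensor F)) hR

variable [Module.Free R L₁] [Module.Finite R L₁]

lemma subsingleton_localCoh_tensor_syz₁ {i : ℕ} (hi : i < 5) (hi₂ : i ≠ 2) :
    Subsingleton (LocalCoh J i (F ⊗[R] D.syz₁)) := by
  have hL := D.subsingleton_localCoh_free (F ⊗[R] L₁) hi
  match i with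
  | 0 => exact (LocalCoh.map_zero_injective (D.shortExactSeq₁.lTensor F).injective).subsingleton
  | i + 1 =>
    exact LocalCoh.subsingleton_left (D.shortExactSeq₁.lTensor F)
      (D.subsingleton_localCoh_tensor_syz₀ F (by lia) (by lia)) hL

variable [Module.Free R L₂] [Module.Finite R L₂]

lemma subsingleton_localCoh_tensor_syz₂ {i : ℕ} (hi : i < 5) (hi₃ : i ≠ 3) :
    Subsingleton (LocalCoh J i (F ⊗[R] D.syz₂)) := by
  have hL := D.subsingleton_localCoh_free (F ⊗[R] L₂) hi
  match i with
  | 0 => exact (LocalCoh.map_zero_injective (D.shortExactSeq₂.lTensor F).injective).subsingleton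
  | i + 1 =>
    exact LocalCoh.subsingleton_left (D.shortExactSeq₂.lTensor F)
      (D.subsingleton_localCoh_tensor_syz₁ F (by lia) (by lia)) hL

end DimensionShift

/-! ### The tensor square of the second syzygy module -/

section TensorSquare

/-- The map `L₁ ⊗ X → X`, `l ⊗ x ↦ d₁ l • x`. -/
def contract (X : Type u) [AddCommGroup X] [Module R X] : L₁ ⊗[R] X →ₗ[R] X :=
  (TensorProduct.lid R X).toLinearMap ∘ₗ D.d₁.rTensor X

@[simp]
lemma contract_tmul {X : Type u} [AddCommGroup X] [Module R X] (l : L₁) (x : X) :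
    D.contract X (l ⊗ₜ x) = D.d₁ l • x := by
  simp [contract]

lemma contract_eq_zero_iff {X : Type u} [AddCommGroup X] [Module R X] {w : L₁ ⊗[R] X} :
    D.contract X w = 0 ↔ D.d₁.rTensor X w = 0 :=
  (TensorProduct.lid R X).map_eq_zero_iff

lemma contract_comp_rTensor (X : Type u) [AddCommGroup X] [Module R X] :
    D.contract X ∘ₗ D.d₂.rTensor X = 0 :=
  TensorProduct.ext' fun x y => by simp

lemma contract_torsion : D.contract N = 0 :=
  TensorProduct.ext' fun x y => by simp [D.smul_eq_zero_of_mem_syz₀ ⟨x, rfl⟩]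

lemma smul_mem_range_contract {X : Type u} [AddCommGroup X] [Module R X] {g : R}
    (hg : g ∈ D.syz₀) (w : X) : g • w ∈ LinearMap.range (D.contract X) := by
  obtain ⟨y, rfl⟩ := hg
  exact ⟨y ⊗ₜ w, D.contract_tmul y w⟩

/-- The 2-cycles of the complex `L₂ ⊗ P₂ → L₁ ⊗ P₂ → P₂`. -/
abbrev cycles₂ : Submodule R (L₂ ⊗[R] D.syz₂) := LinearMap.ker (D.d₂.rTensor D.syz₂)

/-- The 1-cycles of the complex `L₂ ⊗ P₂ → L₁ ⊗ P₂ → P₂`. -/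
abbrev cycles₁ : Submodule R (L₁ ⊗[R] D.syz₂) := LinearMap.ker (D.contract D.syz₂)

/-- The 1-boundaries of the complex `L₂ ⊗ P₂ → L₁ ⊗ P₂ → P₂`. -/
abbrev boundaries₁ : Submodule R (L₁ ⊗[R] D.syz₂) := LinearMap.range (D.d₂.rTensor D.syz₂)

/-- The 0-boundaries of the complex `L₂ ⊗ P₂ → L₁ ⊗ P₂ → P₂`. -/
abbrev boundaries₀ : Submodule R D.syz₂ := LinearMap.range (D.contract D.syz₂)

lemma smul_mem_range_rTensor [Module.Projective R L₁] [Module.Flat R L₂] {A B C : Type u}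
    [AddCommGroup A] [Module R A] [AddCommGroup B] [Module R B] [AddCommGroup C] [Module R C]
    {a : A →ₗ[R] B} {b : B →ₗ[R] C} (hab : Function.Exact a b) {w : B ⊗[R] D.syz₂}
    (hw : b.rTensor D.syz₂ w = 0) {g : R} (hg : g ∈ D.syz₀) :
    g • w ∈ LinearMap.range (a.rTensor D.syz₂) := by
  have hab' : Function.Exact a b.rangeRestrict := fun y => by simpa [Subtype.ext_iff] using hab y
  refine (rTensor_exact D.syz₂ hab' b.surjective_rangeRestrict (g • w)).1 ?_
  rw [map_smul]
  refine D.smul_eq_zero_of_rTensor_eq_zero (LinearMap.range b).subtype_injective ?_ hg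
  rwa [← LinearMap.comp_apply, ← LinearMap.rTensor_comp]

/-- The map `P₂ ⊗ P₂ → ker (L₂ ⊗ P₂ → L₁ ⊗ P₂)`, whose kernel and cokernel are torsion. -/
def tensorSquareToCycles : D.syz₂ ⊗[R] D.syz₂ →ₗ[R] D.cycles₂ :=
  (D.syz₂.subtype.rTensor D.syz₂).codRestrict _ fun x => by
    rw [LinearMap.mem_ker, ← LinearMap.comp_apply, ← LinearMap.rTensor_comp,
      LinearMap.comp_ker_subtype, LinearMap.rTensor_zero, LinearMap.zero_apply]

lemma map_contract_eq_zero [Module.Free R L₁] [Module.Finite R L₁] [Module.Free R L₂]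
    [Module.Finite R L₂] : LocalCoh.map J 3 (D.contract D.syz₂) = 0 := by
  refine LinearMap.ext fun z => ?_
  obtain ⟨x, rfl⟩ := (D.tensorEquivLocalCoh L₁).surjective z
  have hx : D.d₁.rTensor N x = 0 := D.contract_eq_zero_iff.1 (by simp [contract_torsion])
  rw [contract, LocalCoh.map_comp, LinearMap.comp_apply, ← D.tensorEquivLocalCoh_naturality, hx,
    map_zero, map_zero, LinearMap.zero_apply]

variable [IsNoetherianRing R]

lemma map_bijective_of_pow_smul {A B : Type u} [AddCommGroup A] [Module R A] [AddCommGroup B]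
    [Module R B] {f : A →ₗ[R] B} (e : ℕ) (hker : ∀ a, f a = 0 → ∀ g ∈ D.syz₀, g ^ e • a = 0)
    (hcoker : ∀ b, ∀ g ∈ D.syz₀, g ^ e • b ∈ LinearMap.range f) (i : ℕ) :
    Function.Bijective (LocalCoh.map J (i + 2) f) :=
  LocalCoh.map_bijective_of_pow_smul (c := D.exponent) (e := e)
    (fun a ha g hg => hker a ha g (D.pow_le_range hg))
    (fun b g hg => hcoker b g (D.pow_le_range hg)) i

lemma map_bijective_of_smul {A B : Type u} [AddCommGroup A] [Module R A] [AddCommGroup B]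
    [Module R B] {f : A →ₗ[R] B} (hker : ∀ a, f a = 0 → ∀ g ∈ D.syz₀, g • a = 0)
    (hcoker : ∀ b, ∀ g ∈ D.syz₀, g • b ∈ LinearMap.range f) (i : ℕ) :
    Function.Bijective (LocalCoh.map J (i + 2) f) :=
  D.map_bijective_of_pow_smul 1 (by simpa using hker) (by simpa using hcoker) i

lemma map_rangeRestrict_surjective {A B : Type u} [AddCommGroup A] [Module R A] [AddCommGroup B]
    [Module R B] {f : A →ₗ[R] B} (e : ℕ)
    (hcoker : ∀ b, ∀ g ∈ D.syz₀, g ^ e • b ∈ LinearMap.range f) {i : ℕ}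
    (hf : Function.Surjective (LocalCoh.map J (i + 2) f)) :
    Function.Surjective (LocalCoh.map J (i + 2) f.rangeRestrict) := by
  have hincl : Function.Injective (LocalCoh.map J (i + 2) (LinearMap.range f).subtype) :=
    (D.map_bijective_of_pow_smul e
      (fun a ha g _ => by rw [show a = 0 from Subtype.ext ha, smul_zero])
      (fun b g hg => by simpa using hcoker b g hg) i).1
  refine Function.Surjective.of_comp_left ?_ hincl
  rwa [← LinearMap.coe_comp, ← LocalCoh.map_comp]

lemma subsingleton_localCoh_ker {A B : Type u} [AddCommGroup A] [Module R A] [AddCommGroup B]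
    [Module R B] {f : A →ₗ[R] B} (e : ℕ)
    (hcoker : ∀ b, ∀ g ∈ D.syz₀, g ^ e • b ∈ LinearMap.range f) {i : ℕ}
    (hf : Function.Surjective (LocalCoh.map J (i + 2) f))
    (_ : Subsingleton (LocalCoh J (i + 3) A)) :
    Subsingleton (LocalCoh J (i + 3) (LinearMap.ker f)) := by
  refine subsingleton_of_forall_eq 0 fun z => ?_
  obtain ⟨y, rfl⟩ := (LocalCoh.exact_δ_map J (.ker_rangeRestrict f) (i + 2) z).1
    (Subsingleton.elim _ _)
  obtain ⟨x, rfl⟩ := D.map_rangeRestrict_surjective e hcoker hf y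
  exact (LocalCoh.exact_map_δ J (.ker_rangeRestrict f) (i + 2)).apply_apply_eq_zero x

lemma map_boundaries₀_bijective (i : ℕ) :
    Function.Bijective (LocalCoh.map J (i + 2) D.boundaries₀.subtype) :=
  D.map_bijective_of_smul (fun a ha g _ => by simp [show a = 0 from Subtype.ext ha])
    (fun b g hg => by simpa using D.smul_mem_range_contract hg b) i

lemma map_tensorSquareToCycles_bijective [Module.Projective R L₁] [Module.Flat R L₂] :
    Function.Bijective (LocalCoh.map J 4 D.tensorSquareToCycles) :=
  D.map_bijective_of_smul
    (fun a (ha : D.tensorSquareToCycles a = 0) g hg => by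
      refine D.smul_eq_zero_of_rTensor_eq_zero D.syz₂.subtype_injective ?_ hg
      exact congrArg Subtype.val ha)
    (fun ⟨w, hw⟩ g hg => by
      obtain ⟨u, hu⟩ := D.smul_mem_range_rTensor D.d₂.exact_subtype_ker_map hw hg
      exact ⟨u, Subtype.ext hu⟩) 2

variable [Module.Free R L₁] [Module.Finite R L₁] [Module.Free R L₂] [Module.Finite R L₂]

lemma map_cycles₁_bijective : Function.Bijective (LocalCoh.map J 3 D.cycles₁.subtype) := by
  have h : ShortExactSeq D.cycles₁.subtype (D.contract D.syz₂).rangeRestrict :=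
    .ker_rangeRestrict _
  have hP : Subsingleton (LocalCoh J 2 D.syz₂) :=
    (LocalCoh.mapEquiv J 2 (TensorProduct.lid R D.syz₂)).toEquiv.subsingleton_congr.1
      (D.subsingleton_localCoh_tensor_syz₂ R (by lia) (by lia))
  have hB : Subsingleton (LocalCoh J 2 D.boundaries₀) :=
    (D.map_boundaries₀_bijective 0).1.subsingleton
  have hzero : LocalCoh.map J 3 (D.contract D.syz₂).rangeRestrict = 0 := by
    refine LinearMap.ext fun z => (D.map_boundaries₀_bijective 1).1 ?_
    rw [← LinearMap.comp_apply, ← LocalCoh.map_comp, LinearMap.zero_apply, map_zero]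
    exact LinearMap.congr_fun D.map_contract_eq_zero z
  exact ⟨LocalCoh.map_left_injective h hB,
    fun z => (LocalCoh.exact_map_map J h 3 z).1 (LinearMap.congr_fun hzero z)⟩

lemma map_boundaries₁_bijective :
    Function.Bijective (LocalCoh.map J 3 D.boundaries₁.subtype) := by
  have hle : D.boundaries₁ ≤ D.cycles₁ :=
    LinearMap.range_le_ker_iff.2 (D.contract_comp_rTensor D.syz₂)
  have hincl : Function.Bijective (LocalCoh.map J 3 (Submodule.inclusion hle)) :=
    D.map_bijective_of_smul
      (fun a ha g _ => by
        rw [Submodule.inclusion_injective hle (ha.trans (map_zero _).symm), smul_zero])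
      (fun ⟨w, hw⟩ g hg =>
        ⟨⟨_, D.smul_mem_range_rTensor D.exact₁ (D.contract_eq_zero_iff.1 hw) hg⟩, rfl⟩) 1
  rw [← Submodule.subtype_comp_inclusion _ _ hle, LocalCoh.map_comp]
  exact D.map_cycles₁_bijective.comp hincl

/-- The composite `L₁ ⊗ N ≃ H³(L₁ ⊗ P₂) ≃ H³(B₁) → H⁴(Z₂)`, where `B₁` and `Z₂` are the image and
the kernel of `L₂ ⊗ P₂ → L₁ ⊗ P₂`. -/
def tensorToLocalCohCycles :
    L₁ ⊗[R] N →ₗ[R] LocalCoh J 4 D.cycles₂ :=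
  LocalCoh.δ J (.ker_rangeRestrict (D.d₂.rTensor D.syz₂)) 3 ∘ₗ
    (D.tensorEquivLocalCoh L₁ ≪≫ₗ
      (LinearEquiv.ofBijective _ D.map_boundaries₁_bijective).symm).toLinearMap

lemma tensorToLocalCohCycles_surjective : Function.Surjective D.tensorToLocalCohCycles :=
  (LocalCoh.δ_surjective _ (D.subsingleton_localCoh_tensor_syz₂ L₂ (by lia) (by lia))).comp
    (LinearEquiv.surjective _)

lemma ker_tensorToLocalCohCycles :
    LinearMap.ker D.tensorToLocalCohCycles = LinearMap.range (D.d₂.rTensor N) := by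
  set E := LinearEquiv.ofBijective _ D.map_boundaries₁_bijective with hE
  have key (x : L₂ ⊗[R] N) :
      E.symm (D.tensorEquivLocalCoh L₁ (D.d₂.rTensor N x)) =
        LocalCoh.map J 3 (D.d₂.rTensor D.syz₂).rangeRestrict (D.tensorEquivLocalCoh L₂ x) := by
    rw [LinearEquiv.symm_apply_eq, D.tensorEquivLocalCoh_naturality, hE,
      LinearEquiv.ofBijective_apply, ← LinearMap.comp_apply, ← LocalCoh.map_comp]
    rfl
  ext w
  refine (LocalCoh.exact_map_δ J (.ker_rangeRestrict _) 3 _).trans ?_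
  constructor
  · rintro ⟨y, hy⟩
    obtain ⟨x, rfl⟩ := (D.tensorEquivLocalCoh L₂).surjective y
    exact ⟨x, (D.tensorEquivLocalCoh L₁).injective (E.symm.injective ((key x).trans hy))⟩
  · rintro ⟨x, rfl⟩
    exact ⟨D.tensorEquivLocalCoh L₂ x, (key x).symm⟩

/-- The isomorphism `H⁴(P₂ ⊗ P₂) ≃ coker (L₂ ⊗ N → L₁ ⊗ N)`. -/
def localCohTensorSquareEquiv :
    LocalCoh J 4 (D.syz₂ ⊗[R] D.syz₂) ≃ₗ[R] (L₁ ⊗[R] N) ⧸ LinearMap.range (D.d₂.rTensor N) :=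
  LinearEquiv.ofBijective _ D.map_tensorSquareToCycles_bijective ≪≫ₗ
    (LinearMap.quotKerEquivOfSurjective _ D.tensorToLocalCohCycles_surjective).symm ≪≫ₗ
    Submodule.quotEquivOfEq _ _ D.ker_tensorToLocalCohCycles

end TensorSquare

/-! ### The exterior square of the second syzygy module -/

section Koszul

/-- The map `L₁ ⊗ L₁ → L₁`, `a ⊗ b ↦ d₁ b • a - d₁ a • b`. -/
def koszulTensor : L₁ ⊗[R] L₁ →ₗ[R] L₁ :=
  D.contract L₁ ∘ₗ (TensorProduct.comm R L₁ L₁).toLinearMap - D.contract L₁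

@[simp]
lemma koszulTensor_tmul (a b : L₁) : D.koszulTensor (a ⊗ₜ b) = D.d₁ b • a - D.d₁ a • b := by
  simp [koszulTensor]

lemma d₁_comp_koszulTensor : D.d₁ ∘ₗ D.koszulTensor = 0 :=
  TensorProduct.ext' fun a b => by simp [mul_comm]

/-- The Koszul differential `⋀² L₁ → ker d₁`, `a ∧ b ↦ d₁ b • a - d₁ a • b`. -/
def koszul : ⋀[R]^2 L₁ →ₗ[R] D.syz₁ :=
  wedgeLift (D.koszulTensor.codRestrict D.syz₁ fun u =>
      LinearMap.mem_ker.2 (LinearMap.congr_fun D.d₁_comp_koszulTensor u))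
    fun a => Subtype.ext (by simp)

@[simp]
lemma coe_koszul_wedge (u : L₁ ⊗[R] L₁) : (D.koszul (wedge R L₁ u) : L₁) = D.koszulTensor u := by
  simp [koszul]

/-- The cycles of degree two of the Koszul complex of `d₁`. -/
abbrev koszulCycles : Submodule R (⋀[R]^2 L₁) := LinearMap.ker D.koszul

/-- The boundaries of degree one of the Koszul complex of `d₁`. -/
abbrev koszulBoundaries : Submodule R D.syz₁ := LinearMap.range D.koszul

/-- The map `L₂ ⊗ L₁ → ⋀² L₁`, `x ⊗ a ↦ d₂ x ∧ a`. -/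
def tensorToWedge : L₂ ⊗[R] L₁ →ₗ[R] ⋀[R]^2 L₁ := wedge R L₁ ∘ₗ D.d₂.rTensor L₁

/-- The map `L₂ ⊗ R → ker d₁`, `x ⊗ r ↦ r • d₂ x`. -/
def tensorToSyz₁ : L₂ ⊗[R] R →ₗ[R] D.syz₁ := D.toSyz₁ ∘ₗ (TensorProduct.rid R L₂).toLinearMap

lemma koszul_comp_tensorToWedge :
    D.koszul ∘ₗ D.tensorToWedge = D.tensorToSyz₁ ∘ₗ D.d₁.lTensor L₂ :=
  TensorProduct.ext' fun x a => Subtype.ext <| by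
    simp [tensorToWedge, tensorToSyz₁]

/-- The map `L₂ ⊗ ker d₁ → ker (⋀² L₁ → L₁)`, `x ⊗ z ↦ d₂ x ∧ z`. -/
def tensorToKoszulCycles : L₂ ⊗[R] D.syz₁ →ₗ[R] D.koszulCycles :=
  (D.tensorToWedge ∘ₗ D.syz₁.subtype.lTensor L₂).codRestrict _ fun u => by
    have h : D.d₁ ∘ₗ D.syz₁.subtype = 0 := LinearMap.comp_ker_subtype _
    rw [LinearMap.mem_ker, ← LinearMap.comp_apply, ← LinearMap.comp_assoc,
      koszul_comp_tensorToWedge, LinearMap.comp_assoc, ← LinearMap.lTensor_comp, h,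
      LinearMap.lTensor_zero, LinearMap.comp_zero, LinearMap.zero_apply]

/-- The map `L₂ ⊗ range d₁ → range (⋀² L₁ → L₁)`, `x ⊗ r ↦ r • d₂ x`. -/
def tensorToKoszulBoundaries : L₂ ⊗[R] D.syz₀ →ₗ[R] D.koszulBoundaries :=
  (D.tensorToSyz₁ ∘ₗ D.syz₀.subtype.lTensor L₂).codRestrict _ fun u => by
    obtain ⟨w, rfl⟩ := LinearMap.lTensor_surjective L₂ D.d₁.surjective_rangeRestrict u
    refine ⟨D.tensorToWedge w, ?_⟩
    rw [← LinearMap.comp_apply, koszul_comp_tensorToWedge, LinearMap.comp_apply,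
      LinearMap.comp_apply, ← LinearMap.lTensor_comp_apply]
    rfl

variable [IsNoetherianRing R] [Module.Free R L₁] [Module.Finite R L₁] [Module.Free R L₂]

lemma map_tensorToKoszulBoundaries_surjective :
    Function.Surjective (LocalCoh.map J 1 D.tensorToKoszulBoundaries) := by
  have hab : D.koszulBoundaries.subtype ∘ₗ D.tensorToKoszulBoundaries =
      D.tensorToSyz₁ ∘ₗ D.syz₀.subtype.lTensor L₂ := rfl
  obtain ⟨ψ : L₂ ⊗[R] N →ₗ[R] D.syz₁ ⧸ D.koszulBoundaries, hψ⟩ :=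
    (D.shortExactSeq₀.lTensor L₂).exists_desc (D.koszulBoundaries.mkQ ∘ₗ D.tensorToSyz₁) <| by
      rw [LinearMap.comp_assoc, ← hab, ← LinearMap.comp_assoc,
        (LinearMap.exact_subtype_mkQ _).linearMap_comp_eq_zero, LinearMap.zero_comp]
  have hψ_surj : Function.Surjective ψ := by
    refine Function.Surjective.of_comp (g := D.π.lTensor L₂) ?_
    rw [← LinearMap.coe_comp, hψ]
    exact (Submodule.mkQ_surjective _).comp
      (D.toSyz₁_surjective.comp (TensorProduct.rid R L₂).surjective)
  have hZ : Subsingleton (LocalCoh J 1 D.syz₁) :=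
    (LocalCoh.mapEquiv J 1 (TensorProduct.lid R D.syz₁)).toEquiv.subsingleton_congr.1
      (D.subsingleton_localCoh_tensor_syz₁ R (by lia) (by lia))
  exact LocalCoh.map_left_surjective_of_ladder (D.shortExactSeq₀.lTensor L₂)
    (.subtype_mkQ D.koszulBoundaries) hab hψ.symm
    (LocalCoh.map_zero_surjective (D.isPowTorsion_tensor L₂) hψ_surj) hZ

lemma map_tensorToKoszulCycles_surjective :
    Function.Surjective (LocalCoh.map J 2 (M := L₂ ⊗[R] D.syz₁) (N := D.koszulCycles)
      D.tensorToKoszulCycles) := by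
  refine LocalCoh.map_left_surjective_of_ladder (D.shortExactSeq₁.lTensor L₂)
    (.ker_rangeRestrict D.koszul) (b := D.tensorToWedge) rfl (LinearMap.ext fun w => ?_)
    D.map_tensorToKoszulBoundaries_surjective (D.subsingleton_localCoh_free _ (by lia))
  refine Subtype.ext ((LinearMap.congr_fun D.koszul_comp_tensorToWedge w).trans ?_)
  exact congrArg D.tensorToSyz₁
    (LinearMap.lTensor_comp_apply L₂ D.syz₀.subtype D.d₁.rangeRestrict w)

end Koszul

section SquareTensors

/-- The restriction to `squareTensors R L₂` of the map `L₂ ⊗ L₂ → L₂ ⊗ ker d₁`. -/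
def squareTensorsToTensor : squareTensors R L₂ →ₗ[R] L₂ ⊗[R] D.syz₁ :=
  D.toSyz₁.lTensor L₂ ∘ₗ (squareTensors R L₂).subtype

lemma coe_tensorToKoszulCycles_lTensor (u : L₂ ⊗[R] L₂) :
    (D.tensorToKoszulCycles (D.toSyz₁.lTensor L₂ u) : ⋀[R]^2 L₁) =
      wedge R L₁ (TensorProduct.map D.d₂ D.d₂ u) := by
  suffices h : D.tensorToWedge ∘ₗ D.syz₁.subtype.lTensor L₂ ∘ₗ D.toSyz₁.lTensor L₂ =
      wedge R L₁ ∘ₗ TensorProduct.map D.d₂ D.d₂ from LinearMap.congr_fun h u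
  exact TensorProduct.ext' fun x y => by simp [tensorToWedge]

/-- The inclusion of the image of `squareTensors R L₂` in the kernel of `L₂ ⊗ ker d₁ → ⋀² L₁`. -/
def squareTensorsToKer :
    LinearMap.range D.squareTensorsToTensor →ₗ[R] LinearMap.ker D.tensorToKoszulCycles :=
  Submodule.inclusion <| by
    rintro _ ⟨⟨u, hu⟩, rfl⟩
    refine LinearMap.mem_ker.2 (Subtype.ext ?_)
    refine (D.coe_tensorToKoszulCycles_lTensor u).trans ?_
    exact LinearMap.mem_ker.1 (ker_wedge.ge (map_mem_squareTensors D.d₂ hu))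

lemma lTensor_tmul_mem_range (p : D.syz₂) (x : L₂) :
    D.toSyz₁.lTensor L₂ ((p : L₂) ⊗ₜ x) ∈ LinearMap.range D.squareTensorsToTensor := by
  have hp : D.toSyz₁ p = 0 := Subtype.ext (by simp)
  have hmem : (p : L₂) ⊗ₜ[R] x + x ⊗ₜ (p : L₂) ∈ squareTensors R L₂ := by
    rw [← ker_wedge, LinearMap.mem_ker, map_add, wedge_tmul_swap, neg_add_cancel]
  exact ⟨⟨_, hmem⟩, by simp [squareTensorsToTensor, hp]⟩

lemma lTensor_rTensor_mem_range (θ : L₂ →ₗ[R] D.syz₂) (u : L₂ ⊗[R] L₂) :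
    D.toSyz₁.lTensor L₂ ((D.syz₂.subtype ∘ₗ θ).rTensor L₂ u) ∈
      LinearMap.range D.squareTensorsToTensor := by
  induction u with
  | zero => simp
  | tmul x y => exact D.lTensor_tmul_mem_range (θ x) y
  | add u v hu hv => simpa using add_mem hu hv

variable [Module.Projective R L₁]

lemma pow_smul_mem_range_squareTensorsToTensor {w : L₂ ⊗[R] D.syz₁}
    (hw : D.tensorToKoszulCycles w = 0) {g : R} (hg : g ∈ D.syz₀) :
    g ^ 2 • w ∈ LinearMap.range D.squareTensorsToTensor := by
  obtain ⟨y, rfl⟩ := hg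
  obtain ⟨s, θ, -, hθ⟩ := D.exists_homotopy y
  obtain ⟨u, rfl⟩ := LinearMap.lTensor_surjective L₂ D.toSyz₁_surjective w
  have hu : TensorProduct.map D.d₂ D.d₂ u ∈ squareTensors R L₁ := by
    rw [← ker_wedge, LinearMap.mem_ker, ← coe_tensorToKoszulCycles_lTensor, hw]
    rfl
  have hθ₀ (x : L₂) : D.toSyz₁ (θ x) = 0 := Subtype.ext (by simp)
  have hs (x : L₂) : s (D.d₂ x) = D.d₁ y • x - (θ x : L₂) := by rw [hθ, sub_sub_cancel]
  have key : D.toSyz₁.lTensor L₂ (TensorProduct.map s s (TensorProduct.map D.d₂ D.d₂ u)) =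
      D.d₁ y ^ 2 • D.toSyz₁.lTensor L₂ u -
        D.d₁ y • D.toSyz₁.lTensor L₂ ((D.syz₂.subtype ∘ₗ θ).rTensor L₂ u) := by
    refine LinearMap.congr_fun (f := D.toSyz₁.lTensor L₂ ∘ₗ TensorProduct.map s s ∘ₗ
      TensorProduct.map D.d₂ D.d₂) (g := D.d₁ y ^ 2 • D.toSyz₁.lTensor L₂ -
        D.d₁ y • (D.toSyz₁.lTensor L₂ ∘ₗ (D.syz₂.subtype ∘ₗ θ).rTensor L₂))
      (TensorProduct.ext' fun a b => ?_) u
    simp [hs, hθ₀, sub_tmul, pow_two, mul_smul, ← smul_tmul']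
  rw [sub_eq_iff_eq_add.1 key.symm]
  exact add_mem ⟨⟨_, map_mem_squareTensors s hu⟩, rfl⟩
    (Submodule.smul_mem _ _ (D.lTensor_rTensor_mem_range θ u))

lemma pow_smul_mem_range_tensorToKoszulCycles (w : D.koszulCycles) {g : R} (hg : g ∈ D.syz₀) :
    g ^ 2 • w ∈ LinearMap.range D.tensorToKoszulCycles := by
  obtain ⟨y, rfl⟩ := hg
  obtain ⟨s, -, hs, -⟩ := D.exists_homotopy y
  obtain ⟨w, hw⟩ := w
  obtain ⟨u, rfl⟩ := wedge_surjective w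
  have hu : D.koszulTensor u = 0 := by
    rw [← coe_koszul_wedge, LinearMap.mem_ker.1 hw, ZeroMemClass.coe_zero]
  refine ⟨D.toSyz₁.lTensor L₂ (TensorProduct.map s s u), Subtype.ext ?_⟩
  have key : wedge R L₁ (TensorProduct.map D.d₂ D.d₂ (TensorProduct.map s s u)) =
      D.d₁ y ^ 2 • wedge R L₁ u + D.d₁ y • wedge R L₁ (y ⊗ₜ D.koszulTensor u) := by
    refine LinearMap.congr_fun (f := wedge R L₁ ∘ₗ TensorProduct.map D.d₂ D.d₂ ∘ₗ
      TensorProduct.map s s) (g := D.d₁ y ^ 2 • wedge R L₁ +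
        D.d₁ y • (wedge R L₁ ∘ₗ TensorProduct.mk R L₁ L₁ y ∘ₗ D.koszulTensor))
      (TensorProduct.ext' fun a b => ?_) u
    simp only [LinearMap.comp_apply, TensorProduct.map_tmul, hs, sub_tmul, tmul_sub, map_sub,
      LinearMap.add_apply, LinearMap.smul_apply, TensorProduct.mk_apply, koszulTensor_tmul,
      tmul_smul, ← smul_tmul', map_smul, wedge_tmul_self, wedge_tmul_swap a y]
    module
  rw [coe_tensorToKoszulCycles_lTensor, key, hu, tmul_zero, map_zero, smul_zero, add_zero]
  rfl

end SquareTensors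

/-- The map from the kernel of `P₂ ⊗ P₂ → ⋀² P₂` to the kernel of `squareTensorsToTensor`. -/
def squareTensorsSyz₂ : squareTensors R D.syz₂ →ₗ[R] LinearMap.ker D.squareTensorsToTensor :=
  LinearMap.codRestrict _ (LinearMap.restrict (TensorProduct.map D.syz₂.subtype D.syz₂.subtype)
      fun _ => map_mem_squareTensors D.syz₂.subtype) fun u => by
    have h : D.toSyz₁ ∘ₗ D.syz₂.subtype = 0 := LinearMap.ext fun x => Subtype.ext (by simp)
    refine LinearMap.mem_ker.2 ?_
    change D.toSyz₁.lTensor L₂ (TensorProduct.map D.syz₂.subtype D.syz₂.subtype _) = 0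
    rw [← LinearMap.comp_apply, LinearMap.lTensor_comp_map, h, TensorProduct.map_zero_right,
      LinearMap.zero_apply]

@[simp]
lemma coe_squareTensorsSyz₂ (u : squareTensors R D.syz₂) :
    ((D.squareTensorsSyz₂ u : squareTensors R L₂) : L₂ ⊗[R] L₂) =
      TensorProduct.map D.syz₂.subtype D.syz₂.subtype u := rfl

section Projective

variable [Module.Projective R L₁]

lemma pow_smul_eq_zero_of_squareTensorsSyz₂_eq_zero {u : squareTensors R D.syz₂}
    (hu : D.squareTensorsSyz₂ u = 0) {g : R} (hg : g ∈ D.syz₀) : g ^ 2 • u = 0 := by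
  obtain ⟨θ, hθ⟩ := D.exists_extend_smul hg
  have hu' : TensorProduct.map D.syz₂.subtype D.syz₂.subtype (u : D.syz₂ ⊗[R] D.syz₂) = 0 := by
    rw [← coe_squareTensorsSyz₂, hu]; rfl
  refine Subtype.ext ?_
  calc g ^ 2 • (u : D.syz₂ ⊗[R] D.syz₂)
      = TensorProduct.map (θ ∘ₗ D.syz₂.subtype) (θ ∘ₗ D.syz₂.subtype) u := by
        rw [hθ, TensorProduct.map_smul_left, TensorProduct.map_smul_right, TensorProduct.map_id,
          smul_smul, ← pow_two]; rfl
    _ = 0 := by rw [TensorProduct.map_comp, LinearMap.comp_apply, hu', map_zero]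

lemma pow_smul_mem_range_squareTensorsSyz₂ (u : LinearMap.ker D.squareTensorsToTensor) {g : R}
    (hg : g ∈ D.syz₀) : g ^ 2 • u ∈ LinearMap.range D.squareTensorsSyz₂ := by
  obtain ⟨y, rfl⟩ := hg
  obtain ⟨s, θ, -, hθ⟩ := D.exists_homotopy y
  obtain ⟨⟨u, hu⟩, hu₀⟩ := u
  -- As `u` is invariant under the swap, `d₂ ⊗ 1` and `1 ⊗ d₂` both kill it, and hence
  -- `θ ⊗ θ = (g - s d₂) ⊗ (g - s d₂)` acts on it as `g ^ 2`.
  have hl : D.d₂.lTensor L₂ u = 0 := by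
    have h := congrArg (D.syz₁.subtype.lTensor L₂) (LinearMap.mem_ker.1 hu₀)
    rw [map_zero] at h
    rw [← h]
    exact LinearMap.lTensor_comp_apply L₂ D.syz₁.subtype D.toSyz₁ u
  have hr : D.d₂.rTensor L₂ u = 0 := by
    rw [← comm_eq_self_of_mem_squareTensors hu, LinearMap.rTensor_comm, hl, map_zero]
  refine ⟨⟨_, map_mem_squareTensors θ hu⟩, Subtype.ext (Subtype.ext ?_)⟩
  have key : TensorProduct.map D.syz₂.subtype D.syz₂.subtype (TensorProduct.map θ θ u) =
      D.d₁ y ^ 2 • u - D.d₁ y • s.lTensor L₂ (D.d₂.lTensor L₂ u) -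
        TensorProduct.map s (D.syz₂.subtype ∘ₗ θ) (D.d₂.rTensor L₂ u) := by
    refine LinearMap.congr_fun (f := TensorProduct.map D.syz₂.subtype D.syz₂.subtype ∘ₗ
      TensorProduct.map θ θ) (g := D.d₁ y ^ 2 • LinearMap.id -
        D.d₁ y • (s.lTensor L₂ ∘ₗ D.d₂.lTensor L₂) -
        TensorProduct.map s (D.syz₂.subtype ∘ₗ θ) ∘ₗ D.d₂.rTensor L₂)
      (TensorProduct.ext' fun a b => ?_) u
    simp only [LinearMap.comp_apply, TensorProduct.map_tmul, Submodule.subtype_apply, hθ, sub_tmul,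
      tmul_sub, tmul_smul, ← smul_tmul', LinearMap.sub_apply, LinearMap.smul_apply,
      LinearMap.id_apply, LinearMap.lTensor_tmul, LinearMap.rTensor_tmul]
    module
  rw [coe_squareTensorsSyz₂]
  refine key.trans ?_
  simp [hl, hr]

end Projective

variable [IsNoetherianRing R] [Module.Free R L₁] [Module.Finite R L₁] [Module.Free R L₂]
  [Module.Finite R L₂]

lemma subsingleton_localCoh_range_squareTensorsToTensor :
    Subsingleton (LocalCoh J 3 (LinearMap.range D.squareTensorsToTensor)) := by
  have hT : Subsingleton (LocalCoh J 3 (L₂ ⊗[R] D.syz₁)) :=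
    D.subsingleton_localCoh_tensor_syz₁ L₂ (by lia) (by lia)
  have hker : Subsingleton (LocalCoh J 3 (LinearMap.ker D.tensorToKoszulCycles)) :=
    D.subsingleton_localCoh_ker (B := D.koszulCycles) 2
      (fun w g hg => D.pow_smul_mem_range_tensorToKoszulCycles w hg)
      D.map_tensorToKoszulCycles_surjective hT
  have hbij : Function.Bijective (LocalCoh.map J 3 D.squareTensorsToKer) :=
    D.map_bijective_of_pow_smul 2
      (fun a ha g _ => by
        rw [Submodule.inclusion_injective _ (ha.trans (map_zero _).symm), smul_zero])
      (fun ⟨w, hw⟩ g hg =>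
        ⟨⟨_, D.pow_smul_mem_range_squareTensorsToTensor (LinearMap.mem_ker.1 hw) hg⟩, rfl⟩) 1
  exact hbij.1.subsingleton

lemma subsingleton_localCoh_squareTensors_syz₂ :
    Subsingleton (LocalCoh J 4 (squareTensors R D.syz₂)) := by
  have hW : Subsingleton (LocalCoh J 3 (⋀[R]^2 L₂)) := D.subsingleton_localCoh_free _ (by lia)
  have hT : Subsingleton (LocalCoh J 4 (L₂ ⊗[R] L₂)) := D.subsingleton_localCoh_free _ (by lia)
  have hS : Subsingleton (LocalCoh J 4 (squareTensors R L₂)) :=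
    LocalCoh.subsingleton_left (shortExactSeq_wedge R L₂) hW hT
  have hK : Subsingleton (LocalCoh J 4 (LinearMap.ker D.squareTensorsToTensor)) :=
    LocalCoh.subsingleton_left (.ker_rangeRestrict _)
      D.subsingleton_localCoh_range_squareTensorsToTensor hS
  exact (D.map_bijective_of_pow_smul 2
    (fun _ hu _ hg => D.pow_smul_eq_zero_of_squareTensorsSyz₂_eq_zero hu hg)
    (fun u _ hg => D.pow_smul_mem_range_squareTensorsSyz₂ u hg) 2).1.subsingleton

lemma map_wedge_syz₂_injective : Function.Injective (LocalCoh.map J 4 (wedge R D.syz₂)) :=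
  LocalCoh.map_right_injective (shortExactSeq_wedge R D.syz₂)
    D.subsingleton_localCoh_squareTensors_syz₂

end CyclicPresentation

/-! ### Nonvanishing of the cokernel -/

section Minimality

variable {R : Type*} [CommRing R] {J : Ideal R}

lemma tmul_eq_zero_of_mem_smul_top {L : Type*} [AddCommGroup L] [Module R L] {z : L}
    (hz : z ∈ J • (⊤ : Submodule R L)) : (1 : R ⧸ J) ⊗ₜ[R] z = 0 := by
  refine (quotTensorEquivQuotSMul L J).map_eq_zero_iff.1 ?_
  rw [← map_one (Ideal.Quotient.mk J), quotTensorEquivQuotSMul_mk_tmul, one_smul,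
    Submodule.Quotient.mk_eq_zero]
  exact hz

lemma finrank_eq_one_of_cyclic {L N : Type*} [AddCommGroup L] [Module R L] [Module.Free R L]
    [Module.Finite R L] [AddCommGroup N] [Module R N] [Nontrivial N] (hJ : J ≠ ⊤) {f : L →ₗ[R] N}
    (hf : Function.Surjective f) (hmin : LinearMap.ker f ≤ J • (⊤ : Submodule R L))
    (hcyc : ∃ x : N, Submodule.span R {x} = ⊤) : Module.finrank R L = 1 := by
  obtain ⟨x, hx⟩ := hcyc
  obtain ⟨e, rfl⟩ := hf x
  have : Nontrivial R := Module.nontrivial R N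
  have : Nontrivial (R ⧸ J) := Ideal.Quotient.nontrivial_iff.2 hJ
  have hspan (w : (R ⧸ J) ⊗[R] L) : ∃ c : R ⧸ J, c • (1 ⊗ₜ[R] e) = w := by
    induction w with
    | zero => exact ⟨0, zero_smul _ _⟩
    | tmul c x =>
      obtain ⟨r, hr⟩ := Submodule.mem_span_singleton.1 (hx.ge (Submodule.mem_top (x := f x)))
      have hz : x - r • e ∈ J • (⊤ : Submodule R L) := hmin (by simp [hr])
      refine ⟨c * Ideal.Quotient.mk J r, ?_⟩
      have h := tmul_eq_zero_of_mem_smul_top hz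
      rw [tmul_sub, sub_eq_zero] at h
      rw [mul_smul, ← Ideal.Quotient.algebraMap_eq, algebraMap_smul, ← tmul_smul, ← h, smul_tmul',
        smul_eq_mul, mul_one]
    | add u v hu hv =>
      obtain ⟨a, rfl⟩ := hu
      obtain ⟨b, rfl⟩ := hv
      exact ⟨a + b, add_smul a b _⟩
  have hle : Module.finrank R L ≤ 1 := by
    rw [← Module.finrank_baseChange (R := R ⧸ J)]
    exact finrank_le_one _ hspan
  have := hf.nontrivial
  exact le_antisymm hle ((Module.finrank_pos_iff_of_free R L).2 this)

lemma range_rTensor_le_smul_top {A B N : Type*} [AddCommGroup A] [Module R A] [AddCommGroup B]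
    [Module R B] [AddCommGroup N] [Module R N] {d : A →ₗ[R] B}
    (hd : LinearMap.range d ≤ J • (⊤ : Submodule R B)) :
    LinearMap.range (d.rTensor N) ≤ J • (⊤ : Submodule R (B ⊗[R] N)) := by
  rintro _ ⟨u, rfl⟩
  induction u with
  | zero => simp
  | tmul a x =>
    have h := Submodule.mem_map_of_mem (f := (TensorProduct.mk R B N).flip x) (hd ⟨a, rfl⟩)
    rw [Submodule.map_smul''] at h
    exact Submodule.smul_mono le_rfl le_top h
  | add u v hu hv => rw [map_add]; exact add_mem hu hv

lemma pow_smul_top_eq_top {M : Type*} [AddCommGroup M] [Module R M]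
    (h : J • (⊤ : Submodule R M) = ⊤) (k : ℕ) : J ^ k • (⊤ : Submodule R M) = ⊤ := by
  induction k with
  | zero => simp
  | succ k ih => rw [pow_succ, Submodule.mul_smul, h, ih]

end Minimality

namespace CyclicPresentation

variable {R : Type u} [CommRing R] {J : Ideal R} {L₁ L₂ N : Type u}
  [AddCommGroup L₁] [Module R L₁] [AddCommGroup L₂] [Module R L₂] [AddCommGroup N] [Module R N]
  (D : CyclicPresentation J L₁ L₂ N) [Nontrivial N]

include D

lemma nontrivial_L₁ : Nontrivial L₁ := by
  rw [← not_subsingleton_iff_nontrivial]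
  intro hL
  have hpow (r : R) (hr : r ∈ J ^ D.exponent) : r = 0 := by
    obtain ⟨y, rfl⟩ := D.pow_le_range hr
    rw [Subsingleton.elim y 0, map_zero]
  have hR : IsPowTorsion J R := fun m => ⟨D.exponent, fun r hr => by rw [hpow r hr, zero_smul]⟩
  have := D.depth 0 (by lia)
  have : Subsingleton R := (LocalCoh.equivOfIsPowTorsion hR).symm.toEquiv.subsingleton
  exact not_subsingleton N D.surjective.subsingleton

lemma nontrivial_coker [Module.Free R L₁] (hmin : LinearMap.range D.d₂ ≤ J • (⊤ : Submodule R L₁)) :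
    Nontrivial ((L₁ ⊗[R] N) ⧸ LinearMap.range (D.d₂.rTensor N)) := by
  have := D.nontrivial_L₁
  have := Module.FaithfullyFlat.lTensor_nontrivial R L₁ N
  rw [Submodule.Quotient.nontrivial_iff]
  intro htop
  have hJ : J • (⊤ : Submodule R (L₁ ⊗[R] N)) = ⊤ :=
    top_le_iff.1 (htop.ge.trans (range_rTensor_le_smul_top hmin))
  refine bot_ne_top (α := Submodule R (L₁ ⊗[R] N)) ?_
  rw [← pow_smul_top_eq_top hJ D.exponent, eq_comm, eq_bot_iff, Submodule.smul_le]
  exact fun r hr w _ => D.smul_tensor_eq_zero_of_mem_syz₀ (D.pow_le_range hr) w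

end CyclicPresentation

theorem wedge2_second_syzygy_nonvanishing_cyclic_general {R : Type u} [CommRing R]
    [IsNoetherianRing R] {J : Ideal R} {L₁ L₂ N : Type u} [AddCommGroup L₁] [Module R L₁]
    [Module.Free R L₁] [Module.Finite R L₁] [AddCommGroup L₂] [Module R L₂] [Module.Free R L₂]
    [Module.Finite R L₂] [AddCommGroup N] [Module R N] [Nontrivial N]
    (D : CyclicPresentation J L₁ L₂ N)
    (hmin : LinearMap.range D.d₂ ≤ J • (⊤ : Submodule R L₁)) :
    Nonempty ((localCohomology J 4).obj (ModuleCat.of R (D.syz₂ ⊗[R] D.syz₂)) ≅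
      ModuleCat.of R ((L₁ ⊗[R] N) ⧸ LinearMap.range (D.d₂.rTensor N))) ∧
    Nontrivial ((L₁ ⊗[R] N) ⧸ LinearMap.range (D.d₂.rTensor N)) ∧
    ¬ Subsingleton ((localCohomology J 4).obj (ModuleCat.of R (⋀[R]^2 D.syz₂))) := by
  have hcoker := D.nontrivial_coker hmin
  have hsquare : Nontrivial (LocalCoh J 4 (D.syz₂ ⊗[R] D.syz₂)) :=
    D.localCohTensorSquareEquiv.toEquiv.nontrivial
  have hwedge : Nontrivial (LocalCoh J 4 (⋀[R]^2 D.syz₂)) := D.map_wedge_syz₂_injective.nontrivial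
  refine ⟨⟨LinearEquiv.toModuleIso ((LocalCoh.equivLocalCohomology J _ 3).symm ≪≫ₗ
    D.localCohTensorSquareEquiv)⟩, hcoker, fun h => ?_⟩
  exact not_subsingleton _ (LocalCoh.equivLocalCohomology J (⋀[R]^2 D.syz₂) 3).toEquiv.subsingleton

section PolynomialRing

variable {K : Type} [Field K] {n : ℕ} {N : Type} [AddCommGroup N] [Module (PolyS K n) N]

lemma irrel_ne_top : irrel K n ≠ ⊤ := idealOfVars_ne_top K (n + 1)

namespace MinimalResolution

variable (res : MinimalResolution K n N)

include res in
lemma nonempty_equiv [Nontrivial N] (hcyc : ∃ x : N, Submodule.span (PolyS K n) {x} = ⊤) :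
    Nonempty (PolyS K n ≃ₗ[PolyS K n] res.L 0) := by
  have := res.free 0
  have := res.finite 0
  exact Module.nonempty_linearEquiv_of_finrank_eq_one
    (finrank_eq_one_of_cyclic irrel_ne_top res.aug_surjective res.minimal0 hcyc)

lemma range_symm_comp_d (ε : PolyS K n ≃ₗ[PolyS K n] res.L 0) :
    LinearMap.range (ε.symm.toLinearMap ∘ₗ res.d 0) =
      LinearMap.ker (res.aug ∘ₗ ε.toLinearMap) := by
  rw [LinearMap.range_comp, res.exact0, LinearMap.ker_comp]
  exact Submodule.map_equiv_eq_comap_symm ε.symm _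

/-- The start of a minimal resolution whose zeroth module is identified with `S`. -/
def cyclicPresentation (ε : PolyS K n ≃ₗ[PolyS K n] res.L 0) (hn : 4 ≤ n) {c : ℕ}
    (hc : irrel K n ^ c ≤ Module.annihilator (PolyS K n) N) :
    CyclicPresentation (irrel K n) (res.L 1) (res.L 2) N where
  d₁ := ε.symm.toLinearMap ∘ₗ res.d 0
  d₂ := res.d 1
  π := res.aug ∘ₗ ε.toLinearMap
  exact₁ := LinearMap.exact_iff.2 ((LinearEquiv.ker_comp _ _).trans (res.exact 0).symm)
  exact₀ := LinearMap.exact_iff.2 (res.range_symm_comp_d ε).symm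
  surjective := res.aug_surjective.comp ε.surjective
  exponent := c
  pow_le_range r hr := by
    rw [res.range_symm_comp_d ε, LinearMap.mem_ker, ← mul_one r, ← smul_eq_mul, map_smul]
    exact Module.mem_annihilator.1 (hc hr) _
  depth i hi := LocalCoh.subsingleton_mvPolynomial K (n + 1) (by lia)

end MinimalResolution

end PolynomialRing

/-- For a nonzero cyclic graded `S`-module `N` of finite length on
`ℙⁿ` (`n ≥ 4`) with second syzygy bundle `P₂ = P₂(N)`, one has
`H³_*(P₂ ⊗ P₂) ≅ coker(L₂ ⊗ N → L₁ ⊗ N) ≠ 0`, and consequently `H³_*(Λ²P₂) ≠ 0`. -/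
theorem wedge2_second_syzygy_nonvanishing_cyclic
    (K : Type) [Field K] (n : ℕ) (hn : 4 ≤ n)
    (N : Type) [AddCommGroup N] [Module (PolyS K n) N]
    (hN : Nontrivial N)
    (hNfl : IsGradedFiniteLength K n N)
    (hcyc : ∃ x : N, Submodule.span (PolyS K n) {x} = ⊤)
    (res : MinimalResolution K n N) :
    Nonempty (Hstar K n 3 (TensorProduct (PolyS K n)
        ↥(LinearMap.range (res.d 2)) ↥(LinearMap.range (res.d 2))) ≅
      ModuleCat.of (PolyS K n) ((TensorProduct (PolyS K n) (res.L 1) N) ⧸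
        LinearMap.range (LinearMap.rTensor N (res.d 1)))) ∧
    Nontrivial ((TensorProduct (PolyS K n) (res.L 1) N) ⧸
      LinearMap.range (LinearMap.rTensor N (res.d 1))) ∧
    ¬ Subsingleton (Hstar K n 3 (⋀[PolyS K n]^2 ↥(LinearMap.range (res.d 2)))) := by
  obtain ⟨-, c, hc⟩ := hNfl
  have := res.free
  have := res.finite
  obtain ⟨ε⟩ := res.nonempty_equiv hcyc
  rw [res.exact 1]
  exact wedge2_second_syzygy_nonvanishing_cyclic_general (res.cyclicPresentation ε hn hc)
    (res.minimal 1)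
end
end

section
/- Let N be a nonzero finite length graded S-module that is NOT cyclic, with syzygy bundles P_1(N), P_2(N) on P^n (n ≥ 5). Then H^2_*(S²P_1(N)) ≠ 0 and H^4_*(Λ²P_2(N)) ≠ 0. -/
/-!
Background setup (the paper works on projective space `ℙⁿ` over a field `K`):
we encode a coherent sheaf on `ℙⁿ_K` by a module `M` over the homogeneous coordinate
ring `S = K[X₀,…,Xₙ]` (namely `M = Γ_*` of the sheaf), and the intermediate cohomology
module `H^i_*(F) = ⊕_ν H^i(ℙⁿ, F(ν))` (for `i ≥ 1`) by the local cohomology module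
`H^{i+1}_𝔪(M)` at the irrelevant maximal ideal `𝔪 = (X₀,…,Xₙ)`, to which it is
canonically isomorphic.
-/

open CategoryTheory TensorProduct

noncomputable section

variable (K : Type) [Field K] (n : ℕ)

/-!
Write `Pₖ` for the `k`-th syzygy module and `𝔪` for the irrelevant ideal. Local cohomology in
positive degree does not see modules killed by a power of `𝔪`, so it is enough to have complexes
that are exact after inverting each `y ∈ 𝔪`, where `N` dies and `0 → P₁ → L₁ → L₀ → 0` splits.
Chasing vanishing along `0 → Λ²P₂ → Λ²L₂ → L₂ ⊗ P₁ → S²P₁ → 0` shows that if `H⁵(Λ²P₂) = 0` then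
`H³(S²P₁) = 0`. If `H³(S²P₁) = 0`, chasing along
`0 → S²P₁ → S²L₁ → (L₁ ⊗ L₀) × S²L₀ → L₀ ⊗ L₀ → 0` ends with a surjective last map.
This contradicts minimality: a `2 × 2` minor kills the symmetric tensors and maps the image
of `L₁ ⊗ L₀` into `𝔪`, but takes the value `1` once `L₀` has rank at least two.
-/

section ExtComparison

open Abelian Opposite Limits

lemma homologyUnop_inv_naturality {V : Type*} [Category* V] [Abelian V] {ι : Type*}
    {c : ComplexShape ι} {K L : HomologicalComplex Vᵒᵖ c} (ψ : K ⟶ L) (i : ι) :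
    (HomologicalComplex.homologyMap ψ i).unop ≫ (K.homologyUnop i).inv =
      (L.homologyUnop i).inv ≫
        HomologicalComplex.homologyMap ((HomologicalComplex.unopFunctor _ _).map ψ.op) i := by
  have naturality := congrArg Quiver.Hom.unop (HomologicalComplex.homologyOp_hom_naturality
    ((HomologicalComplex.unopFunctor _ _).map ψ.op) i)
  refine (Iso.comp_inv_eq (K.homologyUnop i)).2 (Eq.trans ?_ (Category.assoc _ _ _).symm)
  exact (Iso.eq_inv_comp (L.homologyUnop i)).2 naturality

universe u v w

variable {R : Type v} [Ring R] {C : Type u} [Category.{v} C] [Abelian C] [Linear R C]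

/-- The map of cochain complexes `Hom(K, Y) → Hom(L, Y)` induced by a map `L → K` of chain
complexes. -/
abbrev linearYonedaMap (R : Type v) [Ring R] [Linear R C] {K L : ChainComplex C ℕ} (φ : L ⟶ K)
    (Y : C) : K.linearYonedaObj R Y ⟶ L.linearYonedaObj R Y :=
  (HomologicalComplex.unopFunctor _ _).map
    ((((linearYoneda R C).obj Y).rightOp.mapHomologicalComplex _).map φ).op

lemma isoExt_hom_naturality [EnoughProjectives C] {X X' : C} (g : X' ⟶ X)
    (P : ProjectiveResolution X) (P' : ProjectiveResolution X') (φ : P'.complex ⟶ P.complex)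
    (comm : φ.f 0 ≫ P.π.f 0 = P'.π.f 0 ≫ g) (i : ℕ) (Y : C) :
    ((_root_.Ext R C i).map g.op).app Y ≫ (P'.isoExt (R := R) i Y).hom =
      (P.isoExt (R := R) i Y).hom ≫
        HomologicalComplex.homologyMap (linearYonedaMap R φ Y) i := by
  let F := ((linearYoneda R C).obj Y).rightOp
  have derived := congrArg Quiver.Hom.unop
    (ProjectiveResolution.isoLeftDerivedObj_inv_naturality g P' P φ comm F i)
  have unop_map := homologyUnop_inv_naturality ((F.mapHomologicalComplex _).map φ) i
  rw [unop_comp, unop_comp] at derived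
  refine (Category.assoc _ _ _).symm.trans (Eq.trans ?_ (Category.assoc _ _ _).symm)
  refine Eq.trans ?_ (congrArg (fun z ↦ (P.isoLeftDerivedObj F i).inv.unop ≫ z) unop_map)
  exact Eq.trans (congrArg (fun z ↦ z ≫ _) derived) (Category.assoc _ _ _)

lemma exists_homology_class_of_cocycle {K : CochainComplex (ModuleCat.{v} R) ℕ} {p : ℕ}
    {x : K.X (p + 1)} (hx : K.d (p + 1) (p + 2) x = 0) :
    ∃ z : K.homology (p + 1), ∀ {L : CochainComplex (ModuleCat.{v} R) ℕ} (ψ : K ⟶ L),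
      HomologicalComplex.homologyMap ψ (p + 1) z = 0 →
        ∃ y : L.X p, L.d p (p + 1) y = ψ.f (p + 1) x := by
  let c := K.cyclesMk x (p + 2) (by simp) hx
  have hc : K.iCycles (p + 1) c = x := K.i_cyclesMk x (p + 2) (by simp) hx
  refine ⟨K.homologyπ (p + 1) c, fun {L} ψ h ↦ ?_⟩
  have boundary : L.homologyπ (p + 1) (HomologicalComplex.cyclesMap ψ (p + 1) c) = 0 := by
    rw [← ModuleCat.comp_apply, ← HomologicalComplex.homologyπ_naturality, ModuleCat.comp_apply, h]
  have exact : (ShortComplex.mk (L.toCycles p (p + 1)) (L.homologyπ (p + 1)) (by simp)).Exact :=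
    ShortComplex.exact_of_g_is_cokernel _ (L.homologyIsCokernel p (p + 1) (by simp))
  obtain ⟨y, hy⟩ := (ShortComplex.moduleCat_exact_iff _).1 exact _ boundary
  refine ⟨y, ?_⟩
  calc L.d p (p + 1) y = L.iCycles (p + 1) (L.toCycles p (p + 1) y) := by
        rw [← ModuleCat.comp_apply, HomologicalComplex.toCycles_i]
    _ = L.iCycles (p + 1) (HomologicalComplex.cyclesMap ψ (p + 1) c) := congrArg _ hy
    _ = ψ.f (p + 1) (K.iCycles (p + 1) c) := by
        rw [← ModuleCat.comp_apply, HomologicalComplex.cyclesMap_i, ModuleCat.comp_apply]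
    _ = ψ.f (p + 1) x := congrArg _ hc

-- The derived functor `_root_.Ext` used by `localCohomology` and `Abelian.Ext` are compared only
-- through cocycles on a projective resolution: transporting vanishing needs no natural isomorphism.
lemma exists_derived_ext_class [EnoughProjectives C] [HasExt.{w} C] {X Y : C} {p : ℕ}
    (e : Abelian.Ext X Y (p + 1)) :
    ∃ z : ((_root_.Ext R C (p + 1)).obj (op X)).obj Y, ∀ {X' : C} (g : X' ⟶ X),
      ((_root_.Ext R C (p + 1)).map g.op).app Y z = 0 →
        (Ext.mk₀ g).comp e (zero_add (p + 1)) = 0 := by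
  let P (X : C) := projectiveResolution X
  obtain ⟨f, hf, rfl⟩ := (P X).extMk_surjective e (p + 2) rfl
  obtain ⟨c, hc⟩ := exists_homology_class_of_cocycle (R := R)
    (K := (P X).complex.linearYonedaObj R Y) hf
  refine ⟨((P X).isoExt (R := R) (p + 1) Y).inv c, fun {X'} g hz ↦ ?_⟩
  let φ := ProjectiveResolution.lift g (P X') (P X)
  have hφ : φ.f 0 ≫ (P X).π.f 0 = (P X').π.f 0 ≫ g :=
    ProjectiveResolution.lift_commutes_zero _ _ _
  have class_eq_zero : HomologicalComplex.homologyMap (linearYonedaMap R φ Y) (p + 1) c = 0 := by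
    have naturality := (Iso.eq_inv_comp _).2
      (isoExt_hom_naturality (R := R) g (P X) (P X') φ hφ (p + 1) Y).symm
    rw [naturality, ModuleCat.comp_apply, ModuleCat.comp_apply, hz, map_zero]
  obtain ⟨h, hh⟩ := hc _ class_eq_zero
  rw [ProjectiveResolution.mk₀_comp_extMk f (p + 2) rfl hf (g := g) ⟨φ, by simpa using hφ⟩,
    ProjectiveResolution.extMk_eq_zero_iff _ _ _ _ _ p rfl]
  exact ⟨h, hh⟩

end ExtComparison

section ExtRestriction

open Abelian LinearMap

universe u

lemma mk₀_comp_extClass_comp_eq_zero {C : Type*} [Category* C] [Abelian C] [HasExt C]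
    {S T : ShortComplex C} (hS : S.ShortExact) (hT : T.ShortExact) (φ : S ⟶ T) {M : C} {i : ℕ}
    {e : Ext T.X₁ M i} (he : (Ext.mk₀ φ.τ₁).comp e (zero_add i) = 0) :
    (Ext.mk₀ φ.τ₃).comp (hT.extClass.comp e (Nat.add_comm 1 i)) (zero_add (i + 1)) = 0 := by
  rw [← Ext.comp_assoc (a₁₂ := 1) _ _ _ (zero_add 1) (Nat.add_comm 1 i) (by omega),
    ← ShortComplex.ShortExact.extClass_naturality hS hT φ,
    Ext.comp_assoc (a₂₃ := i) _ _ _ (add_zero 1) (zero_add i) (by omega), he, Ext.comp_zero]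

lemma exists_extClass_comp_eq {C : Type*} [Category* C] [Abelian C] [HasExt C]
    {S : ShortComplex C} (hS : S.ShortExact) [Projective S.X₂] {M : C} {i : ℕ}
    (e : Ext S.X₃ M (i + 1)) : ∃ e' : Ext S.X₁ M i, hS.extClass.comp e' (Nat.add_comm 1 i) = e :=
  Ext.contravariant_sequence_exact₃ hS _ e (Ext.eq_zero_of_projective _) (Nat.add_comm 1 i)

lemma range_smul_top_le_ker {R M N : Type*} [CommRing R] [AddCommGroup M] [Module R M]
    [AddCommGroup N] [Module R N] {J : Ideal R} (hJ : J ≤ Module.annihilator R N)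
    (f : M →ₗ[R] N) : J • (⊤ : Submodule R M) ≤ LinearMap.ker f :=
  Submodule.smul_le.2 fun r hr x _ ↦ by
    rw [LinearMap.mem_ker, map_smul, Module.mem_annihilator.1 (hJ hr)]

lemma mk₀_comp_extClass_comp_eq_zero_of_range_le {R : Type u} [CommRing R]
    {F' F X Y : Type u} [AddCommGroup F'] [Module R F'] [AddCommGroup F] [Module R F]
    [AddCommGroup X] [Module R X] [AddCommGroup Y] [Module R Y] {M : ModuleCat.{u} R} {i : ℕ}
    {q : F →ₗ[R] X} (hq : Function.Surjective q) (j : F' →ₗ[R] F)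
    (e : Ext (ModuleCat.of R (ker q)) M i)
    (he : (Ext.mk₀ (ModuleCat.ofHom
      (j.restrict (p := ker (q ∘ₗ j)) (q := ker q) fun _ hx ↦ hx))).comp e (zero_add i) = 0)
    (u : Y →ₗ[R] X) (hu : range u ≤ range (q ∘ₗ j)) :
    (Ext.mk₀ (ModuleCat.ofHom u)).comp
      ((shortExact_shortComplexKer hq).extClass.comp e (Nat.add_comm 1 i))
      (zero_add (i + 1)) = 0 := by
  let S := ModuleCat.shortComplexOfCompEqZero (ker (q ∘ₗ j)).subtype (q ∘ₗ j).rangeRestrict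
    (by ext x; exact x.2)
  have hS : S.ShortExact := ModuleCat.shortComplex_shortExact S
    (fun x ↦ ⟨fun hx ↦ ⟨⟨x, congrArg Subtype.val hx⟩, rfl⟩,
      by rintro ⟨y, rfl⟩; exact Subtype.ext y.2⟩)
    (Submodule.injective_subtype _) (q ∘ₗ j).surjective_rangeRestrict
  let φ : S ⟶ shortComplexKer q :=
    { τ₁ := ModuleCat.ofHom (j.restrict (p := ker (q ∘ₗ j)) (q := ker q) fun _ hx ↦ hx)
      τ₂ := ModuleCat.ofHom j
      τ₃ := ModuleCat.ofHom (range (q ∘ₗ j)).subtype }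
  have factor : ModuleCat.ofHom u =
      ModuleCat.ofHom (codRestrict _ u fun y ↦ hu ⟨y, rfl⟩) ≫ φ.τ₃ := rfl
  rw [factor, ← Ext.mk₀_comp_mk₀_assoc, mk₀_comp_extClass_comp_eq_zero hS _ φ he, Ext.comp_zero]

-- Dimension shifting along a presentation of `X`, with the Artin–Rees lemma controlling the kernel.
lemma exists_pow_restrict_ext_eq_zero {R : Type u} [CommRing R] [IsNoetherianRing R] {I : Ideal R}
    {i : ℕ} {M : Type u} [AddCommGroup M] [Module R M] {c : ℕ}
    (hc : I ^ c ≤ Module.annihilator R M) {X : Type u} [AddCommGroup X]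
    [Module R X] [Module.Finite R X] (e : Ext (ModuleCat.of R X) (ModuleCat.of R M) i) :
    ∃ s : ℕ, ∀ {Y : Type u} [AddCommGroup Y] [Module R Y] (u : Y →ₗ[R] X),
      range u ≤ I ^ s • ⊤ → (Ext.mk₀ (ModuleCat.ofHom u)).comp e (zero_add i) = 0 := by
  induction i generalizing X with
  | zero =>
    obtain ⟨f, rfl⟩ := (Ext.mk₀_bijective _ _).2 e
    refine ⟨c, fun u hu ↦ ?_⟩
    rw [Ext.mk₀_comp_mk₀, Ext.mk₀_eq_zero_iff]
    exact ModuleCat.hom_ext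
      (range_le_ker_iff.1 (hu.trans (range_smul_top_le_ker hc f.hom)))
  | succ i ih =>
    obtain ⟨m, q, hq⟩ := Module.Finite.exists_fin' R X
    have : Projective (shortComplexKer q).X₂ :=
      (IsProjective.iff_projective (R := R) _).1 inferInstance
    obtain ⟨e, rfl⟩ := exists_extClass_comp_eq (shortExact_shortComplexKer hq) e
    obtain ⟨s, hs⟩ := ih (X := ker q) e
    obtain ⟨k, hk⟩ := Ideal.exists_pow_inf_eq_pow_smul I (ker q)
    refine ⟨s + k, fun u hu ↦ ?_⟩
    let j := (I ^ (s + k) • (⊤ : Submodule R (Fin m → R))).subtype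
    refine mk₀_comp_extClass_comp_eq_zero_of_range_le hq j e (hs _ ?_) u ?_
    · rintro _ ⟨⟨x, hx⟩, rfl⟩
      rw [Submodule.mem_smul_top_iff]
      have := hk (s + k) (by omega) ▸ Submodule.mem_inf.2 ⟨x.2, hx⟩
      rw [Nat.add_sub_cancel] at this
      exact Submodule.smul_mono le_rfl inf_le_right this
    · rwa [range_comp, Submodule.range_subtype, Submodule.map_smul'', Submodule.map_top,
        range_eq_top.2 hq]

end ExtRestriction

section LocalCohomology

open Abelian Opposite Limits

universe u

variable {R : Type u} [CommRing R]

/-- The transition map `R/I^t' → R/I^t` of the inverse system defining local cohomology. -/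
def quotientPowMap (I : Ideal R) {t t' : ℕ} (h : t ≤ t') :
    ModuleCat.of R (R ⧸ I ^ t') ⟶ ModuleCat.of R (R ⧸ I ^ t) :=
  ModuleCat.ofHom <| Submodule.mapQ _ _ LinearMap.id (Ideal.pow_le_pow_right h)

/-- Vanishing of the local cohomology `Hⁱ_I(M) = colimₜ Extⁱ(R/Iᵗ, M)`, spelled out as the
vanishing of every class at a finite stage of the colimit. Using `Abelian.Ext` rather than the
derived functor in `localCohomology` gives access to the long exact sequences. -/
def LocalCohomologyVanishes (I : Ideal R) (i : ℕ) (M : Type u) [AddCommGroup M] [Module R M] :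
    Prop :=
  ∀ (t : ℕ) (e : Abelian.Ext (ModuleCat.of R (R ⧸ I ^ t)) (ModuleCat.of R M) i),
    ∃ (t' : ℕ) (h : t ≤ t'), (Ext.mk₀ (quotientPowMap I h)).comp e (zero_add i) = 0

lemma localCohomologyVanishes_of_subsingleton (I : Ideal R) (p : ℕ) (M : Type u) [AddCommGroup M]
    [Module R M] (h : Subsingleton ((localCohomology I (p + 1)).obj (ModuleCat.of R M))) :
    LocalCohomologyVanishes I (p + 1) M := by
  intro t e
  obtain ⟨z, hz⟩ := exists_derived_ext_class (R := R) e
  let D := localCohomology.diagram (localCohomology.idealPowersDiagram I) (p + 1)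
  let ev := (evaluation (ModuleCat.{u} R) (ModuleCat.{u} R)).obj (ModuleCat.of R M)
  have : HasColimit D := localCohomology.hasColimitDiagram _ _
  have isColimit : IsColimit (ev.mapCocone (colimit.cocone D)) :=
    isColimitOfPreserves ev (colimit.isColimit D)
  have : PreservesFilteredColimitsOfSize.{0, 0} (forget (ModuleCat.{u} R)) :=
    preservesFilteredColimitsOfSize_shrink.{0, u, 0, u} _
  obtain ⟨k, a, b, hab⟩ := Concrete.isColimit_exists_of_rep_eq (D ⋙ ev) isColimit
    (i := op (op t)) (j := op (op t)) z 0 (h.elim _ _)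
  exact ⟨k.unop.unop, a.unop.unop.down.down, hz _ (Eq.trans hab (map_zero _))⟩

lemma quotientPowMap_comp (I : Ideal R) {t t' t'' : ℕ} (h : t ≤ t') (h' : t' ≤ t'') :
    quotientPowMap I h' ≫ quotientPowMap I h = quotientPowMap I (h.trans h') := by
  ext
  rfl

namespace LocalCohomologyVanishes

variable {I : Ideal R} {A B C : Type u} [AddCommGroup A] [Module R A] [AddCommGroup B]
  [Module R B] [AddCommGroup C] [Module R C] {f : A →ₗ[R] B} {g : B →ₗ[R] C} {i : ℕ}

lemma of_retract (s : A →ₗ[R] B) (r : B →ₗ[R] A) (hrs : r ∘ₗ s = LinearMap.id)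
    (hB : LocalCohomologyVanishes I i B) : LocalCohomologyVanishes I i A := by
  intro t e
  obtain ⟨t', h, h0⟩ := hB t (e.comp (Ext.mk₀ (ModuleCat.ofHom s)) (add_zero _))
  refine ⟨t', h, ?_⟩
  have he : e = (e.comp (Ext.mk₀ (ModuleCat.ofHom s)) (add_zero _)).comp
      (Ext.mk₀ (ModuleCat.ofHom r)) (add_zero _) := by
    rw [Ext.comp_assoc_of_third_deg_zero, Ext.mk₀_comp_mk₀, ← ModuleCat.ofHom_comp, hrs]
    exact (Ext.comp_mk₀_id e).symm
  rw [he, ← Ext.comp_assoc_of_third_deg_zero, h0, Ext.zero_comp]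

lemma of_equiv (s : A ≃ₗ[R] B) (hB : LocalCohomologyVanishes I i B) :
    LocalCohomologyVanishes I i A :=
  of_retract s.toLinearMap s.symm.toLinearMap (by ext; simp) hB

lemma of_extension (hf : Function.Injective f) (hfg : Function.Exact f g)
    (hg : Function.Surjective g) (hA : LocalCohomologyVanishes I i A)
    (hC : LocalCohomologyVanishes I i C) : LocalCohomologyVanishes I i B := by
  intro t e
  have hS := ModuleCat.shortComplex_shortExact
    (ModuleCat.shortComplexOfCompEqZero f g hfg.linearMap_comp_eq_zero) hfg hf hg
  obtain ⟨t', h, h0⟩ := hC t (e.comp (Ext.mk₀ (ModuleCat.ofHom g)) (add_zero i))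
  rw [← Ext.comp_assoc_of_third_deg_zero] at h0
  obtain ⟨a, ha⟩ := Ext.covariant_sequence_exact₂ _ hS _ h0
  obtain ⟨t'', h', h1⟩ := hA t' a
  refine ⟨t'', h.trans h', ?_⟩
  rw [← quotientPowMap_comp I h h', ← Ext.mk₀_comp_mk₀_assoc, ← ha,
    ← Ext.comp_assoc_of_third_deg_zero, h1, Ext.zero_comp]

lemma of_quotient (hf : Function.Injective f) (hfg : Function.Exact f g)
    (hg : Function.Surjective g) (hA : LocalCohomologyVanishes I (i + 1) A)
    (hB : LocalCohomologyVanishes I i B) : LocalCohomologyVanishes I i C := by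
  intro t e
  have hS := ModuleCat.shortComplex_shortExact
    (ModuleCat.shortComplexOfCompEqZero f g hfg.linearMap_comp_eq_zero) hfg hf hg
  obtain ⟨t', h, h0⟩ := hA t (e.comp hS.extClass rfl)
  rw [← Ext.comp_assoc _ _ _ (zero_add i) rfl (by omega)] at h0
  obtain ⟨b, hb⟩ := Ext.covariant_sequence_exact₃ _ hS _ rfl h0
  obtain ⟨t'', h', h1⟩ := hB t' b
  refine ⟨t'', h.trans h', ?_⟩
  rw [← quotientPowMap_comp I h h', ← Ext.mk₀_comp_mk₀_assoc, ← hb,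
    ← Ext.comp_assoc_of_third_deg_zero, h1, Ext.zero_comp]

lemma of_sub (hf : Function.Injective f) (hfg : Function.Exact f g)
    (hg : Function.Surjective g) (hB : LocalCohomologyVanishes I (i + 1) B)
    (hC : LocalCohomologyVanishes I i C) : LocalCohomologyVanishes I (i + 1) A := by
  intro t e
  have hS := ModuleCat.shortComplex_shortExact
    (ModuleCat.shortComplexOfCompEqZero f g hfg.linearMap_comp_eq_zero) hfg hf hg
  obtain ⟨t', h, h0⟩ := hB t (e.comp (Ext.mk₀ (ModuleCat.ofHom f)) (add_zero _))
  rw [← Ext.comp_assoc_of_third_deg_zero] at h0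
  obtain ⟨c, hc⟩ := Ext.covariant_sequence_exact₁ _ hS _ h0 rfl
  obtain ⟨t'', h', h1⟩ := hC t' c
  refine ⟨t'', h.trans h', ?_⟩
  rw [← quotientPowMap_comp I h h', ← Ext.mk₀_comp_mk₀_assoc, ← hc,
    ← Ext.comp_assoc _ _ _ (zero_add i) rfl (by omega), h1, Ext.zero_comp]

lemma range_of_ker (g : B →ₗ[R] C)
    (hker : LocalCohomologyVanishes I (i + 1) (LinearMap.ker g))
    (hB : LocalCohomologyVanishes I i B) :
    LocalCohomologyVanishes I i (LinearMap.range g) :=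
  of_quotient (f := (LinearMap.ker g).subtype) (g := g.rangeRestrict)
    (Submodule.injective_subtype _)
    (LinearMap.exact_iff.2 (by rw [LinearMap.ker_rangeRestrict, Submodule.range_subtype]))
    g.surjective_rangeRestrict hker hB

lemma ker_of_range (hB : LocalCohomologyVanishes I (i + 1) B)
    (hrange : LocalCohomologyVanishes I i (LinearMap.range g)) :
    LocalCohomologyVanishes I (i + 1) (LinearMap.ker g) :=
  of_sub (f := (LinearMap.ker g).subtype) (g := g.rangeRestrict) (Submodule.injective_subtype _)
    (LinearMap.exact_iff.2 (by rw [LinearMap.ker_rangeRestrict, Submodule.range_subtype]))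
    g.surjective_rangeRestrict hB hrange

lemma prod (hA : LocalCohomologyVanishes I i A) (hB : LocalCohomologyVanishes I i B) :
    LocalCohomologyVanishes I i (A × B) :=
  of_extension LinearMap.inl_injective .inl_snd LinearMap.snd_surjective hA hB

lemma of_subsingleton [Subsingleton A] : LocalCohomologyVanishes I i A := fun t e ↦
  ⟨t, le_rfl, by
    rw [← Ext.comp_mk₀_id e,
      (ModuleCat.isZero_of_subsingleton (ModuleCat.of R A)).eq_of_src (𝟙 _) 0,
      Ext.mk₀_zero, Ext.comp_zero, Ext.comp_zero]⟩

lemma pi_fin {m : ℕ} (hA : LocalCohomologyVanishes I i A) :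
    LocalCohomologyVanishes I i (Fin m → A) := by
  induction m with
  | zero => exact of_subsingleton
  | succ m ih =>
    exact of_equiv (Fin.consLinearEquiv R fun _ : Fin (m + 1) ↦ A).symm (hA.prod ih)

lemma tensorProduct_of_free (F : Type u) [AddCommGroup F] [Module R F] [Module.Free R F]
    [Module.Finite R F] (hA : LocalCohomologyVanishes I i A) :
    LocalCohomologyVanishes I i (F ⊗[R] A) := by
  let b := (Module.Free.chooseBasis R F).reindex (Finite.equivFin _)
  exact of_equiv ((TensorProduct.equivFinsuppOfBasisLeft b).trans
    (Finsupp.linearEquivFunOnFinite R A _)) hA.pi_fin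

lemma of_free (F : Type u) [AddCommGroup F] [Module R F] [Module.Free R F]
    [Module.Finite R F] (hR : LocalCohomologyVanishes I i R) : LocalCohomologyVanishes I i F :=
  of_equiv (TensorProduct.rid R F).symm (hR.tensorProduct_of_free F)

lemma of_isWeaklyRegular [IsNoetherianRing R] [Module.Finite R A]
    (hIA : I • (⊤ : Submodule R A) < ⊤) {rs : List R} (mem : ∀ r ∈ rs, r ∈ I)
    (reg : RingTheory.Sequence.IsWeaklyRegular A rs) (hi : i < rs.length) :
    LocalCohomologyVanishes I i A := by
  intro t e
  have support_le : Module.support R (ModuleCat.of R (R ⧸ I ^ t)) ⊆ PrimeSpectrum.zeroLocus I := by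
    rw [Module.support_eq_zeroLocus, PrimeSpectrum.zeroLocus_subset_zeroLocus_iff]
    refine fun x hx ↦ ⟨t, ?_⟩
    rw [Ideal.annihilator_quotient]
    exact Ideal.pow_mem_pow hx t
  have ofList_lt : Ideal.ofList rs • (⊤ : Submodule R A) < ⊤ :=
    (Submodule.smul_mono_left (Ideal.span_le.2 mem)).trans_lt hIA
  have := ModuleCat.subsingleton_ext_of_exists_isRegular I (ModuleCat.of R (R ⧸ I ^ t)) support_le
    (ModuleCat.of R A) hIA rs mem ⟨reg, ofList_lt.ne'⟩ i hi
  exact ⟨t, le_rfl, by rw [Subsingleton.elim e 0, Ext.comp_zero]⟩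

lemma subsingleton_of_zero [IsNoetherianRing R] (hA : LocalCohomologyVanishes I 0 A)
    (hI : I ≤ (Module.annihilator R A).radical) : Subsingleton A := by
  obtain ⟨c, hc⟩ := Ideal.exists_pow_le_of_le_radical_of_fg hI (IsNoetherian.noetherian I)
  refine subsingleton_of_forall_eq 0 fun a ↦ ?_
  let f : (R ⧸ I ^ c) →ₗ[R] A := Submodule.liftQ _ (LinearMap.toSpanSingleton R A a) fun r hr ↦
    Module.mem_annihilator.1 (hc hr) a
  obtain ⟨t, h, hf⟩ := hA c (Ext.mk₀ (ModuleCat.ofHom f))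
  rw [Ext.mk₀_comp_mk₀, Ext.mk₀_eq_zero_iff] at hf
  have := congrArg (fun g : ModuleCat.of R (R ⧸ I ^ t) ⟶ ModuleCat.of R A ↦
    g.hom (Submodule.Quotient.mk 1)) hf
  exact (one_smul R a).symm.trans this

open LinearMap in
lemma of_le_radical_annihilator [IsNoetherianRing R]
    (hI : I ≤ (Module.annihilator R A).radical) (i : ℕ) :
    LocalCohomologyVanishes I (i + 1) A := by
  obtain ⟨c, hc⟩ := Ideal.exists_pow_le_of_le_radical_of_fg hI (IsNoetherian.noetherian I)
  intro t e
  have hq (t : ℕ) := shortExact_shortComplexKer (I ^ t).mkQ_surjective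
  have : Projective (shortComplexKer (I ^ t).mkQ).X₂ :=
    (IsProjective.iff_projective (R := R) R).1 inferInstance
  obtain ⟨e, rfl⟩ := exists_extClass_comp_eq (hq t) e
  obtain ⟨s, hs⟩ := exists_pow_restrict_ext_eq_zero hc (X := LinearMap.ker (I ^ t).mkQ) e
  have hle : I ^ (t + s) ≤ I ^ t := Ideal.pow_le_pow_right (by omega)
  let a : LinearMap.ker (I ^ (t + s)).mkQ →ₗ[R] LinearMap.ker (I ^ t).mkQ :=
    Submodule.inclusion (by simpa only [Submodule.ker_mkQ] using hle)
  have range_a : range a ≤ I ^ s • ⊤ := by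
    rintro _ ⟨⟨x, hx⟩, rfl⟩
    have mem : x ∈ I ^ s • LinearMap.ker (I ^ t).mkQ := by
      simpa only [Submodule.ker_mkQ, smul_eq_mul, ← pow_add, add_comm] using hx
    exact (Submodule.mem_smul_top_iff _ _ _).2 mem
  let φ : shortComplexKer (I ^ (t + s)).mkQ ⟶ shortComplexKer (I ^ t).mkQ :=
    { τ₁ := ModuleCat.ofHom a
      τ₂ := 𝟙 _
      τ₃ := quotientPowMap I (Nat.le_add_right t s) }
  exact ⟨t + s, Nat.le_add_right t s,
    mk₀_comp_extClass_comp_eq_zero (hq (t + s)) (hq t) φ (hs a range_a)⟩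

end LocalCohomologyVanishes

open LinearMap

/-- Exactness of `A → B → C` at `B` away from the zero locus of `I`: every element of `I` has
a power carrying the kernel of `g` into the range of `f`. -/
def ExactOff (I : Ideal R) {A B C : Type*} [AddCommGroup A] [Module R A] [AddCommGroup B]
    [Module R B] [AddCommGroup C] [Module R C] (f : A →ₗ[R] B) (g : B →ₗ[R] C) : Prop :=
  range f ≤ ker g ∧ ∀ y ∈ I, ∃ k : ℕ, ∀ b, g b = 0 → y ^ k • b ∈ range f

namespace ExactOff

variable {I : Ideal R} {A B C : Type u} [AddCommGroup A] [Module R A]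
  [AddCommGroup B] [Module R B] [AddCommGroup C] [Module R C] {f : A →ₗ[R] B} {g : B →ₗ[R] C}
  {i : ℕ}

lemma le_radical_annihilator_quotient (h : ExactOff I f g) : I ≤ (Module.annihilator R
    (ker g ⧸ range (Submodule.inclusion h.1))).radical := by
  intro y hy
  obtain ⟨k, hk⟩ := h.2 y hy
  refine ⟨k, Module.mem_annihilator.2 fun z ↦ ?_⟩
  obtain ⟨⟨b, hb⟩, rfl⟩ := Submodule.mkQ_surjective _ z
  exact (Submodule.Quotient.mk_eq_zero _).2 ⟨⟨y ^ k • b, hk b hb⟩, rfl⟩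

variable [IsNoetherianRing R]

lemma localCohomologyVanishes_ker (h : ExactOff I f g)
    (hf : LocalCohomologyVanishes I (i + 1) (range f)) :
    LocalCohomologyVanishes I (i + 1) (ker g) :=
  .of_extension (Submodule.inclusion_injective h.1) (exact_map_mkQ_range _)
    (Submodule.mkQ_surjective _) hf (.of_le_radical_annihilator h.le_radical_annihilator_quotient i)

lemma localCohomologyVanishes_range (h : ExactOff I f g)
    (hf : LocalCohomologyVanishes I (i + 1) (range f)) (hB : LocalCohomologyVanishes I i B) :
    LocalCohomologyVanishes I i (range g) :=
  .range_of_ker g (h.localCohomologyVanishes_ker hf) hB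

lemma localCohomologyVanishes_range_of_zero (h : ExactOff I (0 : A →ₗ[R] B) g)
    (hB : LocalCohomologyVanishes I i B) : LocalCohomologyVanishes I i (range g) := by
  refine h.localCohomologyVanishes_range ?_ hB
  rw [range_zero]
  exact .of_subsingleton

lemma range_eq_top (h : ExactOff I f (0 : B →ₗ[R] C))
    (hf : LocalCohomologyVanishes I 1 (range f)) (hB : LocalCohomologyVanishes I 0 B) :
    range f = ⊤ := by
  have := (LocalCohomologyVanishes.of_quotient (Submodule.injective_subtype (range f))
    (exact_subtype_mkQ _) (Submodule.mkQ_surjective _) hf hB).subsingleton_of_zero fun y hy ↦ by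
      obtain ⟨k, hk⟩ := h.2 y hy
      refine ⟨k, Module.mem_annihilator.2 fun z ↦ ?_⟩
      obtain ⟨b, rfl⟩ := Submodule.mkQ_surjective _ z
      exact (Submodule.Quotient.mk_eq_zero _).2 (hk b rfl)
  exact Submodule.Quotient.subsingleton_iff.1 this

end ExactOff

lemma LocalCohomologyVanishes.ker_of_resolution [IsNoetherianRing R] {I : Ideal R} {i : ℕ}
    {L₁ L₀ N : Type u} [AddCommGroup L₁] [Module R L₁] [AddCommGroup L₀] [Module R L₀]
    [AddCommGroup N] [Module R N] {d : L₁ →ₗ[R] L₀} {aug : L₀ →ₗ[R] N}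
    (hd : range d = ker aug) (hN : I ≤ (Module.annihilator R N).radical)
    (h₀ : LocalCohomologyVanishes I (i + 2) L₀) (h₁ : LocalCohomologyVanishes I (i + 3) L₁) :
    LocalCohomologyVanishes I (i + 3) (LinearMap.ker d) := by
  have le_annihilator := (range aug).subtype.annihilator_le_of_injective
    (Submodule.injective_subtype _)
  refine .ker_of_range h₁ ?_
  rw [hd]
  exact .ker_of_range h₀
    (.of_le_radical_annihilator (hN.trans (Ideal.radical_mono le_annihilator)) i)

end LocalCohomology

lemma isWeaklyRegular_ofFn_X_s10 (R : Type*) [CommRing R] (m : ℕ) :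
    RingTheory.Sequence.IsWeaklyRegular (MvPolynomial (Fin m) R)
      (List.ofFn (MvPolynomial.X : Fin m → MvPolynomial (Fin m) R)) := by
  refine ⟨fun k hk ↦ ?_⟩
  have hkm : k < m := by simpa only [List.length_ofFn] using hk
  have ofList_take : Ideal.ofList ((List.ofFn MvPolynomial.X).take k) =
      Ideal.span (MvPolynomial.X '' {j : Fin m | j < ⟨k, hkm⟩} :
        Set (MvPolynomial (Fin m) R)) := by
    refine congrArg Ideal.span (Set.ext fun p ↦ ?_)
    simp only [List.mem_take_iff_getElem, List.getElem_ofFn, List.length_ofFn, Set.mem_image,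
      Set.mem_ofPred_eq]
    constructor
    · rintro ⟨j, hj, hp⟩
      exact ⟨⟨j, by omega⟩, Fin.mk_lt_mk.2 (by omega), hp⟩
    · rintro ⟨j, hj, hp⟩
      exact ⟨j, lt_min (Fin.lt_def.1 hj) j.2, hp⟩
  rw [isSMulRegular_quotient_iff_mem_of_smul_mem, smul_eq_mul, Ideal.mul_top, ofList_take]
  intro p hp
  rw [List.getElem_ofFn, smul_eq_mul, MvPolynomial.mem_ideal_span_X_image] at hp
  refine MvPolynomial.mem_ideal_span_X_image.2 fun e he ↦ ?_
  obtain ⟨j, hj, hne⟩ := hp (e + Finsupp.single ⟨k, hkm⟩ 1)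
    (by rwa [MvPolynomial.mem_support_iff, mul_comm, MvPolynomial.coeff_mul_X,
      ← MvPolynomial.mem_support_iff])
  have hjk : j ≠ ⟨k, hkm⟩ := Fin.ne_of_lt hj
  exact ⟨j, hj, by simpa only [Finsupp.add_apply, Finsupp.single_eq_of_ne hjk, add_zero] using hne⟩

section ScaledSplitting

open LinearMap

variable {R A B C : Type*} [CommRing R] [AddCommGroup A] [Module R A] [AddCommGroup B]
  [Module R B] [AddCommGroup C] [Module R C]

/-- A splitting of the complex `A → B → C` after inverting `y`, with denominators cleared: the
section and the retraction are defined over `R`, at the price of a factor `y` in each identity. -/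
structure ScaledSplitting (y : R) (i : A →ₗ[R] B) (p : B →ₗ[R] C) where
  sec : C →ₗ[R] B
  retr : B →ₗ[R] A
  proj_incl (a : A) : p (i a) = 0
  proj_sec (c : C) : p (sec c) = y • c
  retr_incl (a : A) : retr (i a) = y • a
  smul_eq (b : B) : y • b = i (retr b) + sec (p b)

/-- The complex `0 → A → B → C → 0` splits on each principal open set away from the zero locus of
`I`. This passes to the complexes built from its tensor, symmetric and exterior squares. -/
def SplitOff (I : Ideal R) (i : A →ₗ[R] B) (p : B →ₗ[R] C) : Prop :=
  ∀ y ∈ I, ∃ k : ℕ, Nonempty (ScaledSplitting (y ^ k) i p)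

variable {i : A →ₗ[R] B} {p : B →ₗ[R] C}

lemma ScaledSplitting.nonempty_of_section {y : R} (hi : Function.Injective i)
    (hip : Function.Exact i p) (s : C →ₗ[R] B) (hs : ∀ c, p (s c) = y • c) :
    Nonempty (ScaledSplitting y i p) := by
  have mem (b : B) : (y • LinearMap.id - s ∘ₗ p : B →ₗ[R] B) b ∈ range i := by
    refine (hip _).1 ?_
    simp only [LinearMap.sub_apply, LinearMap.smul_apply, LinearMap.id_apply,
      LinearMap.comp_apply, map_sub, map_smul, hs, sub_self]
  let r : B →ₗ[R] A := (LinearEquiv.ofInjective i hi).symm ∘ₗ codRestrict _ _ mem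
  have hr (b : B) : i (r b) = y • b - s (p b) :=
    congrArg Subtype.val ((LinearEquiv.ofInjective i hi).apply_symm_apply ⟨_, mem b⟩)
  exact ⟨{
    sec := s
    retr := r
    proj_incl := hip.apply_apply_eq_zero
    proj_sec := hs
    retr_incl := fun a ↦ hi (by
      rw [hr, hip.apply_apply_eq_zero, map_zero, sub_zero, map_smul])
    smul_eq := fun b ↦ by rw [hr, sub_add_cancel] }⟩

namespace SplitOff

variable {I : Ideal R}

lemma of_exact {N : Type*} [AddCommGroup N] [Module R N] [Module.Projective R C]
    {aug : C →ₗ[R] N} (hi : Function.Injective i) (hip : Function.Exact i p)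
    (hp : Function.Exact p aug) (hN : I ≤ (Module.annihilator R N).radical) :
    SplitOff I i p := by
  intro y hy
  obtain ⟨k, hk⟩ := hN hy
  have mem (c : C) : (y ^ k • LinearMap.id : C →ₗ[R] C) c ∈ range p := by
    refine (hp _).1 ?_
    rw [LinearMap.smul_apply, map_smul, Module.mem_annihilator.1 hk]
  obtain ⟨s, hs⟩ := Module.projective_lifting_property p.rangeRestrict
    (codRestrict _ _ mem) p.surjective_rangeRestrict
  exact ⟨k, ScaledSplitting.nonempty_of_section hi hip s fun c ↦
    congrArg Subtype.val (LinearMap.congr_fun hs c)⟩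

lemma of_surjective (h : SplitOff I i p) [Module.Projective R B] {A' B' : Type*}
    [AddCommGroup A'] [Module R A'] [AddCommGroup B'] [Module R B'] {j : A' →ₗ[R] B'}
    {q : B' →ₗ[R] A} (hj : Function.Injective j) (hjq : Function.Exact j q)
    (hq : Function.Surjective q) : SplitOff I j q := by
  intro y hy
  obtain ⟨k, ⟨σ⟩⟩ := h y hy
  obtain ⟨t, ht⟩ := Module.projective_lifting_property q σ.retr hq
  exact ⟨k, ScaledSplitting.nonempty_of_section hj hjq (t ∘ₗ i) fun a ↦
    (LinearMap.congr_fun ht (i a)).trans (σ.retr_incl a)⟩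

lemma proj_comp_incl (h : SplitOff I i p) : p ∘ₗ i = 0 := by
  obtain ⟨_, ⟨σ⟩⟩ := h 0 I.zero_mem
  exact LinearMap.ext σ.proj_incl

lemma exactOff (h : SplitOff I i p) {X Y Z : Type*} [AddCommGroup X] [Module R X]
    [AddCommGroup Y] [Module R Y] [AddCommGroup Z] [Module R Z] {f : X →ₗ[R] Y} {g : Y →ₗ[R] Z}
    (hgf : g ∘ₗ f = 0) {m : ℕ}
    (hfg : ∀ y, ScaledSplitting y i p → ∀ b, g b = 0 → y ^ m • b ∈ range f) :
    ExactOff I f g := by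
  refine ⟨range_le_ker_iff.2 hgf, fun y hy ↦ ?_⟩
  obtain ⟨k, ⟨σ⟩⟩ := h y hy
  exact ⟨k * m, fun b hb ↦ pow_mul y k m ▸ hfg _ σ b hb⟩

end SplitOff

end ScaledSplitting

section SymmetricSquare

open LinearMap

variable {R : Type} [CommRing R] {M P : Type} [AddCommGroup M] [Module R M]
  [AddCommGroup P] [Module R P]

/-- The projection `M ⊗ M → S²M`. -/
def symSqMk (R : Type) [CommRing R] (M : Type) [AddCommGroup M] [Module R M] :
    M ⊗[R] M →ₗ[R] Sym2M R M :=
  Submodule.mkQ (Submodule.span R {z : M ⊗[R] M | ∃ x y : M, z = x ⊗ₜ[R] y - y ⊗ₜ[R] x})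

lemma symSqMk_surjective : Function.Surjective (symSqMk R M) := Submodule.mkQ_surjective _

lemma ker_symSqMk : ker (symSqMk R M) =
    Submodule.span R {z : M ⊗[R] M | ∃ x y : M, z = x ⊗ₜ[R] y - y ⊗ₜ[R] x} :=
  Submodule.ker_mkQ _

lemma symSqMk_tmul_comm (x y : M) : symSqMk R M (x ⊗ₜ y) = symSqMk R M (y ⊗ₜ x) := by
  rw [← sub_eq_zero, ← map_sub, ← mem_ker, ker_symSqMk]
  exact Submodule.subset_span ⟨x, y, rfl⟩

/-- The universal property of `S²M`: the linear map out of it induced by a symmetric one. -/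
def symSqLift (β : M ⊗[R] M →ₗ[R] P) (hβ : ∀ x y, β (x ⊗ₜ y) = β (y ⊗ₜ x)) :
    Sym2M R M →ₗ[R] P :=
  Submodule.liftQ _ β <| Submodule.span_le.2 <| by
    rintro _ ⟨x, y, rfl⟩
    rw [SetLike.mem_coe, mem_ker, map_sub, hβ, sub_self]

lemma symSq_hom_ext {f g : Sym2M R M →ₗ[R] P}
    (h : ∀ x y, f (symSqMk R M (x ⊗ₜ y)) = g (symSqMk R M (x ⊗ₜ y))) : f = g :=
  (cancel_right symSqMk_surjective).1 (TensorProduct.ext' h)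

/-- The product `b ⊗ c ↦ f b · g c` with values in the symmetric square. -/
def symSqMul {B C : Type} [AddCommGroup B] [Module R B] [AddCommGroup C] [Module R C]
    (f : B →ₗ[R] P) (g : C →ₗ[R] P) : B ⊗[R] C →ₗ[R] Sym2M R P :=
  symSqMk R P ∘ₗ TensorProduct.map f g

lemma symSqMul_tmul {B C : Type} [AddCommGroup B] [Module R B] [AddCommGroup C]
    [Module R C] (f : B →ₗ[R] P) (g : C →ₗ[R] P) (b : B) (c : C) :
    symSqMul f g (b ⊗ₜ c) = symSqMk R P (f b ⊗ₜ g c) := rfl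

/-- Functoriality of the symmetric square. -/
def symSqMap (f : M →ₗ[R] P) : Sym2M R M →ₗ[R] Sym2M R P :=
  symSqLift (symSqMul f f) fun _ _ ↦ symSqMk_tmul_comm _ _

lemma symSqMap_symSqMk (f : M →ₗ[R] P) (x y : M) :
    symSqMap f (symSqMk R M (x ⊗ₜ y)) = symSqMk R P (f x ⊗ₜ f y) := rfl

/-- The symmetrization `xy ↦ x ⊗ y + y ⊗ x`. -/
def symmetrize (R : Type) [CommRing R] (M : Type) [AddCommGroup M] [Module R M] :
    Sym2M R M →ₗ[R] M ⊗[R] M :=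
  symSqLift (LinearMap.id + (TensorProduct.comm R M M).toLinearMap) fun x y ↦
    add_comm (x ⊗ₜ[R] y) (y ⊗ₜ[R] x)

lemma symmetrize_symSqMk (x y : M) :
    symmetrize R M (symSqMk R M (x ⊗ₜ y)) = x ⊗ₜ y + y ⊗ₜ x := rfl

/-- The differential `bb' ↦ b ⊗ pb' + b' ⊗ pb`. -/
def symSqDiff (p : M →ₗ[R] P) : Sym2M R M →ₗ[R] M ⊗[R] P :=
  p.lTensor M ∘ₗ symmetrize R M

lemma symSqDiff_symSqMk (p : M →ₗ[R] P) (b b' : M) :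
    symSqDiff p (symSqMk R M (b ⊗ₜ b')) = b ⊗ₜ p b' + b' ⊗ₜ p b := by
  rw [symSqDiff, LinearMap.comp_apply, symmetrize_symSqMk, map_add, lTensor_tmul, lTensor_tmul]

lemma exists_section_symSqMk (R M : Type) [CommRing R] [AddCommGroup M] [Module R M]
    [Module.Free R M] : ∃ s : Sym2M R M →ₗ[R] M ⊗[R] M, symSqMk R M ∘ₗ s = LinearMap.id := by
  let b := Module.Free.chooseBasis R M
  classical
  let := linearOrderOfSTO (WellOrderingRel (α := Module.Free.ChooseBasisIndex R M))
  let β : M →ₗ[R] M →ₗ[R] M ⊗[R] M :=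
    b.constr R fun i ↦ b.constr R fun j ↦ b (min i j) ⊗ₜ b (max i j)
  have hβ (i j) : β (b i) (b j) = b (min i j) ⊗ₜ b (max i j) := by
    simp only [β, Module.Basis.constr_basis]
  have symm : β = β.flip := b.ext fun i ↦ b.ext fun j ↦ by
    rw [LinearMap.flip_apply, hβ, hβ, min_comm, max_comm]
  have lifts : β.compr₂ (symSqMk R M) = (TensorProduct.mk R M M).compr₂ (symSqMk R M) :=
    b.ext fun i ↦ b.ext fun j ↦ by
      rw [compr₂_apply, compr₂_apply, hβ, TensorProduct.mk_apply]
      rcases le_total i j with h | h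
      · rw [min_eq_left h, max_eq_right h]
      · rw [min_eq_right h, max_eq_left h, symSqMk_tmul_comm]
  exact ⟨symSqLift (TensorProduct.lift β) (LinearMap.congr_fun₂ symm),
    symSq_hom_ext (LinearMap.congr_fun₂ lifts)⟩

lemma LocalCohomologyVanishes.symSq_of_free {I : Ideal R} {i : ℕ} [Module.Free R M]
    [Module.Finite R M] (hR : LocalCohomologyVanishes I i R) :
    LocalCohomologyVanishes I i (Sym2M R M) := by
  obtain ⟨s, hs⟩ := exists_section_symSqMk R M
  exact .of_retract s _ hs (hR.of_free (M ⊗[R] M))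

end SymmetricSquare

section ExteriorSquare

open LinearMap

variable {R M P : Type*} [CommRing R] [AddCommGroup M] [Module R M] [AddCommGroup P] [Module R P]

/-- The exterior product `M × M → Λ²M` as a bilinear map. -/
def extSqMk (R : Type*) [CommRing R] (M : Type*) [AddCommGroup M] [Module R M] :
    M →ₗ[R] M →ₗ[R] ⋀[R]^2 M :=
  LinearMap.mk₂ R (fun x y ↦ exteriorPower.ιMulti R 2 ![x, y])
    (fun x x' y ↦ by ext; simp [ExteriorAlgebra.ιMulti_apply, add_mul])
    (fun c x y ↦ by ext; simp [ExteriorAlgebra.ιMulti_apply])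
    (fun x y y' ↦ by ext; simp [ExteriorAlgebra.ιMulti_apply, mul_add])
    (fun c x y ↦ by ext; simp [ExteriorAlgebra.ιMulti_apply])

lemma extSqMk_apply (x y : M) : extSqMk R M x y = exteriorPower.ιMulti R 2 ![x, y] := rfl

lemma extSqMk_isAlt : (extSqMk R M).IsAlt := fun x ↦
  AlternatingMap.map_eq_zero_of_eq (exteriorPower.ιMulti R 2) ![x, x] (i := 0) (j := 1) rfl
    (by decide)

lemma extSq_hom_ext {f g : ⋀[R]^2 M →ₗ[R] P}
    (h : ∀ x y, f (extSqMk R M x y) = g (extSqMk R M x y)) : f = g :=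
  exteriorPower.linearMap_ext <| AlternatingMap.ext fun v ↦ by
    have : v = ![v 0, v 1] := List.ofFn_inj.1 rfl
    rw [this]
    exact h _ _

lemma map_extSqMk (f : M →ₗ[R] P) (x y : M) :
    exteriorPower.map 2 f (extSqMk R M x y) = extSqMk R P (f x) (f y) := by
  rw [extSqMk_apply, extSqMk_apply, exteriorPower.map_apply_ιMulti]
  congr 1
  ext i
  fin_cases i <;> rfl

/-- The product `b ⊗ c ↦ f b ∧ g c` with values in the exterior square. -/
def extSqMul {B C : Type*} [AddCommGroup B] [Module R B] [AddCommGroup C] [Module R C]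
    (f : B →ₗ[R] P) (g : C →ₗ[R] P) : B ⊗[R] C →ₗ[R] ⋀[R]^2 P :=
  TensorProduct.lift ((extSqMk R P).compl₁₂ f g)

lemma extSqMul_tmul {B C : Type*} [AddCommGroup B] [Module R B] [AddCommGroup C]
    [Module R C] (f : B →ₗ[R] P) (g : C →ₗ[R] P) (b : B) (c : C) :
    extSqMul f g (b ⊗ₜ c) = extSqMk R P (f b) (g c) := rfl

/-- The universal property of `Λ²M`: the linear map out of it induced by an alternating one. -/
def extSqLift (β : M →ₗ[R] M →ₗ[R] P) (hβ : β.IsAlt) : ⋀[R]^2 M →ₗ[R] P :=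
  exteriorPower.alternatingMapLinearEquiv
    { toFun := fun v ↦ β (v 0) (v 1)
      map_update_add' := by
        intro _ v i x y
        fin_cases i <;> simp
      map_update_smul' := by
        intro _ v i c x
        fin_cases i <;> simp
      map_eq_zero_of_eq' := by
        intro v i j hv hij
        have : v 0 = v 1 := by fin_cases i <;> fin_cases j <;> simp_all
        exact this ▸ hβ (v 0) }

lemma extSqLift_extSqMk (β : M →ₗ[R] M →ₗ[R] P) (hβ : β.IsAlt) (x y : M) :
    extSqLift β hβ (extSqMk R M x y) = β x y := by
  rw [extSqLift, extSqMk_apply, exteriorPower.alternatingMapLinearEquiv_apply_ιMulti]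
  rfl

/-- The antisymmetrization `x ∧ y ↦ x ⊗ y - y ⊗ x`. -/
def antisymmetrize (R : Type*) [CommRing R] (M : Type*) [AddCommGroup M] [Module R M] :
    ⋀[R]^2 M →ₗ[R] M ⊗[R] M :=
  extSqLift (TensorProduct.mk R M M - (TensorProduct.mk R M M).flip) fun x ↦ sub_self (x ⊗ₜ[R] x)

lemma antisymmetrize_extSqMk (x y : M) :
    antisymmetrize R M (extSqMk R M x y) = x ⊗ₜ y - y ⊗ₜ x :=
  extSqLift_extSqMk _ _ x y

/-- The differential `b ∧ b' ↦ b ⊗ pb' - b' ⊗ pb`. -/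
def extSqDiff (p : M →ₗ[R] P) : ⋀[R]^2 M →ₗ[R] M ⊗[R] P :=
  p.lTensor M ∘ₗ antisymmetrize R M

lemma extSqDiff_extSqMk (p : M →ₗ[R] P) (b b' : M) :
    extSqDiff p (extSqMk R M b b') = b ⊗ₜ p b' - b' ⊗ₜ p b := by
  rw [extSqDiff, LinearMap.comp_apply, antisymmetrize_extSqMk, map_sub, lTensor_tmul, lTensor_tmul]

lemma exists_retraction_antisymmetrize (R M : Type*) [CommRing R] [AddCommGroup M] [Module R M]
    [Module.Free R M] :
    ∃ r : M ⊗[R] M →ₗ[R] ⋀[R]^2 M, r ∘ₗ antisymmetrize R M = LinearMap.id := by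
  let b := Module.Free.chooseBasis R M
  classical
  let := linearOrderOfSTO (WellOrderingRel (α := Module.Free.ChooseBasisIndex R M))
  let β : M →ₗ[R] M →ₗ[R] ⋀[R]^2 M :=
    b.constr R fun i ↦ b.constr R fun j ↦ if i < j then extSqMk R M (b i) (b j) else 0
  have hβ (i j) : β (b i) (b j) = if i < j then extSqMk R M (b i) (b j) else 0 := by
    simp only [β, Module.Basis.constr_basis]
  have eq_add_flip : β = extSqMk R M + β.flip := b.ext fun i ↦ b.ext fun j ↦ by
    rw [LinearMap.add_apply, LinearMap.add_apply, LinearMap.flip_apply, hβ, hβ]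
    rcases lt_trichotomy i j with h | rfl | h
    · rw [if_pos h, if_neg h.not_gt, add_zero]
    · rw [extSqMk_isAlt, zero_add]
    · rw [if_pos h, if_neg h.not_gt, ← extSqMk_isAlt.neg, neg_add_cancel]
  refine ⟨TensorProduct.lift β, extSq_hom_ext fun x y ↦ ?_⟩
  rw [LinearMap.comp_apply, antisymmetrize_extSqMk, map_sub, sub_eq_iff_eq_add]
  exact LinearMap.congr_fun₂ eq_add_flip x y

lemma antisymmetrize_injective [Module.Free R M] : Function.Injective (antisymmetrize R M) := by
  obtain ⟨r, hr⟩ := exists_retraction_antisymmetrize R M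
  exact Function.LeftInverse.injective (LinearMap.congr_fun hr)

lemma LocalCohomologyVanishes.extSq_of_free {R M : Type} [CommRing R] [AddCommGroup M]
    [Module R M] {I : Ideal R} {i : ℕ} [Module.Free R M] [Module.Finite R M]
    (hR : LocalCohomologyVanishes I i R) : LocalCohomologyVanishes I i (⋀[R]^2 M) := by
  obtain ⟨r, hr⟩ := exists_retraction_antisymmetrize R M
  exact .of_retract _ r hr (hR.of_free (M ⊗[R] M))

lemma range_antisymmetrize (R M : Type) [CommRing R] [AddCommGroup M] [Module R M] :
    range (antisymmetrize R M) = ker (symSqMk R M) := by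
  refine le_antisymm (range_le_ker_iff.2 (extSq_hom_ext fun x y ↦ ?_)) ?_
  · rw [LinearMap.comp_apply, antisymmetrize_extSqMk, map_sub, symSqMk_tmul_comm, sub_self,
      LinearMap.zero_apply]
  · rw [ker_symSqMk, Submodule.span_le]
    rintro _ ⟨x, y, rfl⟩
    exact ⟨extSqMk R M x y, antisymmetrize_extSqMk x y⟩

end ExteriorSquare

section SymmetricComplex

open LinearMap

variable {R A B C : Type} [CommRing R] [AddCommGroup A] [Module R A] [AddCommGroup B]
  [Module R B] [AddCommGroup C] [Module R C]

lemma symSqMap_symSqMap_of_smul {f : A →ₗ[R] B} {g : B →ₗ[R] A} {y : R}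
    (h : ∀ a, g (f a) = y • a) (w : Sym2M R A) : symSqMap g (symSqMap f w) = y ^ 2 • w := by
  suffices symSqMap g ∘ₗ symSqMap f = y ^ 2 • LinearMap.id from LinearMap.congr_fun this w
  refine symSq_hom_ext fun a a' ↦ ?_
  simp only [LinearMap.comp_apply, symSqMap_symSqMk, h, LinearMap.smul_apply, LinearMap.id_apply,
    smul_tmul_smul, map_smul, pow_two]

lemma rTensor_symSqDiff (p : B →ₗ[R] C) (w : Sym2M R B) :
    p.rTensor C (symSqDiff p w) = symmetrize R C (symSqMap p w) := by
  suffices p.rTensor C ∘ₗ symSqDiff p = symmetrize R C ∘ₗ symSqMap p from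
    LinearMap.congr_fun this w
  refine symSq_hom_ext fun b b' ↦ ?_
  simp only [LinearMap.comp_apply, symSqDiff_symSqMk, map_add, rTensor_tmul, symSqMap_symSqMk,
    symmetrize_symSqMk]

/-- The middle differential of the complex `0 → S²A → S²B → (B ⊗ C) × S²C → C ⊗ C` attached to
`p : B → C` with kernel `A`. It replaces `0 → S²A → S²B → B ⊗ C → Λ²C`: enlarging the last two
terms by `S²C` makes the second half exact without dividing by `2`. -/
def symSqProdDiff (p : B →ₗ[R] C) : Sym2M R B →ₗ[R] (B ⊗[R] C) × Sym2M R C :=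
  (symSqDiff p).prod (symSqMap p)

/-- The last differential of the complex `0 → S²A → S²B → (B ⊗ C) × S²C → C ⊗ C`. -/
def tensorProdDiff (p : B →ₗ[R] C) : (B ⊗[R] C) × Sym2M R C →ₗ[R] C ⊗[R] C :=
  p.rTensor C ∘ₗ fst R _ _ - symmetrize R C ∘ₗ snd R _ _

lemma tensorProdDiff_apply (p : B →ₗ[R] C) (z : (B ⊗[R] C) × Sym2M R C) :
    tensorProdDiff p z = p.rTensor C z.1 - symmetrize R C z.2 := rfl

lemma tensorProdDiff_eq_zero_iff {p : B →ₗ[R] C} {z : (B ⊗[R] C) × Sym2M R C} :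
    tensorProdDiff p z = 0 ↔ p.rTensor C z.1 = symmetrize R C z.2 := sub_eq_zero

lemma symSqProdDiff_comp_symSqMap {i : A →ₗ[R] B} {p : B →ₗ[R] C} (hpi : p ∘ₗ i = 0) :
    symSqProdDiff p ∘ₗ symSqMap i = 0 := by
  have hpi (a : A) : p (i a) = 0 := LinearMap.congr_fun hpi a
  refine symSq_hom_ext fun a a' ↦ Prod.ext ?_ ?_
  · exact (symSqDiff_symSqMk p _ _).trans (by
      rw [hpi, hpi, tmul_zero, tmul_zero, add_zero]; rfl)
  · exact (symSqMap_symSqMk p _ _).trans (by rw [hpi, zero_tmul, map_zero]; rfl)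

lemma tensorProdDiff_comp_symSqProdDiff (p : B →ₗ[R] C) :
    tensorProdDiff p ∘ₗ symSqProdDiff p = 0 :=
  LinearMap.ext fun w ↦ tensorProdDiff_eq_zero_iff.2 (rTensor_symSqDiff p w)

namespace ScaledSplitting

variable {i : A →ₗ[R] B} {p : B →ₗ[R] C} {y : R} (σ : ScaledSplitting y i p)

lemma sq_smul_symSq (w : Sym2M R B) :
    y ^ 2 • w = symSqMap i (symSqMap σ.retr w) + symSqMul (i ∘ₗ σ.retr) σ.sec (symSqDiff p w) +
      symSqMap σ.sec (symSqMap p w) := by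
  suffices y ^ 2 • LinearMap.id = symSqMap i ∘ₗ symSqMap σ.retr +
      symSqMul (i ∘ₗ σ.retr) σ.sec ∘ₗ symSqDiff p + symSqMap σ.sec ∘ₗ symSqMap p from
    LinearMap.congr_fun this w
  refine symSq_hom_ext fun b b' ↦ ?_
  have expand : y ^ 2 • symSqMk R B (b ⊗ₜ b') = symSqMk R B
      ((i (σ.retr b) + σ.sec (p b)) ⊗ₜ (i (σ.retr b') + σ.sec (p b'))) := by
    rw [← σ.smul_eq, ← σ.smul_eq, smul_tmul_smul, map_smul, pow_two]
  simp only [LinearMap.smul_apply, LinearMap.id_apply, LinearMap.add_apply, LinearMap.comp_apply,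
    symSqMap_symSqMk, symSqDiff_symSqMk, map_add, symSqMul_tmul, expand, tmul_add, add_tmul]
  rw [symSqMk_tmul_comm (σ.sec (p b))]
  abel

lemma symSqDiff_symSqMul_add (z : B ⊗[R] C) :
    symSqDiff p (symSqMul (i ∘ₗ σ.retr) σ.sec z) + y • σ.sec.rTensor C (p.rTensor C z) =
      y ^ 2 • z := by
  suffices symSqDiff p ∘ₗ symSqMul (i ∘ₗ σ.retr) σ.sec + y • σ.sec.rTensor C ∘ₗ p.rTensor C =
    y ^ 2 • LinearMap.id from LinearMap.congr_fun this z
  refine TensorProduct.ext' fun b c ↦ ?_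
  simp only [LinearMap.add_apply, LinearMap.comp_apply, symSqMul_tmul, symSqDiff_symSqMk,
    σ.proj_incl, σ.proj_sec, tmul_zero, add_zero, LinearMap.smul_apply, rTensor_tmul, tmul_smul,
    LinearMap.id_apply]
  rw [← smul_add, ← add_tmul, ← σ.smul_eq, ← smul_tmul', smul_smul, pow_two]

lemma symSqDiff_symSqMap_sec (w : Sym2M R C) :
    symSqDiff p (symSqMap σ.sec w) = y • σ.sec.rTensor C (symmetrize R C w) := by
  suffices symSqDiff p ∘ₗ symSqMap σ.sec = y • σ.sec.rTensor C ∘ₗ symmetrize R C from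
    LinearMap.congr_fun this w
  refine symSq_hom_ext fun c c' ↦ ?_
  simp only [LinearMap.comp_apply, symSqMap_symSqMk, symSqDiff_symSqMk, σ.proj_sec, tmul_smul,
    LinearMap.smul_apply, symmetrize_symSqMk, map_add, rTensor_tmul, smul_add]

lemma symSqMap_proj_symSqMul (z : B ⊗[R] C) :
    symSqMap p (symSqMul (i ∘ₗ σ.retr) σ.sec z) = 0 := by
  suffices symSqMap p ∘ₗ symSqMul (i ∘ₗ σ.retr) σ.sec = 0 from LinearMap.congr_fun this z
  refine TensorProduct.ext' fun b c ↦ ?_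
  rw [LinearMap.comp_apply, symSqMul_tmul, symSqMap_symSqMk, LinearMap.comp_apply, σ.proj_incl,
    zero_tmul, map_zero, LinearMap.zero_apply]

lemma symSqProdDiff_symSqMul_add {z : (B ⊗[R] C) × Sym2M R C} (hz : tensorProdDiff p z = 0) :
    symSqProdDiff p (symSqMul (i ∘ₗ σ.retr) σ.sec z.1 + symSqMap σ.sec z.2) = y ^ 2 • z := by
  refine Prod.ext ?_ ?_
  · change symSqDiff p _ = y ^ 2 • z.1
    rw [map_add, symSqDiff_symSqMap_sec, ← tensorProdDiff_eq_zero_iff.1 hz, symSqDiff_symSqMul_add]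
  · change symSqMap p _ = y ^ 2 • z.2
    rw [map_add, symSqMap_proj_symSqMul, zero_add, symSqMap_symSqMap_of_smul σ.proj_sec]

lemma tensorProdDiff_rTensor_sec (z : C ⊗[R] C) :
    tensorProdDiff p (σ.sec.rTensor C z, 0) = y • z := by
  have hps : p ∘ₗ σ.sec = y • LinearMap.id := LinearMap.ext σ.proj_sec
  rw [tensorProdDiff_apply, map_zero, sub_zero, ← rTensor_comp_apply, hps, rTensor_smul,
    rTensor_id, LinearMap.smul_apply, LinearMap.id_apply]

end ScaledSplitting

namespace SplitOff

variable {I : Ideal R} {i : A →ₗ[R] B} {p : B →ₗ[R] C} (h : SplitOff I i p)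
include h

lemma exactOff_symSqMap_incl : ExactOff I (0 : A →ₗ[R] Sym2M R A) (symSqMap i) :=
  h.exactOff (comp_zero _) fun _ σ w hw ↦ ⟨0, by
    rw [← symSqMap_symSqMap_of_smul σ.retr_incl, hw, map_zero, map_zero]⟩

lemma exactOff_symSqProdDiff : ExactOff I (symSqMap i) (symSqProdDiff p) :=
  h.exactOff (symSqProdDiff_comp_symSqMap h.proj_comp_incl) fun _ σ w hw ↦
    ⟨symSqMap σ.retr w, by
      have diff_eq : symSqDiff p w = 0 := congrArg Prod.fst hw
      have map_eq : symSqMap p w = 0 := congrArg Prod.snd hw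
      rw [σ.sq_smul_symSq, diff_eq, map_eq, map_zero, map_zero, add_zero, add_zero]⟩

lemma exactOff_tensorProdDiff : ExactOff I (symSqProdDiff p) (tensorProdDiff p) :=
  h.exactOff (tensorProdDiff_comp_symSqProdDiff p) fun _ σ _ hz ↦
    ⟨_, σ.symSqProdDiff_symSqMul_add hz⟩

lemma exactOff_tensorProdDiff_zero :
    ExactOff I (tensorProdDiff p) (0 : C ⊗[R] C →ₗ[R] C ⊗[R] C) :=
  h.exactOff (zero_comp _) (m := 1) fun _ σ z _ ↦
    ⟨_, (σ.tensorProdDiff_rTensor_sec z).trans (by rw [pow_one])⟩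

lemma range_tensorProdDiff_eq_top [IsNoetherianRing R] [Module.Free R B] [Module.Finite R B]
    [Module.Free R C] [Module.Finite R C] (hR : ∀ j < 3, LocalCohomologyVanishes I j R)
    (hA : LocalCohomologyVanishes I 3 (Sym2M R A)) : range (tensorProdDiff p) = ⊤ := by
  have symSqA := h.exactOff_symSqMap_incl.localCohomologyVanishes_range_of_zero hA
  have symSqB := h.exactOff_symSqProdDiff.localCohomologyVanishes_range symSqA
    (hR 2 (by omega)).symSq_of_free
  have hR₁ := hR 1 (by omega)
  have tensor := h.exactOff_tensorProdDiff.localCohomologyVanishes_range symSqB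
    ((hR₁.of_free _).prod hR₁.symSq_of_free)
  exact h.exactOff_tensorProdDiff_zero.range_eq_top tensor ((hR 0 (by omega)).of_free _)

end SplitOff

end SymmetricComplex

section ExteriorComplex

open LinearMap

variable {R A B C : Type*} [CommRing R] [AddCommGroup A] [Module R A] [AddCommGroup B]
  [Module R B] [AddCommGroup C] [Module R C]

lemma extSqMap_extSqMap_of_smul {f : A →ₗ[R] B} {g : B →ₗ[R] A} {y : R}
    (h : ∀ a, g (f a) = y • a) (w : ⋀[R]^2 A) :
    exteriorPower.map 2 g (exteriorPower.map 2 f w) = y ^ 2 • w := by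
  suffices exteriorPower.map 2 g ∘ₗ exteriorPower.map 2 f = y ^ 2 • LinearMap.id from
    LinearMap.congr_fun this w
  refine extSq_hom_ext fun a a' ↦ ?_
  simp only [LinearMap.comp_apply, map_extSqMk, h, LinearMap.smul_apply, LinearMap.id_apply,
    map_smul, pow_two, smul_smul]

lemma antisymmetrize_map (f : A →ₗ[R] B) (w : ⋀[R]^2 A) :
    antisymmetrize R B (exteriorPower.map 2 f w) =
      TensorProduct.map f f (antisymmetrize R A w) := by
  suffices antisymmetrize R B ∘ₗ exteriorPower.map 2 f =
    TensorProduct.map f f ∘ₗ antisymmetrize R A from LinearMap.congr_fun this w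
  refine extSq_hom_ext fun a a' ↦ ?_
  simp only [LinearMap.comp_apply, map_extSqMk, antisymmetrize_extSqMk, map_sub, map_tmul]

lemma rTensor_extSqDiff (p : B →ₗ[R] C) (w : ⋀[R]^2 B) :
    p.rTensor C (extSqDiff p w) = antisymmetrize R C (exteriorPower.map 2 p w) := by
  rw [antisymmetrize_map, extSqDiff, LinearMap.comp_apply, ← LinearMap.comp_apply (p.rTensor C),
    rTensor_comp_lTensor]

lemma extSqDiff_comp_map {i : A →ₗ[R] B} {p : B →ₗ[R] C} (hpi : p ∘ₗ i = 0) :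
    extSqDiff p ∘ₗ exteriorPower.map 2 i = 0 := by
  have hpi (a : A) : p (i a) = 0 := LinearMap.congr_fun hpi a
  refine extSq_hom_ext fun a a' ↦ ?_
  rw [LinearMap.comp_apply, map_extSqMk, extSqDiff_extSqMk, hpi, hpi, tmul_zero, tmul_zero,
    sub_zero, LinearMap.zero_apply]

namespace ScaledSplitting

variable {i : A →ₗ[R] B} {p : B →ₗ[R] C} {y : R} (σ : ScaledSplitting y i p)

lemma sq_smul_extSq (w : ⋀[R]^2 B) :
    y ^ 2 • w = exteriorPower.map 2 i (exteriorPower.map 2 σ.retr w) +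
      extSqMul (i ∘ₗ σ.retr) σ.sec (extSqDiff p w) +
        exteriorPower.map 2 σ.sec (exteriorPower.map 2 p w) := by
  suffices y ^ 2 • LinearMap.id = exteriorPower.map 2 i ∘ₗ exteriorPower.map 2 σ.retr +
      extSqMul (i ∘ₗ σ.retr) σ.sec ∘ₗ extSqDiff p +
        exteriorPower.map 2 σ.sec ∘ₗ exteriorPower.map 2 p from LinearMap.congr_fun this w
  refine extSq_hom_ext fun b b' ↦ ?_
  have expand : y ^ 2 • extSqMk R B b b' = extSqMk R B
      (i (σ.retr b) + σ.sec (p b)) (i (σ.retr b') + σ.sec (p b')) := by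
    rw [← σ.smul_eq, ← σ.smul_eq, map_smul₂, map_smul, smul_smul, pow_two]
  simp only [LinearMap.smul_apply, LinearMap.id_apply, LinearMap.add_apply, LinearMap.comp_apply,
    map_extSqMk, extSqDiff_extSqMk, map_add, map_sub, extSqMul_tmul, expand]
  rw [← extSqMk_isAlt.neg (σ.sec (p b))]
  abel

lemma extSqDiff_extSqMul_add (z : B ⊗[R] C) :
    extSqDiff p (extSqMul (i ∘ₗ σ.retr) σ.sec z) + y • σ.sec.rTensor C (p.rTensor C z) =
      y ^ 2 • z := by
  suffices extSqDiff p ∘ₗ extSqMul (i ∘ₗ σ.retr) σ.sec + y • σ.sec.rTensor C ∘ₗ p.rTensor C =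
    y ^ 2 • LinearMap.id from LinearMap.congr_fun this z
  refine TensorProduct.ext' fun b c ↦ ?_
  simp only [LinearMap.add_apply, LinearMap.comp_apply, extSqMul_tmul, extSqDiff_extSqMk,
    σ.proj_incl, σ.proj_sec, tmul_zero, sub_zero, LinearMap.smul_apply, rTensor_tmul, tmul_smul,
    LinearMap.id_apply]
  rw [← smul_add, ← add_tmul, ← σ.smul_eq, ← smul_tmul', smul_smul, pow_two]

lemma extSqDiff_map_sec (w : ⋀[R]^2 C) :
    extSqDiff p (exteriorPower.map 2 σ.sec w) = y • σ.sec.rTensor C (antisymmetrize R C w) := by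
  have hps : p ∘ₗ σ.sec = y • LinearMap.id := LinearMap.ext σ.proj_sec
  rw [extSqDiff, LinearMap.comp_apply, antisymmetrize_map, ← LinearMap.comp_apply, lTensor_comp_map,
    hps, map_smul_right]
  rfl

lemma map_sec_map_proj_eq_zero [Module.Free R B] {w : ⋀[R]^2 B} (hw : extSqDiff p w = 0) :
    exteriorPower.map 2 σ.sec (exteriorPower.map 2 p w) = 0 :=
  antisymmetrize_injective <| by
    rw [antisymmetrize_map, ← rTensor_extSqDiff, hw, map_zero, map_zero, map_zero]

end ScaledSplitting

namespace SplitOff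

variable {I : Ideal R} {i : A →ₗ[R] B} {p : B →ₗ[R] C} (h : SplitOff I i p)
include h

lemma exactOff_extSqMap_incl : ExactOff I (0 : A →ₗ[R] ⋀[R]^2 A) (exteriorPower.map 2 i) :=
  h.exactOff (comp_zero _) fun _ σ w hw ↦ ⟨0, by
    rw [← extSqMap_extSqMap_of_smul σ.retr_incl, hw, map_zero, map_zero]⟩

lemma exactOff_extSqDiff [Module.Free R B] :
    ExactOff I (exteriorPower.map 2 i) (extSqDiff p) :=
  h.exactOff (extSqDiff_comp_map h.proj_comp_incl) fun _ σ w hw ↦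
    ⟨exteriorPower.map 2 σ.retr w, by
      rw [σ.sq_smul_extSq, hw, σ.map_sec_map_proj_eq_zero hw, map_zero, add_zero, add_zero]⟩

end SplitOff

end ExteriorComplex

section ExteriorToSymmetric

open LinearMap

variable {R A B C : Type} [CommRing R] [AddCommGroup A] [Module R A] [AddCommGroup B]
  [Module R B] [AddCommGroup C] [Module R C]

lemma symSqMul_comp_extSqDiff (p : B →ₗ[R] C) : symSqMul p LinearMap.id ∘ₗ extSqDiff p = 0 := by
  refine extSq_hom_ext fun b b' ↦ ?_
  rw [LinearMap.comp_apply, extSqDiff_extSqMk, map_sub, symSqMul_tmul, symSqMul_tmul,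
    symSqMk_tmul_comm, LinearMap.id_apply, LinearMap.id_apply, sub_self, LinearMap.zero_apply]

lemma range_symSqMul_id {p : B →ₗ[R] C} (hp : Function.Surjective p) :
    range (symSqMul p LinearMap.id) = ⊤ :=
  range_eq_top.2 (symSqMk_surjective.comp (map_surjective hp Function.surjective_id))

lemma ScaledSplitting.sq_smul_mem_range_extSqDiff {i : A →ₗ[R] B} {p : B →ₗ[R] C}
    {y : R} (σ : ScaledSplitting y i p) {z : B ⊗[R] C} (hz : symSqMul p LinearMap.id z = 0) :
    y ^ 2 • z ∈ range (extSqDiff p) := by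
  obtain ⟨w, hw⟩ : p.rTensor C z ∈ range (antisymmetrize R C) := by
    rw [range_antisymmetrize]
    exact hz
  refine ⟨extSqMul (i ∘ₗ σ.retr) σ.sec z + exteriorPower.map 2 σ.sec w, ?_⟩
  rw [map_add, extSqDiff_map_sec, hw, extSqDiff_extSqMul_add]

namespace SplitOff

variable {I : Ideal R} {i : A →ₗ[R] B} {p : B →ₗ[R] C} (h : SplitOff I i p)
include h

lemma exactOff_symSqMul : ExactOff I (extSqDiff p) (symSqMul p LinearMap.id) :=
  h.exactOff (symSqMul_comp_extSqDiff p) fun _ σ _ hz ↦ σ.sq_smul_mem_range_extSqDiff hz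

lemma localCohomologyVanishes_symSq [IsNoetherianRing R] [Module.Free R B] [Module.Finite R B]
    {j : ℕ} (hp : Function.Surjective p) (hR : LocalCohomologyVanishes I (j + 1) R)
    (hC : LocalCohomologyVanishes I j C) (hA : LocalCohomologyVanishes I (j + 2) (⋀[R]^2 A)) :
    LocalCohomologyVanishes I j (Sym2M R C) := by
  have extSqA := h.exactOff_extSqMap_incl.localCohomologyVanishes_range_of_zero hA
  have extSqB := h.exactOff_extSqDiff.localCohomologyVanishes_range extSqA hR.extSq_of_free
  have symSqC := h.exactOff_symSqMul.localCohomologyVanishes_range extSqB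
    (hC.tensorProduct_of_free B)
  rw [range_symSqMul_id hp] at symSqC
  exact symSqC.of_equiv Submodule.topEquiv.symm

end SplitOff

end ExteriorToSymmetric

section Nonvanishing

open LinearMap

lemma ne_top_of_le_radical_annihilator {R N : Type*} [CommRing R] [AddCommGroup N] [Module R N]
    [Nontrivial N] {I : Ideal R} (hI : I ≤ (Module.annihilator R N).radical) : I ≠ ⊤ := by
  rintro rfl
  exact not_subsingleton N
    (Module.annihilator_eq_top_iff.1 (Ideal.radical_eq_top.1 (top_le_iff.1 hI)))

lemma two_le_finrank_of_not_cyclic {R L N : Type*} [CommRing R] [Nontrivial R]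
    [AddCommGroup L] [Module R L] [Module.Free R L] [Module.Finite R L] [AddCommGroup N]
    [Module R N] {aug : L →ₗ[R] N} (haug : Function.Surjective aug)
    (hN : ¬ ∃ x : N, Submodule.span R {x} = ⊤) : 2 ≤ Module.finrank R L := by
  by_contra! hlt
  let b := Module.finBasis R L
  have : Subsingleton (Fin (Module.finrank R L)) :=
    Fin.subsingleton_iff_le_one.2 (Nat.le_of_lt_succ hlt)
  have span_eq : Submodule.span R (Set.range (aug ∘ b)) = ⊤ := by
    rw [Set.range_comp, ← Submodule.map_span, b.span_eq, Submodule.map_top, range_eq_top.2 haug]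
  obtain h | ⟨x, h⟩ := (Set.subsingleton_range (aug ∘ b)).eq_empty_or_singleton
  · refine hN ⟨0, ?_⟩
    rw [← span_eq, h, Submodule.span_empty, Submodule.span_zero_singleton]
  · exact hN ⟨x, h ▸ span_eq⟩

/-- The `2 × 2` minor `u ⊗ v ↦ f u * g v - g u * f v` of a pair of functionals. -/
def minor {R M : Type*} [CommRing R] [AddCommGroup M] [Module R M] (f g : M →ₗ[R] R) :
    M ⊗[R] M →ₗ[R] R :=
  TensorProduct.lift (f.smulRight g - g.smulRight f)

lemma minor_tmul {R M : Type*} [CommRing R] [AddCommGroup M] [Module R M]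
    (f g : M →ₗ[R] R) (u v : M) : minor f g (u ⊗ₜ v) = f u * g v - g u * f v := rfl

variable {R B C : Type} [CommRing R] [AddCommGroup B] [Module R B] [AddCommGroup C] [Module R C]

lemma minor_symmetrize (f g : C →ₗ[R] R) (w : Sym2M R C) : minor f g (symmetrize R C w) = 0 := by
  suffices minor f g ∘ₗ symmetrize R C = 0 from LinearMap.congr_fun this w
  refine symSq_hom_ext fun u v ↦ ?_
  rw [LinearMap.comp_apply, symmetrize_symSqMk, map_add, minor_tmul, minor_tmul,
    LinearMap.zero_apply]
  ring

lemma minor_rTensor_mem {I : Ideal R} {p : B →ₗ[R] C}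
    (hp : range p ≤ I • (⊤ : Submodule R C)) (f g : C →ₗ[R] R) (z : B ⊗[R] C) :
    minor f g (p.rTensor C z) ∈ I := by
  have mem (f : C →ₗ[R] R) (b : B) : f (p b) ∈ I := by
    have := Submodule.smul_top_le_comap_smul_top I f (hp ⟨b, rfl⟩)
    rwa [smul_eq_mul, Ideal.mul_top] at this
  induction z with
  | zero => rw [map_zero, map_zero]; exact I.zero_mem
  | tmul b c =>
    rw [rTensor_tmul, minor_tmul]
    exact I.sub_mem (I.mul_mem_right _ (mem f b)) (I.mul_mem_right _ (mem g b))
  | add z z' hz hz' => rw [map_add, map_add]; exact I.add_mem hz hz'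

lemma range_tensorProdDiff_ne_top [Module.Free R C] [Module.Finite R C] {I : Ideal R}
    (hI : I ≠ ⊤) {p : B →ₗ[R] C} (hp : range p ≤ I • (⊤ : Submodule R C))
    (hC : 2 ≤ Module.finrank R C) : range (tensorProdDiff p) ≠ ⊤ := by
  intro htop
  have one_notMem := (Ideal.ne_top_iff_one I).1 hI
  have : Nontrivial R := ⟨1, 0, fun h ↦ one_notMem (h ▸ I.zero_mem)⟩
  let b := Module.finBasis R C
  let i₀ : Fin (Module.finrank R C) := ⟨0, by omega⟩
  let i₁ : Fin (Module.finrank R C) := ⟨1, by omega⟩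
  have hne : i₀ ≠ i₁ := by simp [i₀, i₁]
  obtain ⟨z, hz⟩ := range_eq_top.1 htop (b i₀ ⊗ₜ b i₁)
  have minor_eq_one : minor (b.coord i₀) (b.coord i₁) (tensorProdDiff p z) = 1 := by
    rw [hz, minor_tmul]
    simp [hne, hne.symm]
  rw [tensorProdDiff_apply, map_sub, minor_symmetrize, sub_zero] at minor_eq_one
  exact one_notMem (minor_eq_one ▸ minor_rTensor_mem hp _ _ _)

lemma SplitOff.not_localCohomologyVanishes_symSq {A : Type} [AddCommGroup A] [Module R A]
    [IsNoetherianRing R] [Module.Free R B] [Module.Finite R B] [Module.Free R C]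
    [Module.Finite R C] {I : Ideal R} (hI : I ≠ ⊤) {i : A →ₗ[R] B} {p : B →ₗ[R] C}
    (h : SplitOff I i p) (hp : range p ≤ I • (⊤ : Submodule R C)) (hC : 2 ≤ Module.finrank R C)
    (hR : ∀ j < 3, LocalCohomologyVanishes I j R) : ¬ LocalCohomologyVanishes I 3 (Sym2M R A) :=
  fun hA ↦ range_tensorProdDiff_ne_top hI hp hC (h.range_tensorProdDiff_eq_top hR hA)

theorem noncyclic_syzygy_nonvanishing_general {R N L₀ L₁ L₂ : Type} [CommRing R]
    [IsNoetherianRing R] [AddCommGroup N] [Module R N]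
    [AddCommGroup L₀] [Module R L₀] [Module.Free R L₀] [Module.Finite R L₀]
    [AddCommGroup L₁] [Module R L₁] [Module.Free R L₁] [Module.Finite R L₁]
    [AddCommGroup L₂] [Module R L₂] [Module.Free R L₂] [Module.Finite R L₂]
    {I : Ideal R} {rs : List R} (hrs : RingTheory.Sequence.IsWeaklyRegular R rs)
    (hrsI : ∀ r ∈ rs, r ∈ I) (length_rs : 5 ≤ rs.length)
    (hN : I ≤ (Module.annihilator R N).radical) (hncyc : ¬ ∃ x : N, Submodule.span R {x} = ⊤)
    {d₁ : L₂ →ₗ[R] L₁} {d₀ : L₁ →ₗ[R] L₀} {aug : L₀ →ₗ[R] N} (hd₁ : range d₁ = ker d₀)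
    (hd₀ : range d₀ = ker aug) (haug : Function.Surjective aug)
    (minimal : range d₀ ≤ I • (⊤ : Submodule R L₀)) :
    ¬ Subsingleton ((localCohomology I 3).obj (ModuleCat.of R (Sym2M R (ker d₀)))) ∧
      ¬ Subsingleton ((localCohomology I 5).obj (ModuleCat.of R (⋀[R]^2 (ker d₁)))) := by
  have : Nontrivial N := not_subsingleton_iff_nontrivial.1 fun _ ↦
    hncyc ⟨0, Subsingleton.elim _ _⟩
  have : Nontrivial R := Module.nontrivial R N
  have hI : I ≠ ⊤ := ne_top_of_le_radical_annihilator hN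
  have hR (j : ℕ) (hj : j < 5) : LocalCohomologyVanishes I j R :=
    .of_isWeaklyRegular (by rwa [smul_eq_mul, Ideal.mul_top, lt_top_iff_ne_top]) hrsI hrs
      (hj.trans_le length_rs)
  have split₀ : SplitOff I (ker d₀).subtype d₀ :=
    .of_exact (Submodule.injective_subtype _) (exact_subtype_ker_map d₀)
      (exact_iff.2 hd₀.symm) hN
  have symSq : ¬ LocalCohomologyVanishes I 3 (Sym2M R (ker d₀)) :=
    split₀.not_localCohomologyVanishes_symSq hI minimal (two_le_finrank_of_not_cyclic haug hncyc)
      fun j hj ↦ hR j (by omega)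
  refine ⟨fun h ↦ symSq (localCohomologyVanishes_of_subsingleton I 2 _ h), fun h ↦ symSq ?_⟩
  let q : L₂ →ₗ[R] ker d₀ := d₁.codRestrict (ker d₀) fun z ↦ hd₁.le ⟨z, rfl⟩
  have exact_q : Function.Exact (ker d₁).subtype q := by
    rw [exact_iff, ker_codRestrict, Submodule.range_subtype]
  have q_surjective : Function.Surjective q := by
    rw [← range_eq_top, range_codRestrict, hd₁, Submodule.comap_subtype_self]
  have split₁ := split₀.of_surjective (Submodule.injective_subtype _) exact_q q_surjective
  exact split₁.localCohomologyVanishes_symSq q_surjective (hR 4 (by omega))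
    (.ker_of_resolution hd₀ hN ((hR 2 (by omega)).of_free _) ((hR 3 (by omega)).of_free _))
    (localCohomologyVanishes_of_subsingleton I 4 _ h)

end Nonvanishing

lemma irrel_le_radical_annihilator {K : Type} [Field K] {n : ℕ} {N : Type} [AddCommGroup N]
    [Module (PolyS K n) N] (hN : IsGradedFiniteLength K n N) :
    irrel K n ≤ (Module.annihilator (PolyS K n) N).radical := by
  obtain ⟨-, c, hc⟩ := hN
  exact fun y hy ↦ ⟨c, hc (Ideal.pow_mem_pow hy c)⟩

/-- For a nonzero finite length graded `S`-module `N` which is NOT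
cyclic, with syzygy bundles `P₁(N)`, `P₂(N)` on `ℙⁿ` (`n ≥ 5`), one has
`H²_*(S²P₁(N)) ≠ 0` and `H⁴_*(Λ²P₂(N)) ≠ 0`. -/
theorem noncyclic_syzygy_nonvanishing
    (K : Type) [Field K] (n : ℕ) (hn : 5 ≤ n)
    (N : Type) [AddCommGroup N] [Module (PolyS K n) N]
    (hN : Nontrivial N)
    (hNfl : IsGradedFiniteLength K n N)
    (hncyc : ¬ ∃ x : N, Submodule.span (PolyS K n) {x} = ⊤)
    (res : MinimalResolution K n N) :
    ¬ Subsingleton (Hstar K n 2 (Sym2M (PolyS K n) ↥(LinearMap.range (res.d 1)))) ∧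
    ¬ Subsingleton (Hstar K n 4 (⋀[PolyS K n]^2 ↥(LinearMap.range (res.d 2)))) := by
  have := res.free
  have := res.finite
  rw [res.exact 0, res.exact 1]
  exact noncyclic_syzygy_nonvanishing_general (isWeaklyRegular_ofFn_X_s10 K (n + 1))
    (List.forall_mem_ofFn_iff.2 fun j ↦ Ideal.subset_span (Set.mem_range_self j))
    (by rw [List.length_ofFn]; omega)
    (irrel_le_radical_annihilator hNfl) hncyc (res.exact 0) res.exact0 res.aug_surjective
    (res.minimal 0)
end
end
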